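/- Let q be an even prime power with q ≥ 2048 and let n ≥ 5. Then every k-cap in PG(n, q) satisfies k < q^{n−1} − 2q^{n−2} + 3q^{n−3}√q + 8q^{n−3} − 9q^{n−4}√q − 7q^{n−4} − 2(q^{n−5} + ⋯ + q + 1) + 1, where q^{n−5} + ⋯ + q + 1 denotes the geometric sum Σ_{i=0}^{n−5} q^i. -/

import Mathlib

open Module

/-- Points of the projective space `PG(n, q)` over the field `F` (with `q = |F|`). -/
abbrev PGPoint (F : Type*) [Field F] (n : ℕ) := Projectivization F (Fin (n + 1) → F)

/-- The set of projective points lying in the projective subspace determined by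
a linear subspace `W`. -/
def ptsIn {F : Type*} [Field F] {n : ℕ} (W : Submodule F (Fin (n + 1) → F)) :
    Set (PGPoint F n) := {P | P.submodule ≤ W}

/-- Three points of `PG(n, q)` are collinear if they lie on a common line. -/
def Coll3 {F : Type*} [Field F] {n : ℕ} (P₁ P₂ P₃ : PGPoint F n) : Prop :=
  Module.finrank F ↥(P₁.submodule ⊔ P₂.submodule ⊔ P₃.submodule) ≤ 2

/-- A cap (a plane arc when `n = 2`): a set of points no three of which are collinear. -/
def IsCap {F : Type*} [Field F] {n : ℕ} (K : Set (PGPoint F n)) : Prop :=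
  ∀ P₁ ∈ K, ∀ P₂ ∈ K, ∀ P₃ ∈ K, P₁ ≠ P₂ → P₁ ≠ P₃ → P₂ ≠ P₃ → ¬ Coll3 P₁ P₂ P₃

/-- A complete cap: a cap that is not contained in a cap with one more point. -/
def IsCompleteCap {F : Type*} [Field F] {n : ℕ} (K : Set (PGPoint F n)) : Prop :=
  IsCap K ∧ ∀ P ∉ K, ¬ IsCap (insert P K)

/-- A tangent line of `K`: a line (2-dimensional linear subspace) meeting `K`
in exactly one point. -/
def IsTangent {F : Type*} [Field F] {n : ℕ} (K : Set (PGPoint F n))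
    (W : Submodule F (Fin (n + 1) → F)) : Prop :=
  Module.finrank F W = 2 ∧ (ptsIn W ∩ K).ncard = 1

/-!
Let `K` be a cap that is complete in a projective 4-space, let `t` be the number of tangents at
each of its points, and let the defect `d` of a plane meeting `K` in `s` points be `q + 2 - s`,
the number of tangents in that plane at each of these points. For even `q` Segre's lemma of
tangents puts the tangents of a plane arc on an envelope of class `d`, so a point on more than `d`
tangents of a plane section extends it. Hence, by completeness, no point off `K` lies on more than
`t` tangents.

Counting these tangents and their pairs expresses the weighted sums of `d` and `d ^ 2` over the
planes, with weight `s * (s - 1)`, through `t`. For an integer `a` the sum of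
`s * (s - 1) * (d - a) * (d - a - 1)` is nonnegative: in units of `q ^ 2 + q + 1`, the choice
`a = 2` excludes that `t` lies between about `2` and `3`, and `a = 1` that it lies between about
`1` and `2`. If `t` is at most about `1` or close to `2`, most pairs of points of `K` lie in
planes close to a hyperoval, extended by some point `X`; at a typical `X` these planes cluster in
solids whose sections are close to ovoids. In the first case these solids force the moment for
`a = 0` to be too large. In the second the moment for `a = 1` bounds the average number of points
by which their sections fall short of an ovoid, so that they contain more planes of defect at most
`1` than the moment for `a = 2` allows.

So `t` is at least about `3 * (q ^ 2 + q + 1)`, which bounds caps of a 4-space. In higher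
dimension one starts from a secant and repeatedly passes to the richest subspace one dimension
larger; the 4-space reached contains at least the average share of the points of the cap.
-/

namespace CapBound

/-! ### Segre's envelope of tangents -/

section Segre

variable {F : Type*} [Field F] {W : Type*} [AddCommGroup W] [Module F W]

/-- The evaluations at the vectors of `W`, as functions on `Dual F W`. The powers
`linearForms F W ^ d` consist of the forms of degree `d` in line coordinates, that is, of the
left-hand sides of equations of envelopes of class `d`. -/
def linearForms (F : Type*) [Field F] (W : Type*) [AddCommGroup W] [Module F W] :
    Submodule F (Dual F W → F) :=
  LinearMap.range (LinearMap.ltoFun F (Dual F W) F F ∘ₗ Dual.eval F W)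

/-- Three points of a plane, given by vectors of `W`, do not lie on a common line `u`. -/
def Noncollinear (F : Type*) [Field F] {W : Type*} [AddCommGroup W] [Module F W]
    (p x y : W) : Prop :=
  ∀ u : Dual F W, u p = 0 → u x = 0 → u y = 0 → u = 0

/-- The functional `v` spans the line joining the points `p` and `x` of a plane. -/
structure IsJoin (v : Dual F W) (p x : W) : Prop where
  ne_zero : v ≠ 0
  left : v p = 0
  right : v x = 0
  exists_eq_smul : ∀ u : Dual F W, u p = 0 → u x = 0 → ∃ c : F, u = c • v

/-- An arc in the plane of `W`, given by a set of representing vectors. -/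
structure IsArc (F : Type*) [Field F] {W : Type*} [AddCommGroup W] [Module F W]
    (S : Finset W) : Prop where
  linearIndependent : ∀ p ∈ S, ∀ x ∈ S, p ≠ x → LinearIndependent F ![p, x]
  noncollinear : ∀ p ∈ S, ∀ x ∈ S, ∀ y ∈ S, p ≠ x → p ≠ y → x ≠ y → Noncollinear F p x y

lemma Noncollinear.swap_right {p x y : W} (h : Noncollinear F p x y) : Noncollinear F p y x :=
  fun u hp hy hx => h u hp hx hy

lemma exists_apply_eq_zero_and_ne_zero {p x : W} (h : LinearIndependent F ![p, x]) :
    ∃ z : Dual F W, z p = 0 ∧ z x ≠ 0 := by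
  have hp : p ≠ 0 := h.ne_zero 0
  have hx : x ∉ Submodule.span F {p} := fun hx => by
    obtain ⟨c, hc⟩ := Submodule.mem_span_singleton.1 hx
    exact (LinearIndependent.pair_iff' hp).1 h c hc
  obtain ⟨z, hzx, hz⟩ := Submodule.exists_le_ker_of_notMem hx
  exact ⟨z, hz (Submodule.mem_span_singleton_self p), hzx⟩

lemma exists_isJoin (hW : finrank F W = 3) {p x : W} (h : LinearIndependent F ![p, x]) :
    ∃ v : Dual F W, IsJoin v p x := by
  have : FiniteDimensional F W := FiniteDimensional.of_finrank_pos (by omega)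
  let A : Submodule F (Dual F W) := (Submodule.span F (Set.range ![p, x])).dualAnnihilator
  have hmem (u : Dual F W) : u ∈ A ↔ u p = 0 ∧ u x = 0 := by
    rw [Submodule.mem_dualAnnihilator]
    change Submodule.span F (Set.range ![p, x]) ≤ LinearMap.ker u ↔ _
    simp [Submodule.span_le, Set.insert_subset_iff, and_comm]
  have hone : finrank F A = 1 := by
    have hsum := Subspace.finrank_add_finrank_dualAnnihilator_eq
      (Submodule.span F (Set.range ![p, x]))
    rw [finrank_span_eq_card h, Fintype.card_fin] at hsum
    change finrank F (Submodule.span F (Set.range ![p, x])).dualAnnihilator = 1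
    omega
  have : Module.Free F A := Module.Free.of_divisionRing F A
  obtain ⟨v, hv, hspan⟩ := (finrank_eq_one_iff' (K := F) (V := A)).1 hone
  refine ⟨v, by simpa using hv, ((hmem v).1 v.2).1, ((hmem v).1 v.2).2, fun u hp hx => ?_⟩
  obtain ⟨c, hc⟩ := hspan ⟨u, (hmem u).2 ⟨hp, hx⟩⟩
  exact ⟨c, congrArg Subtype.val hc.symm⟩

lemma Noncollinear.right_ne (hW : finrank F W = 3) {p x y : W} (h : Noncollinear F p x y)
    (hpx : LinearIndependent F ![p, x]) : x ≠ y := by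
  rintro rfl
  obtain ⟨v, hv⟩ := exists_isJoin hW hpx
  exact hv.ne_zero (h v hv.left hv.right hv.right)

lemma apply_mem_linearForms (a : W) : (fun u : Dual F W => u a) ∈ linearForms F W :=
  ⟨a, rfl⟩

lemma mul_mem_linearForms_pow_succ (a : W) {d : ℕ} {g : Dual F W → F}
    (hg : g ∈ linearForms F W ^ d) : (fun u => u a * g u) ∈ linearForms F W ^ (d + 1) := by
  rw [pow_succ']
  exact Submodule.mul_mem_mul (apply_mem_linearForms a) hg

lemma mem_linearForms_pow_zero {f : Dual F W → F} :
    f ∈ linearForms F W ^ 0 ↔ ∃ c : F, f = fun _ => c := by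
  rw [pow_zero, Submodule.mem_one]
  exact exists_congr fun c => eq_comm

lemma const_mul_prod_mem_linearForms_pow (T : Finset W) (c : F) :
    (fun u : Dual F W => c * ∏ e ∈ T, u e) ∈ linearForms F W ^ T.card := by
  classical
  induction T using Finset.induction_on with
  | empty => exact mem_linearForms_pow_zero.2 ⟨c, by simp⟩
  | insert a s ha ih =>
    rw [Finset.card_insert_of_notMem ha]
    convert mul_mem_linearForms_pow_succ a ih using 2
    rw [Finset.prod_insert ha]
    ring

lemma IsJoin.exists_apply_eq {p₀ p α : W} {v : Dual F W} (hv : IsJoin v p₀ p)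
    (hp : LinearIndependent F ![p₀, p]) (hα : v α = 1) (a : W) :
    ∃ c : F, ∀ u : Dual F W, u p₀ = 0 → u a = v a * u α + c * u p := by
  obtain ⟨z, hz, hzp⟩ := exists_apply_eq_zero_and_ne_zero hp
  refine ⟨(z a - v a * z α) / z p, fun u hu => ?_⟩
  obtain ⟨l, hl⟩ := hv.exists_eq_smul (u - (u p / z p) • z) (by simp [hu, hz])
    (by simp [div_mul_cancel₀ _ hzp])
  have hua : u a - u p / z p * z a = l * v a := by simpa using LinearMap.congr_fun hl a
  have huα : u α - u p / z p * z α = l := by simpa [hα] using LinearMap.congr_fun hl α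
  linear_combination hua - v a * huα

/-- Restricted to a pencil, a form is a binary form in `u α` and `u p`. -/
lemma IsJoin.exists_restrict_pencil {p₀ p α : W} {v : Dual F W} (hv : IsJoin v p₀ p)
    (hp : LinearIndependent F ![p₀, p]) (hα : v α = 1) {d : ℕ} {f : Dual F W → F}
    (hf : f ∈ linearForms F W ^ (d + 1)) :
    ∃ h ∈ linearForms F W ^ d,
      ∀ u : Dual F W, u p₀ = 0 → f u = f v * u α ^ (d + 1) + u p * h u := by
  induction d generalizing f with
  | zero =>
    rw [zero_add, pow_one] at hf
    obtain ⟨a, rfl⟩ := hf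
    obtain ⟨c, hc⟩ := hv.exists_apply_eq hp hα a
    refine ⟨_, mem_linearForms_pow_zero.2 ⟨c, rfl⟩, fun u hu => ?_⟩
    simpa [mul_comm c] using hc u hu
  | succ d ih =>
    rw [pow_succ'] at hf
    induction hf using Submodule.mul_induction_on' with
    | mem_mul_mem m hm g hg =>
      obtain ⟨a, rfl⟩ := hm
      obtain ⟨c, hc⟩ := hv.exists_apply_eq hp hα a
      obtain ⟨h, hh, hgh⟩ := ih hg
      refine ⟨v a • (fun u => u α * h u) + c • g, Submodule.add_mem _
        (Submodule.smul_mem _ _ (mul_mem_linearForms_pow_succ α hh))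
        (Submodule.smul_mem _ _ hg), fun u hu => ?_⟩
      change u a * g u = v a * g v * u α ^ (d + 2) + u p * (v a * (u α * h u) + c * g u)
      linear_combination g u * hc u hu + v a * u α * hgh u hu
    | add f _ g _ hf hg =>
      obtain ⟨h, hh, hfh⟩ := hf
      obtain ⟨k, hk, hgk⟩ := hg
      refine ⟨h + k, Submodule.add_mem _ hh hk, fun u hu => ?_⟩
      simp only [Pi.add_apply, hfh u hu, hgk u hu]
      ring

lemma exists_eq_mul_on_pencil (hW : finrank F W = 3) {p₀ p : W}
    (hp : LinearIndependent F ![p₀, p]) {d : ℕ} {f : Dual F W → F}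
    (hf : f ∈ linearForms F W ^ (d + 1))
    (hzero : ∀ u : Dual F W, u ≠ 0 → u p₀ = 0 → u p = 0 → f u = 0) :
    ∃ h ∈ linearForms F W ^ d, ∀ u : Dual F W, u p₀ = 0 → f u = u p * h u := by
  obtain ⟨v, hv⟩ := exists_isJoin hW hp
  obtain ⟨β, hβ⟩ : ∃ β, v β ≠ 0 := by
    by_contra! h
    exact hv.ne_zero (LinearMap.ext h)
  obtain ⟨h, hh, hfh⟩ := hv.exists_restrict_pencil hp (α := (v β)⁻¹ • β) (by simp [hβ]) hf
  refine ⟨h, hh, fun u hu => ?_⟩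
  rw [hfh u hu, hzero v hv.ne_zero hv.left hv.right, zero_mul, zero_add]

/-- The quotient in `exists_eq_mul_on_pencil` still vanishes on the other lines. -/
lemma Noncollinear.eq_zero_of_mul_eq_zero {p₀ p x : W} (hpx : Noncollinear F p₀ p x)
    {f h : Dual F W → F} (hfh : ∀ u : Dual F W, u p₀ = 0 → f u = u p * h u)
    (hzero : ∀ u : Dual F W, u ≠ 0 → u p₀ = 0 → u x = 0 → f u = 0) :
    ∀ u : Dual F W, u ≠ 0 → u p₀ = 0 → u x = 0 → h u = 0 := by
  intro u hu hu₀ hux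
  have hmul := hfh u hu₀ ▸ hzero u hu hu₀ hux
  exact (mul_eq_zero.1 hmul).resolve_left fun hup => hu (hpx u hu₀ hup hux)

lemma eq_zero_on_pencil_of_card_lt (hW : finrank F W = 3) {p₀ : W} {d : ℕ} {f : Dual F W → F}
    (hf : f ∈ linearForms F W ^ d) {T : Finset W} (hT : d < T.card)
    (hind : ∀ p ∈ T, LinearIndependent F ![p₀, p])
    (hnc : ∀ p ∈ T, ∀ x ∈ T, p ≠ x → Noncollinear F p₀ p x)
    (hzero : ∀ p ∈ T, ∀ u : Dual F W, u ≠ 0 → u p₀ = 0 → u p = 0 → f u = 0) :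
    ∀ u : Dual F W, u p₀ = 0 → f u = 0 := by
  classical
  obtain ⟨p, hp⟩ := Finset.card_pos.1 (Nat.zero_lt_of_lt hT)
  induction d generalizing f T p with
  | zero =>
    obtain ⟨v, hv⟩ := exists_isJoin hW (hind p hp)
    obtain ⟨c, rfl⟩ := mem_linearForms_pow_zero.1 hf
    exact fun _ _ => hzero p hp v hv.ne_zero hv.left hv.right
  | succ d ih =>
    obtain ⟨h, hh, hfh⟩ := exists_eq_mul_on_pencil hW (hind p hp) hf (hzero p hp)
    have hcard : d < (T.erase p).card := by
      rw [Finset.card_erase_of_mem hp]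
      omega
    obtain ⟨x, hx⟩ := Finset.card_pos.1 (Nat.zero_lt_of_lt hcard)
    have hh₀ := ih hh hcard (fun y hy => hind y (Finset.mem_of_mem_erase hy))
      (fun y hy z hz => hnc y (Finset.mem_of_mem_erase hy) z (Finset.mem_of_mem_erase hz))
      (fun y hy => (hnc p hp y (Finset.mem_of_mem_erase hy)
        (Finset.ne_of_mem_erase hy).symm).eq_zero_of_mul_eq_zero hfh
          (hzero y (Finset.mem_of_mem_erase hy))) x hx
    exact fun u hu => by rw [hfh u hu, hh₀ u hu, mul_zero]

/-- A form vanishing on some lines of a pencil agrees on that pencil with a product of the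
corresponding linear forms and a cofactor, and such a product vanishes on whole pencils. -/
lemma exists_eq_on_pencil_and_eq_zero (hW : finrank F W = 3) {p₀ : W} {d : ℕ}
    {f : Dual F W → F} (hf : f ∈ linearForms F W ^ d) {T : Finset W}
    (hind : ∀ p ∈ T, LinearIndependent F ![p₀, p])
    (hnc : ∀ p ∈ T, ∀ x ∈ T, p ≠ x → Noncollinear F p₀ p x)
    (hzero : ∀ p ∈ T, ∀ u : Dual F W, u ≠ 0 → u p₀ = 0 → u p = 0 → f u = 0) :
    ∃ G ∈ linearForms F W ^ d, (∀ u : Dual F W, u p₀ = 0 → f u = G u) ∧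
      ∀ p ∈ T, ∀ u : Dual F W, u p = 0 → G u = 0 := by
  classical
  induction T using Finset.induction_on generalizing d f with
  | empty => exact ⟨f, hf, fun _ _ => rfl, by simp⟩
  | insert p T hpT ih =>
    have hp : p ∈ insert p T := Finset.mem_insert_self _ _
    have hT : ∀ x ∈ T, x ∈ insert p T := fun x hx => Finset.mem_insert_of_mem hx
    rcases d with _ | d
    · exact ⟨0, Submodule.zero_mem _, eq_zero_on_pencil_of_card_lt hW hf
        (Finset.card_pos.2 ⟨p, hp⟩) hind hnc hzero, fun _ _ _ _ => rfl⟩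
    obtain ⟨h, hh, hfh⟩ := exists_eq_mul_on_pencil hW (hind p hp) hf (hzero p hp)
    obtain ⟨G, hG, hhG, hGzero⟩ := ih hh (fun x hx => hind x (hT x hx))
      (fun x hx y hy => hnc x (hT x hx) y (hT y hy))
      (fun x hx => (hnc p hp x (hT x hx) (by rintro rfl; exact hpT hx)).eq_zero_of_mul_eq_zero
        hfh (hzero x (hT x hx)))
    refine ⟨_, mul_mem_linearForms_pow_succ p hG, fun u hu => by rw [hfh u hu, hhG u hu], ?_⟩
    intro x hx u hu
    rcases Finset.mem_insert.1 hx with rfl | hx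
    · rw [hu, zero_mul]
    · rw [hGzero x hx u hu, mul_zero]

lemma IsArc.exists_form_of_compatible (hW : finrank F W = 3) {S : Finset W} (hS : IsArc F S)
    {d : ℕ} {g : W → Dual F W → F} (hg : ∀ p ∈ S, g p ∈ linearForms F W ^ d)
    (hcomp : ∀ p ∈ S, ∀ x ∈ S, ∀ u : Dual F W, u p = 0 → u x = 0 → g p u = g x u) :
    ∃ f ∈ linearForms F W ^ d, ∀ p ∈ S, ∀ u : Dual F W, u p = 0 → f u = g p u := by
  classical
  induction S using Finset.induction_on with
  | empty => exact ⟨0, Submodule.zero_mem _, by simp⟩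
  | insert p S hpS ih =>
    have hp : p ∈ insert p S := Finset.mem_insert_self _ _
    have hmem : ∀ x ∈ S, x ∈ insert p S := fun x hx => Finset.mem_insert_of_mem hx
    have hne : ∀ x ∈ S, p ≠ x := by
      rintro x hx rfl
      exact hpS hx
    obtain ⟨f, hf, hfg⟩ := ih
      ⟨fun x hx y hy => hS.1 x (hmem x hx) y (hmem y hy),
        fun x hx y hy z hz => hS.2 x (hmem x hx) y (hmem y hy) z (hmem z hz)⟩
      (fun x hx => hg x (hmem x hx)) (fun x hx y hy => hcomp x (hmem x hx) y (hmem y hy))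
    obtain ⟨G, hG, hGp, hGzero⟩ := exists_eq_on_pencil_and_eq_zero hW
      (Submodule.sub_mem _ (hg p hp) hf) (fun x hx => hS.1 p hp x (hmem x hx) (hne x hx))
      (fun x hx y hy => hS.2 p hp x (hmem x hx) y (hmem y hy) (hne x hx) (hne y hy))
      (fun x hx u _ hup hux => by
        rw [Pi.sub_apply, hfg x hx u hux, hcomp p hp x (hmem x hx) u hup hux, sub_self])
    refine ⟨f + G, Submodule.add_mem _ hf hG, fun x hx u hu => ?_⟩
    rcases Finset.mem_insert.1 hx with rfl | hx
    · rw [Pi.add_apply, ← hGp u hu, Pi.sub_apply, add_sub_cancel]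
    · rw [Pi.add_apply, hGzero x hx u hu, add_zero, hfg x hx u hu]

end Segre

section LemmaOfTangents

variable {F : Type*} [Field F] [Fintype F] {W : Type*} [AddCommGroup W] [Module F W]

/-- An arc `S` of size `k` of a plane together with, for each of its points `p`, a set `T p` of
`q + 2 - k` vectors that marks one further point on each tangent to `S` at `p`. -/
structure TangentSystem (S : Finset W) (T : W → Finset W) : Prop extends IsArc F S where
  noncollinear_point : ∀ p ∈ S, ∀ x ∈ T p, ∀ y ∈ S, y ≠ p → Noncollinear F p x y
  noncollinear_tangent : ∀ p ∈ S, ∀ x ∈ T p, ∀ y ∈ T p, x ≠ y → Noncollinear F p x y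
  card_add_card : ∀ p ∈ S, (T p).card + S.card = Fintype.card F + 2
  exists_tangent : ∀ p ∈ S, ∀ u : Dual F W, u ≠ 0 → u p = 0 → (∀ s ∈ S, u s = 0 → s = p) →
    ∃ e ∈ T p, u e = 0

lemma prod_univ_erase_zero_eq_neg_one [DecidableEq F] :
    ∏ x ∈ Finset.univ.erase (0 : F), x = -1 := by
  have hunits : ∏ x : Fˣ, (x : F) = -1 := by
    simpa using congrArg Units.val (FiniteField.prod_univ_units_id_eq_neg_one (K := F))
  rw [← hunits]
  refine (Finset.prod_bij (fun (x : Fˣ) _ => (x : F)) (by simp) (fun _ _ _ _ => Units.ext)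
    (fun b hb => ⟨Units.mk0 b (by simpa using hb), by simp, rfl⟩) (by simp)).symm

/-- The points of `R` lie on all the `q - 1` lines through `p` other than the two lines `b'` and
`b''`, and the ratio `b' x / b'' x` is a coordinate on the pencil of these lines. -/
lemma prod_apply_eq_neg_prod_apply {p p' p'' : W} {R : Finset W} {b' b'' : Dual F W}
    (hcard : R.card + 1 = Fintype.card F)
    (hnc : ∀ x ∈ R, ∀ y ∈ R, x ≠ y → Noncollinear F p x y)
    (hnc' : ∀ x ∈ R, Noncollinear F p x p') (hnc'' : ∀ x ∈ R, Noncollinear F p x p'')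
    (hb' : b' ≠ 0) (hb'p : b' p = 0) (hb'p'' : b' p'' = 0) (hb'p' : b' p' ≠ 0)
    (hb'' : b'' ≠ 0) (hb''p : b'' p = 0) (hb''p' : b'' p' = 0) :
    ∏ x ∈ R, b' x = -∏ x ∈ R, b'' x := by
  classical
  have hb'x : ∀ x ∈ R, b' x ≠ 0 := fun x hx h => hb' (hnc'' x hx b' hb'p h hb'p'')
  have hb''x : ∀ x ∈ R, b'' x ≠ 0 := fun x hx h => hb'' (hnc' x hx b'' hb''p h hb''p')
  have hinj : Set.InjOn (fun x => b' x / b'' x) (R : Set W) := by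
    intro x hx y hy hxy
    by_contra hne
    have hxy : b' x * b'' y = b' y * b'' x := (div_eq_div_iff (hb''x x hx) (hb''x y hy)).1 hxy
    have hline : b'' y • b' - b' y • b'' = 0 := by
      refine hnc x hx y hy hne _ ?_ ?_ ?_ <;>
        simp only [LinearMap.sub_apply, LinearMap.smul_apply, smul_eq_mul]
      · simp [hb'p, hb''p]
      · linear_combination hxy
      · ring
    simpa [hb''p', hb'p', hb''x y hy] using LinearMap.congr_fun hline p'
  have himage : R.image (fun x => b' x / b'' x) = Finset.univ.erase (0 : F) := by
    apply Finset.eq_of_subset_of_card_le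
    · intro y hy
      obtain ⟨x, hx, rfl⟩ := Finset.mem_image.1 hy
      simp [hb'x x hx, hb''x x hx]
    · rw [Finset.card_image_of_injOn hinj, Finset.card_erase_of_mem (Finset.mem_univ _),
        Finset.card_univ]
      omega
  have hprod : ∏ x ∈ R, (b' x / b'' x) = -1 := by
    rw [← Finset.prod_image (f := fun y : F => y) hinj, himage, prod_univ_erase_zero_eq_neg_one]
  rwa [Finset.prod_div_distrib, div_eq_iff (Finset.prod_ne_zero_iff.2 hb''x),
    neg_one_mul] at hprod

omit [Fintype F] in
lemma IsArc.prod_apply_ne_zero {S : Finset W} (h : IsArc F S) {p p' : W} (hp : p ∈ S)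
    (hp' : p' ∈ S) (hne : p ≠ p') {R : Finset W} (hR : ∀ x ∈ R, x ∈ S ∧ x ≠ p ∧ x ≠ p')
    {u : Dual F W} (hu : u ≠ 0) (hup : u p = 0) (hup' : u p' = 0) : ∏ x ∈ R, u x ≠ 0 :=
  Finset.prod_ne_zero_iff.2 fun x hx hux =>
    hu (h.noncollinear p hp p' hp' x (hR x hx).1 hne (hR x hx).2.1.symm (hR x hx).2.2.symm
      u hup hup' hux)

namespace TangentSystem

variable {S : Finset W} {T : W → Finset W}

lemma prod_tangent_ne_zero (h : TangentSystem (F := F) S T) {p y : W} (hp : p ∈ S) (hy : y ∈ S)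
    (hne : y ≠ p) {u : Dual F W} (hu : u ≠ 0) (hup : u p = 0) (huy : u y = 0) :
    ∏ e ∈ T p, u e ≠ 0 :=
  Finset.prod_ne_zero_iff.2 fun e he hue =>
    hu (h.noncollinear_point p hp e he y hy hne u hup hue huy)

lemma prod_tangent_mul_prod_point [DecidableEq W] (hW : finrank F W = 3)
    (h : TangentSystem (F := F) S T)
    {p p' p'' : W} (hp : p ∈ S) (hp' : p' ∈ S) (hp'' : p'' ∈ S) (hpp' : p ≠ p') (hpp'' : p ≠ p'')
    (hp'p'' : p' ≠ p'') {b' b'' : Dual F W} (hb' : b' ≠ 0) (hb'p : b' p = 0) (hb'p'' : b' p'' = 0)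
    (hb'' : b'' ≠ 0) (hb''p : b'' p = 0) (hb''p' : b'' p' = 0) :
    (∏ e ∈ T p, b' e) * ∏ s ∈ S \ {p, p', p''}, b' s =
      -((∏ e ∈ T p, b'' e) * ∏ s ∈ S \ {p, p', p''}, b'' s) := by
  have hR : ∀ x ∈ S \ {p, p', p''}, x ∈ S ∧ p ≠ x ∧ x ≠ p' ∧ x ≠ p'' := by
    intro x hx
    simp only [Finset.mem_sdiff, Finset.mem_insert, Finset.mem_singleton, not_or] at hx
    exact ⟨hx.1, Ne.symm hx.2.1, hx.2.2⟩
  have hdisj : Disjoint (T p) (S \ {p, p', p''}) := by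
    refine Finset.disjoint_left.2 fun x hxT hxR => ?_
    obtain ⟨hxS, hpx, -⟩ := hR x hxR
    exact (h.noncollinear_point p hp x hxT x hxS hpx.symm).right_ne hW
      (h.linearIndependent p hp x hxS hpx) rfl
  have hcardR : (S \ {p, p', p''}).card + 3 = S.card := by
    have hsub : {p, p', p''} ⊆ S := by simp [Finset.insert_subset_iff, hp, hp', hp'']
    rw [← Finset.card_sdiff_add_card_eq_card hsub, Finset.card_eq_three.2
      ⟨p, p', p'', hpp', hpp'', hp'p'', rfl⟩]
  have hnc_point (y : W) (hy : y ∈ S) (hne : y ≠ p) (x : W)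
      (hx : x ∈ T p ∪ S \ {p, p', p''})
      (hxy : x ∈ S \ {p, p', p''} → x ≠ y) : Noncollinear F p x y := by
    rcases Finset.mem_union.1 hx with hx | hx
    · exact h.noncollinear_point p hp x hx y hy hne
    · exact h.noncollinear p hp x (hR x hx).1 y hy (hR x hx).2.1 hne.symm (hxy hx)
  have hunion := prod_apply_eq_neg_prod_apply (p := p) (p' := p') (p'' := p'')
    (R := T p ∪ S \ {p, p', p''}) (b' := b') (b'' := b'')
    (by
      have hcardT := h.card_add_card p hp
      rw [Finset.card_union_of_disjoint hdisj]
      omega)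
    (fun x hx y hy hxy => by
      rcases Finset.mem_union.1 hx with hxT | hxR <;> rcases Finset.mem_union.1 hy with hyT | hyR
      · exact h.noncollinear_tangent p hp x hxT y hyT hxy
      · exact hnc_point y (hR y hyR).1 (hR y hyR).2.1.symm x hx fun _ => hxy
      · exact (hnc_point x (hR x hxR).1 (hR x hxR).2.1.symm y hy fun _ => hxy.symm).swap_right
      · exact hnc_point y (hR y hyR).1 (hR y hyR).2.1.symm x hx fun _ => hxy)
    (fun x hx => hnc_point p' hp' hpp'.symm x hx fun hR' => (hR x hR').2.2.1)
    (fun x hx => hnc_point p'' hp'' hpp''.symm x hx fun hR' => (hR x hR').2.2.2)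
    hb' hb'p hb'p''
    (fun hb'p' => hb' (h.noncollinear p hp p' hp' p'' hp'' hpp' hpp'' hp'p'' b' hb'p hb'p' hb'p''))
    hb'' hb''p hb''p'
  rwa [Finset.prod_union hdisj, Finset.prod_union hdisj] at hunion

/-- Segre's lemma of tangents. In characteristic two no sign appears. -/
lemma prod_tangents_eq [CharP F 2] (hW : finrank F W = 3) (h : TangentSystem (F := F) S T)
    {p p' p'' : W} (hp : p ∈ S) (hp' : p' ∈ S) (hp'' : p'' ∈ S) (hpp' : p ≠ p') (hpp'' : p ≠ p'')
    (hp'p'' : p' ≠ p'') {b b' b'' : Dual F W} (hb : b ≠ 0) (hbp' : b p' = 0) (hbp'' : b p'' = 0)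
    (hb' : b' ≠ 0) (hb'p : b' p = 0) (hb'p'' : b' p'' = 0)
    (hb'' : b'' ≠ 0) (hb''p : b'' p = 0) (hb''p' : b'' p' = 0) :
    (∏ e ∈ T p, b' e) * (∏ e ∈ T p', b'' e) * (∏ e ∈ T p'', b e) =
      (∏ e ∈ T p, b'' e) * (∏ e ∈ T p', b e) * (∏ e ∈ T p'', b' e) := by
  classical
  have hR : ∀ x ∈ S \ {p, p', p''}, x ∈ S ∧ x ≠ p ∧ x ≠ p' ∧ x ≠ p'' := by
    intro x hx
    simpa only [Finset.mem_sdiff, Finset.mem_insert, Finset.mem_singleton, not_or] using hx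
  have hrotate : ({p', p'', p} : Finset W) = {p, p', p''} := by
    ext
    simp only [Finset.mem_insert, Finset.mem_singleton]
    tauto
  have hrotate' : ({p'', p, p'} : Finset W) = {p, p', p''} := by
    ext
    simp only [Finset.mem_insert, Finset.mem_singleton]
    tauto
  have hcorner := h.prod_tangent_mul_prod_point hW hp hp' hp'' hpp' hpp'' hp'p''
    hb' hb'p hb'p'' hb'' hb''p hb''p'
  have hcorner' := h.prod_tangent_mul_prod_point hW hp' hp'' hp hp'p'' hpp'.symm hpp''.symm
    hb'' hb''p' hb''p hb hbp' hbp''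
  have hcorner'' := h.prod_tangent_mul_prod_point hW hp'' hp hp' hpp''.symm hp'p''.symm hpp'
    hb hbp'' hbp' hb' hb'p'' hb'p
  rw [hrotate] at hcorner'
  rw [hrotate'] at hcorner''
  rw [CharTwo.neg_eq] at hcorner hcorner' hcorner''
  have hne := h.toIsArc.prod_apply_ne_zero hp' hp'' hp'p''
    (fun x hx => ⟨(hR x hx).1, (hR x hx).2.2⟩) hb hbp' hbp''
  have hne' := h.toIsArc.prod_apply_ne_zero hp hp'' hpp''
    (fun x hx => ⟨(hR x hx).1, (hR x hx).2.1, (hR x hx).2.2.2⟩) hb' hb'p hb'p''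
  have hne'' := h.toIsArc.prod_apply_ne_zero hp hp' hpp'
    (fun x hx => ⟨(hR x hx).1, (hR x hx).2.1, (hR x hx).2.2.1⟩) hb'' hb''p hb''p'
  refine mul_right_cancel₀ (mul_ne_zero (mul_ne_zero hne hne') hne'') ?_
  linear_combination congrArg₂ (· * ·) (congrArg₂ (· * ·) hcorner hcorner') hcorner''

end TangentSystem

section Envelope

variable {S : Finset W} {T : W → Finset W}

lemma TangentSystem.exists_prod_eq_mul_prod (hW : finrank F W = 3)
    (h : TangentSystem (F := F) S T) {p₀ p : W} (hp₀ : p₀ ∈ S) (hp : p ∈ S) :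
    ∃ a : F, a ≠ 0 ∧
      ∀ u : Dual F W, u p₀ = 0 → u p = 0 → ∏ e ∈ T p₀, u e = a * ∏ e ∈ T p, u e := by
  obtain rfl | hne := eq_or_ne p₀ p
  · exact ⟨1, one_ne_zero, fun _ _ _ => (one_mul _).symm⟩
  obtain ⟨v, hv⟩ := exists_isJoin hW (h.linearIndependent p₀ hp₀ p hp hne)
  have hv₀ := h.prod_tangent_ne_zero hp₀ hp hne.symm hv.ne_zero hv.left hv.right
  have hvp := h.prod_tangent_ne_zero hp hp₀ hne hv.ne_zero hv.right hv.left
  refine ⟨(∏ e ∈ T p₀, v e) / ∏ e ∈ T p, v e, div_ne_zero hv₀ hvp, fun u hu₀ hup => ?_⟩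
  have hcard : (T p₀).card = (T p).card :=
    Nat.add_right_cancel ((h.card_add_card p₀ hp₀).trans (h.card_add_card p hp).symm)
  obtain ⟨l, rfl⟩ := hv.exists_eq_smul u hu₀ hup
  simp only [LinearMap.smul_apply, smul_eq_mul, Finset.prod_mul_distrib, Finset.prod_const, hcard]
  field_simp

/-- The constant `c p` is fixed by comparison with a base point `p₀`; compatibility at two
further points is then the lemma of tangents for the triangle `p₀ p p'`. -/
lemma TangentSystem.exists_compatible_scaling [CharP F 2] (hW : finrank F W = 3)
    (h : TangentSystem (F := F) S T) {p₀ : W} (hp₀ : p₀ ∈ S) :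
    ∃ c : W → F, (∀ p ∈ S, c p ≠ 0) ∧ ∀ p ∈ S, ∀ p' ∈ S, ∀ u : Dual F W, u p = 0 → u p' = 0 →
      c p * ∏ e ∈ T p, u e = c p' * ∏ e ∈ T p', u e := by
  choose! c hc hscale using fun p => h.exists_prod_eq_mul_prod hW hp₀ (p := p)
  refine ⟨c, hc, fun p hp p' hp' u hup hup' => ?_⟩
  by_cases hu₀ : u p₀ = 0
  · rw [← hscale p hp u hu₀ hup, ← hscale p' hp' u hu₀ hup']
  have hne : p₀ ≠ p := fun heq => hu₀ (heq ▸ hup)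
  have hne' : p₀ ≠ p' := fun heq => hu₀ (heq ▸ hup')
  have hu : u ≠ 0 := fun heq => hu₀ (by rw [heq, LinearMap.zero_apply])
  obtain rfl | hpp' := eq_or_ne p p'
  · rfl
  obtain ⟨v, hv⟩ := exists_isJoin hW (h.linearIndependent p₀ hp₀ p hp hne)
  obtain ⟨v', hv'⟩ := exists_isJoin hW (h.linearIndependent p₀ hp₀ p' hp' hne')
  have htangents := h.prod_tangents_eq hW hp₀ hp hp' hne hne' hpp' hu hup hup'
    hv'.ne_zero hv'.left hv'.right hv.ne_zero hv.left hv.right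
  rw [hscale p hp v hv.left hv.right, hscale p' hp' v' hv'.left hv'.right] at htangents
  have hvp := h.prod_tangent_ne_zero hp hp₀ hne hv.ne_zero hv.right hv.left
  have hvp' := h.prod_tangent_ne_zero hp' hp₀ hne' hv'.ne_zero hv'.right hv'.left
  refine mul_right_cancel₀ (mul_ne_zero hvp hvp') ?_
  linear_combination -htangents

/-- **Segre's envelope.** The tangents of an arc belong to an algebraic envelope. -/
lemma TangentSystem.exists_envelope [CharP F 2] (hW : finrank F W = 3)
    (h : TangentSystem (F := F) S T) {p₀ : W} (hp₀ : p₀ ∈ S) :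
    ∃ f ∈ linearForms F W ^ (Fintype.card F + 2 - S.card), ∃ c : W → F, (∀ p ∈ S, c p ≠ 0) ∧
      ∀ p ∈ S, ∀ u : Dual F W, u p = 0 → f u = c p * ∏ e ∈ T p, u e := by
  obtain ⟨c, hc, hcomp⟩ := h.exists_compatible_scaling hW hp₀
  have hform (p : W) (hp : p ∈ S) : (fun u : Dual F W => c p * ∏ e ∈ T p, u e) ∈
      linearForms F W ^ (Fintype.card F + 2 - S.card) := by
    rw [← Nat.eq_sub_of_add_eq (h.card_add_card p hp)]
    exact const_mul_prod_mem_linearForms_pow (T p) (c p)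
  obtain ⟨f, hf, hfc⟩ := h.toIsArc.exists_form_of_compatible hW hform hcomp
  exact ⟨f, hf, c, hc, hfc⟩

/-- The line joining `X` to the point `p` of `S` meets `S` only in `p`. -/
def JoinTangent (F : Type*) [Field F] {W : Type*} [AddCommGroup W] [Module F W]
    (S : Finset W) (X p : W) : Prop :=
  ∀ u : Dual F W, u ≠ 0 → u X = 0 → u p = 0 → ∀ s ∈ S, u s = 0 → s = p

/-- The envelope of the tangents restricts to the pencil at `X` as a form of degree `q + 2 - k`,
so if too many tangents pass through `X` then it vanishes on the whole pencil. -/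
lemma TangentSystem.joinTangent_of_card_lt [CharP F 2] (hW : finrank F W = 3)
    (h : TangentSystem (F := F) S T) {X : W} (hX : ∀ p ∈ S, LinearIndependent F ![X, p])
    {A : Finset W} (hAS : A ⊆ S) (hA : ∀ p ∈ A, JoinTangent F S X p)
    (hcard : Fintype.card F + 2 < A.card + S.card) : ∀ p ∈ S, JoinTangent F S X p := by
  intro p hp
  obtain ⟨f, hf, c, hc, hfc⟩ := h.exists_envelope hW hp
  have hzero := eq_zero_on_pencil_of_card_lt hW hf (T := A)
    (by have := h.card_add_card p hp; omega) (fun s hs => hX s (hAS hs))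
    (fun s hs s' hs' hne u huX hus hus' => by
      by_contra hu
      exact hne (hA s hs u hu huX hus s' (hAS hs') hus').symm)
    (fun s hs u hu huX hus => by
      obtain ⟨e, he, hue⟩ := h.exists_tangent s (hAS hs) u hu hus (hA s hs u hu huX hus)
      rw [hfc s (hAS hs) u hus, Finset.prod_eq_zero he hue, mul_zero])
  intro u hu huX hup s hs hus
  by_contra hsp
  have hfu := hzero u huX
  rw [hfc p hp u hup] at hfu
  exact mul_ne_zero (hc p hp) (h.prod_tangent_ne_zero hp hs hsp hu hup hus) hfu

end Envelope

end LemmaOfTangents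

/-! ### Incidence and caps -/

section Incidence

variable {F : Type*} [Field F] {V : Type*} [AddCommGroup V] [Module F V]

noncomputable instance : DecidableEq (Submodule F V) := Classical.decEq _

noncomputable instance : DecidableLE (Submodule F V) := Classical.decRel _

noncomputable instance [Finite V] : Fintype (Submodule F V) := Fintype.ofFinite _

lemma exists_span_eq_of_finrank_eq_one {P : Submodule F V} (hP : finrank F P = 1) :
    ∃ v, Submodule.span F {v} = P := by
  obtain ⟨v, -, hspan⟩ := finrank_eq_one_iff'.1 hP
  refine ⟨v, le_antisymm ((Submodule.span_singleton_le_iff_mem _ _).2 v.2) fun x hx => ?_⟩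
  obtain ⟨c, hc⟩ := hspan ⟨x, hx⟩
  exact Submodule.mem_span_singleton.2 ⟨c, congrArg Subtype.val hc⟩

variable [Finite V] {P Q U M m : Submodule F V}

lemma finrank_sup_point (hP : finrank F P = 1) (h : ¬P ≤ U) :
    finrank F ↥(U ⊔ P) = finrank F U + 1 := by
  obtain ⟨v, rfl⟩ := exists_span_eq_of_finrank_eq_one hP
  exact Submodule.finrank_sup_span_singleton fun hv =>
    h ((Submodule.span_singleton_le_iff_mem _ _).2 hv)

lemma sup_point_eq (hP : finrank F P = 1) (h : ¬P ≤ U) (hU : U ≤ M) (hPM : P ≤ M)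
    (hM : finrank F M = finrank F U + 1) : U ⊔ P = M :=
  Submodule.eq_of_le_of_finrank_le (sup_le hU hPM) (by rw [finrank_sup_point hP h, hM])

lemma point_eq_of_le (hP : finrank F P = 1) (hQ : finrank F Q = 1) (h : P ≤ Q) : P = Q :=
  Submodule.eq_of_le_of_finrank_le h (by rw [hP, hQ])

lemma finrank_line (hP : finrank F P = 1) (hQ : finrank F Q = 1) (h : P ≠ Q) :
    finrank F ↥(P ⊔ Q) = 2 := by
  rw [finrank_sup_point hQ fun hle => h (point_eq_of_le hQ hP hle).symm, hP]

lemma line_eq (hP : finrank F P = 1) (hQ : finrank F Q = 1) (h : P ≠ Q) (hm : finrank F m = 2)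
    (hPm : P ≤ m) (hQm : Q ≤ m) : P ⊔ Q = m :=
  Submodule.eq_of_le_of_finrank_le (sup_le hPm hQm) (by rw [finrank_line hP hQ h, hm])

/-- The projective points, as one-dimensional subspaces, of the projective subspace `W`. -/
noncomputable def points (W : Submodule F V) : Finset (Submodule F V) :=
  {P | finrank F P = 1 ∧ P ≤ W}

/-- The subspaces of `W` that contain `U` as a hyperplane. -/
noncomputable def coversIn (U W : Submodule F V) : Finset (Submodule F V) :=
  {M | U ≤ M ∧ M ≤ W ∧ finrank F M = finrank F U + 1}

lemma mem_points {W P : Submodule F V} : P ∈ points W ↔ finrank F P = 1 ∧ P ≤ W := by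
  simp [points]

lemma mem_coversIn {U W M : Submodule F V} :
    M ∈ coversIn U W ↔ U ≤ M ∧ M ≤ W ∧ finrank F M = finrank F U + 1 := by
  simp [coversIn]

lemma points_mono {U W : Submodule F V} (h : U ≤ W) : points U ⊆ points W := fun _ hP =>
  mem_points.2 ⟨(mem_points.1 hP).1, (mem_points.1 hP).2.trans h⟩

lemma sum_card_filter_coversIn {S : Finset (Submodule F V)} (hS : ∀ P ∈ S, finrank F P = 1)
    {U W : Submodule F V} (hUW : U ≤ W) :
    ∑ M ∈ coversIn U W, {P ∈ S | P ≤ M ∧ ¬P ≤ U}.card = {P ∈ S | P ≤ W ∧ ¬P ≤ U}.card := by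
  rw [Finset.card_eq_sum_card_fiberwise (f := fun P => U ⊔ P) (t := coversIn U W)]
  · refine Finset.sum_congr rfl fun M hM => congrArg Finset.card (Finset.ext fun P => ?_)
    obtain ⟨hUM, hMW, hM⟩ := mem_coversIn.1 hM
    simp only [Finset.mem_filter]
    constructor
    · rintro ⟨hP, hPM, hPU⟩
      exact ⟨⟨hP, hPM.trans hMW, hPU⟩, sup_point_eq (hS P hP) hPU hUM hPM hM⟩
    · rintro ⟨⟨hP, -, hPU⟩, rfl⟩
      exact ⟨hP, le_sup_right, hPU⟩
  · intro P hP
    obtain ⟨hPS, hPW, hPU⟩ := Finset.mem_filter.1 hP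
    exact mem_coversIn.2 ⟨le_sup_left, sup_le hUW hPW, finrank_sup_point (hS P hPS) hPU⟩

end Incidence

section Counting

variable {F : Type*} [Field F] [Fintype F] {V : Type*} [AddCommGroup V] [Module F V] [Finite V]

local notation "q" => Fintype.card F

lemma card_points (W : Submodule F V) :
    (points W).card = ∑ i ∈ Finset.range (finrank F W), q ^ i := by
  let e : { H : Submodule F W // finrank F H = 1 } ≃ points W :=
    { toFun := fun H => ⟨H.1.map W.subtype, mem_points.2
        ⟨(Submodule.finrank_map_subtype_eq W H.1).trans H.2, Submodule.map_subtype_le W H.1⟩⟩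
      invFun := fun P => ⟨P.1.comap W.subtype, by
        rw [← Submodule.finrank_map_subtype_eq W,
          Submodule.map_comap_eq_of_le (by simpa using (mem_points.1 P.2).2)]
        exact (mem_points.1 P.2).1⟩
      left_inv := fun H => Subtype.ext <|
        Submodule.comap_map_eq_of_injective W.injective_subtype H.1
      right_inv := fun P => Subtype.ext <| by simpa using (mem_points.1 P.2).2 }
  rw [← Nat.card_eq_fintype_card, ← Projectivization.card_of_finrank F W rfl,
    Nat.card_congr ((Projectivization.equivSubmodule F W).trans e), Nat.card_eq_fintype_card,
    Fintype.card_coe]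

lemma card_filter_points_not_le {U W : Submodule F V} (h : U ≤ W) {k : ℕ}
    (hk : finrank F W = finrank F U + k) :
    {P ∈ points W | ¬P ≤ U}.card = q ^ finrank F U * ∑ i ∈ Finset.range k, q ^ i := by
  have hsdiff : {P ∈ points W | ¬P ≤ U} = points W \ points U := by
    ext P
    simp only [Finset.mem_filter, Finset.mem_sdiff, mem_points]
    tauto
  rw [hsdiff, Finset.card_sdiff_of_subset (points_mono h), card_points, card_points, hk,
    Finset.sum_range_add, Nat.add_sub_cancel_left, Finset.mul_sum]
  simp only [pow_add]

lemma card_coversIn {U W : Submodule F V} (h : U ≤ W) {k : ℕ}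
    (hk : finrank F W = finrank F U + k) :
    (coversIn U W).card = ∑ i ∈ Finset.range k, q ^ i := by
  have hsum := sum_card_filter_coversIn (fun P hP => (mem_points.1 hP).1) h (S := points W)
  have hM : ∀ M ∈ coversIn U W, {P ∈ points W | P ≤ M ∧ ¬P ≤ U}.card = q ^ finrank F U := by
    intro M hM
    obtain ⟨hUM, hMW, hM⟩ := mem_coversIn.1 hM
    have hfilter : {P ∈ points W | P ≤ M ∧ ¬P ≤ U} = {P ∈ points M | ¬P ≤ U} := by
      ext P
      simp only [Finset.mem_filter, mem_points]
      exact ⟨fun h => ⟨⟨h.1.1, h.2.1⟩, h.2.2⟩, fun h => ⟨⟨h.1.1, h.1.2.trans hMW⟩, h.1.2, h.2⟩⟩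
    rw [hfilter, card_filter_points_not_le hUM hM, Finset.sum_range_one, pow_zero, mul_one]
  have hW : {P ∈ points W | P ≤ W ∧ ¬P ≤ U} = {P ∈ points W | ¬P ≤ U} :=
    Finset.filter_congr fun P hP => and_iff_right (mem_points.1 hP).2
  rw [Finset.sum_congr rfl hM, Finset.sum_const, smul_eq_mul, hW,
    card_filter_points_not_le h hk, mul_comm] at hsum
  exact Nat.eq_of_mul_eq_mul_left (pow_pos Fintype.card_pos _) hsum

lemma card_coversIn_of_finrank_add_two {U W : Submodule F V} (h : U ≤ W)
    (hf : finrank F W = finrank F U + 2) : (coversIn U W).card = q + 1 := by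
  rw [card_coversIn h hf]
  simp [Finset.sum_range_succ, add_comm]

lemma card_coversIn_of_finrank_add_three {U W : Submodule F V} (h : U ≤ W)
    (hf : finrank F W = finrank F U + 3) : (coversIn U W).card = q ^ 2 + q + 1 := by
  rw [card_coversIn h hf]
  simp only [Finset.sum_range_succ, Finset.sum_range_zero]
  ring

lemma card_coversIn_of_finrank_add_four {U W : Submodule F V} (h : U ≤ W)
    (hf : finrank F W = finrank F U + 4) : (coversIn U W).card = q ^ 3 + q ^ 2 + q + 1 := by
  rw [card_coversIn h hf]
  simp only [Finset.sum_range_succ, Finset.sum_range_zero]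
  ring

lemma card_points_of_finrank_eq_two {W : Submodule F V} (hf : finrank F W = 2) :
    (points W).card = q + 1 := by
  rw [card_points, hf]
  simp [Finset.sum_range_succ, add_comm]

end Counting

section Caps

variable {F : Type*} [Field F] {V : Type*} [AddCommGroup V] [Module F V]

/-- The points of `K` in the projective subspace `W`. -/
noncomputable def sect (K : Finset (Submodule F V)) (W : Submodule F V) :
    Finset (Submodule F V) :=
  {P ∈ K | P ≤ W}

/-- A cap as a finite set of one-dimensional subspaces, at most two of which lie on a line. -/
structure IsCapFinset (K : Finset (Submodule F V)) : Prop where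
  finrank_eq_one : ∀ P ∈ K, finrank F P = 1
  card_sect_le_two : ∀ m : Submodule F V, finrank F m = 2 → (sect K m).card ≤ 2

/-- The line joining the point `P` of `K` to `X` is tangent to `K`. -/
def Tangent (K : Finset (Submodule F V)) (P X : Submodule F V) : Prop :=
  ∀ R ∈ K, R ≤ P ⊔ X → R = P

noncomputable instance (K : Finset (Submodule F V)) (P X : Submodule F V) :
    Decidable (Tangent K P X) := by
  unfold Tangent
  infer_instance

variable {K : Finset (Submodule F V)}

lemma mem_sect {W P : Submodule F V} : P ∈ sect K W ↔ P ∈ K ∧ P ≤ W := by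
  simp [sect]

lemma IsCapFinset.eq_or_eq (hK : IsCapFinset K) {m P Q R : Submodule F V}
    (hm : finrank F m = 2) (hP : P ∈ K) (hQ : Q ∈ K) (hR : R ∈ K) (hPm : P ≤ m) (hQm : Q ≤ m)
    (hRm : R ≤ m) (hPQ : P ≠ Q) : R = P ∨ R = Q := by
  by_contra! hne
  have hsub : {P, Q, R} ⊆ sect K m := by
    simp [Finset.insert_subset_iff, mem_sect, *]
  have hthree := Finset.card_le_card hsub
  rw [Finset.card_eq_three.2 ⟨P, Q, R, hPQ, hne.1.symm, hne.2.symm, rfl⟩] at hthree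
  have htwo := hK.card_sect_le_two m hm
  omega

variable [Finite V]

/-- The tangents to `K` at its point `P` that lie in `W`. -/
noncomputable def tangentLines (K : Finset (Submodule F V)) (P W : Submodule F V) :
    Finset (Submodule F V) :=
  {L ∈ coversIn P W | ∀ R ∈ K, R ≤ L → R = P}

lemma IsCapFinset.sect_subset_points (hK : IsCapFinset K) (W : Submodule F V) :
    sect K W ⊆ points W := fun P hP =>
  mem_points.2 ⟨hK.finrank_eq_one P (mem_sect.1 hP).1, (mem_sect.1 hP).2⟩

lemma IsCapFinset.filter_not_le_eq_erase (hK : IsCapFinset K) {P : Submodule F V} (hP : P ∈ K)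
    (W : Submodule F V) : {R ∈ K | R ≤ W ∧ ¬R ≤ P} = (sect K W).erase P := by
  ext R
  simp only [Finset.mem_filter, Finset.mem_erase, mem_sect]
  constructor
  · rintro ⟨hR, hRW, hRP⟩
    exact ⟨fun h => hRP h.le, hR, hRW⟩
  · rintro ⟨hne, hR, hRW⟩
    exact ⟨hR, hRW, fun h =>
      hne (point_eq_of_le (hK.finrank_eq_one R hR) (hK.finrank_eq_one P hP) h)⟩

/-- A line through a point of a cap is tangent, or contains exactly one other point. -/
lemma IsCapFinset.card_tangentLines_add_card_sect (hK : IsCapFinset K) {P W : Submodule F V}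
    (hP : P ∈ K) (hPW : P ≤ W) :
    (tangentLines K P W).card + (sect K W).card = (coversIn P W).card + 1 := by
  have hline : ∀ L ∈ coversIn P W,
      {R ∈ K | R ≤ L ∧ ¬R ≤ P}.card = if ∀ R ∈ K, R ≤ L → R = P then 0 else 1 := by
    intro L hL
    obtain ⟨hPL, -, hL⟩ := mem_coversIn.1 hL
    rw [hK.finrank_eq_one P hP] at hL
    rw [hK.filter_not_le_eq_erase hP]
    split_ifs with htangent
    · rw [Finset.card_eq_zero, Finset.erase_eq_empty_iff]
      right
      ext R
      simp only [mem_sect, Finset.mem_singleton]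
      exact ⟨fun h => htangent R h.1 h.2, fun h => h ▸ ⟨hP, hPL⟩⟩
    · push Not at htangent
      obtain ⟨R, hR, hRL, hRP⟩ := htangent
      refine Finset.card_eq_one.2 ⟨R, Finset.ext fun Q => ?_⟩
      simp only [Finset.mem_erase, mem_sect, Finset.mem_singleton]
      constructor
      · rintro ⟨hQP, hQ, hQL⟩
        exact (hK.eq_or_eq hL hP hR hQ hPL hRL hQL hRP.symm).resolve_left hQP
      · rintro rfl
        exact ⟨hRP, hR, hRL⟩
  have hsum := sum_card_filter_coversIn hK.finrank_eq_one hPW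
  rw [Finset.sum_congr rfl hline, hK.filter_not_le_eq_erase hP, Finset.sum_ite] at hsum
  simp only [Finset.sum_const_zero, Finset.sum_const, smul_eq_mul, mul_one, zero_add] at hsum
  have herase := Finset.card_erase_add_one (mem_sect.2 ⟨hP, hPW⟩)
  have hsplit := Finset.card_filter_add_card_filter_not (s := coversIn P W)
    (fun L => ∀ R ∈ K, R ≤ L → R = P)
  unfold tangentLines
  omega

lemma IsCapFinset.card_tangentLines_of_plane [Fintype F] (hK : IsCapFinset K)
    {P π : Submodule F V} (hP : P ∈ K) (hPπ : P ≤ π) (hπ : finrank F π = 3) :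
    (tangentLines K P π).card + (sect K π).card = Fintype.card F + 2 := by
  rw [hK.card_tangentLines_add_card_sect hP hPπ,
    card_coversIn_of_finrank_add_two hPπ (by rw [hK.finrank_eq_one P hP, hπ])]

end Caps

/-! ### Plane sections -/

section PlaneCoordinates

variable {F : Type*} [Field F] {V : Type*} [AddCommGroup V] [Module F V]

open Classical in
/-- A vector spanning the point `P` of `π`, as a vector of the plane `π`; it is `0` if `P` is not
a point of `π`. -/
noncomputable def vecIn (π P : Submodule F V) : π :=
  if h : ∃ v : π, Submodule.span F {(v : V)} = P then h.choose else 0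

/-- The line of the plane `π` given by the functional `u`, as a subspace of the whole space. -/
def kerIn {π : Submodule F V} (u : Dual F π) : Submodule F V :=
  (LinearMap.ker u).map π.subtype

lemma kerIn_le {π : Submodule F V} (u : Dual F π) : kerIn u ≤ π :=
  Submodule.map_subtype_le π _

variable [Finite V] {π P Q R : Submodule F V}

lemma span_vecIn (hP : P ∈ points π) : Submodule.span F {(vecIn π P : V)} = P := by
  obtain ⟨hP1, hPπ⟩ := mem_points.1 hP
  obtain ⟨v, rfl⟩ := exists_span_eq_of_finrank_eq_one hP1
  have h : ∃ w : π, Submodule.span F {(w : V)} = Submodule.span F {v} :=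
    ⟨⟨v, (Submodule.span_singleton_le_iff_mem _ _).1 hPπ⟩, rfl⟩
  rw [vecIn, dif_pos h]
  exact h.choose_spec

lemma vecIn_injOn : Set.InjOn (vecIn π) (points π) := fun P hP Q hQ h => by
  rw [← span_vecIn hP, ← span_vecIn hQ, h]

lemma finrank_kerIn (hπ : finrank F π = 3) {u : Dual F π} (hu : u ≠ 0) :
    finrank F (kerIn u) = 2 := by
  have hker := Module.Dual.finrank_ker_add_one_of_ne_zero hu
  rw [kerIn, Submodule.finrank_map_subtype_eq]
  omega

lemma apply_vecIn_eq_zero_iff (hP : P ∈ points π) (u : Dual F π) :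
    u (vecIn π P) = 0 ↔ P ≤ kerIn u := by
  conv_rhs => rw [← span_vecIn hP]
  rw [Submodule.span_singleton_le_iff_mem]
  simp [kerIn]

lemma linearIndependent_vecIn (hP : P ∈ points π) (hQ : Q ∈ points π) (h : P ≠ Q) :
    LinearIndependent F ![vecIn π P, vecIn π Q] := by
  have hP1 := (mem_points.1 hP).1
  have hne : vecIn π P ≠ 0 := fun h0 => by
    have hspan := span_vecIn hP
    rw [h0, ZeroMemClass.coe_zero, Submodule.span_zero_singleton] at hspan
    rw [← hspan, finrank_bot] at hP1
    exact zero_ne_one hP1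
  refine (LinearIndependent.pair_iff' hne).2 fun c hc => h ?_
  refine (point_eq_of_le (mem_points.1 hQ).1 hP1 ?_).symm
  rw [← span_vecIn hP, ← span_vecIn hQ, Submodule.span_singleton_le_iff_mem]
  exact Submodule.mem_span_singleton.2 ⟨c, congrArg Subtype.val hc⟩

lemma noncollinear_vecIn (hπ : finrank F π = 3) (hP : P ∈ points π) (hQ : Q ∈ points π)
    (hR : R ∈ points π)
    (h : ∀ m : Submodule F V, finrank F m = 2 → P ≤ m → Q ≤ m → ¬R ≤ m) :
    Noncollinear F (vecIn π P) (vecIn π Q) (vecIn π R) := fun u hPu hQu hRu => by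
  by_contra hu
  rw [apply_vecIn_eq_zero_iff ‹_›] at hPu hQu hRu
  exact h _ (finrank_kerIn hπ hu) hPu hQu hRu

end PlaneCoordinates

section PlaneSection

variable {F : Type*} [Field F] {V : Type*} [AddCommGroup V] [Module F V] [Finite V]
  {K : Finset (Submodule F V)} {π P Q R L M X m : Submodule F V}

lemma exists_mem_points_ne (hL : finrank F L = 2) (hP : finrank F P = 1) :
    ∃ Q ∈ points L, Q ≠ P := by
  have hLP : ¬L ≤ P := fun h => by
    have hle := Submodule.finrank_mono h
    omega
  obtain ⟨v, hvL, hvP⟩ := SetLike.not_le_iff_exists.1 hLP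
  refine ⟨Submodule.span F {v}, mem_points.2
    ⟨finrank_span_singleton fun hv => hvP (hv ▸ P.zero_mem), ?_⟩, ?_⟩
  · rwa [Submodule.span_singleton_le_iff_mem]
  · rintro rfl
    exact hvP (Submodule.mem_span_singleton_self v)

open Classical in
/-- A point of the line `L` different from `P`. -/
noncomputable def otherPoint (L P : Submodule F V) : Submodule F V :=
  if h : ∃ Q ∈ points L, Q ≠ P then h.choose else ⊥

/-- Vectors marking one further point on each tangent in `π` at the point spanned by `p`, as in
`TangentSystem`. -/
noncomputable def tangentVectors [DecidableEq V] (K : Finset (Submodule F V))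
    (π : Submodule F V) (p : π) : Finset π :=
  (tangentLines K (Submodule.span F {(p : V)}) π).image fun L =>
    vecIn π (otherPoint L (Submodule.span F {(p : V)}))

/-- The number of tangents to `K` through `X` whose point of contact lies in `W`. -/
noncomputable def tangentCount (K : Finset (Submodule F V)) (X W : Submodule F V) : ℕ :=
  {P ∈ sect K W | Tangent K P X}.card

lemma mem_tangentLines (hP : finrank F P = 1) :
    L ∈ tangentLines K P π ↔
      P ≤ L ∧ L ≤ π ∧ finrank F L = 2 ∧ ∀ R ∈ K, R ≤ L → R = P := by
  simp [tangentLines, mem_coversIn, hP, and_assoc]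

lemma otherPoint_mem_points (hL : finrank F L = 2) (hP : finrank F P = 1) :
    otherPoint L P ∈ points L := by
  have h := exists_mem_points_ne hL hP
  rw [otherPoint, dif_pos h]
  exact h.choose_spec.1

lemma otherPoint_ne (hL : finrank F L = 2) (hP : finrank F P = 1) :
    otherPoint L P ≠ P := by
  have h := exists_mem_points_ne hL hP
  rw [otherPoint, dif_pos h]
  exact h.choose_spec.2

lemma otherPoint_mem_points_of_mem_tangentLines (hP : finrank F P = 1)
    (hL : L ∈ tangentLines K P π) : otherPoint L P ∈ points π :=
  points_mono ((mem_tangentLines hP).1 hL).2.1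
    (otherPoint_mem_points ((mem_tangentLines hP).1 hL).2.2.1 hP)

lemma eq_of_otherPoint_le (hP : finrank F P = 1) (hL : L ∈ tangentLines K P π)
    (hm : finrank F m = 2) (hPm : P ≤ m) (hLm : otherPoint L P ≤ m) : L = m := by
  obtain ⟨hPL, -, hL, -⟩ := (mem_tangentLines hP).1 hL
  obtain ⟨hone, hle⟩ := mem_points.1 (otherPoint_mem_points hL hP)
  have hne := (otherPoint_ne hL hP).symm
  rw [← line_eq hP hone hne hL hPL hle, line_eq hP hone hne hm hPm hLm]

lemma IsCapFinset.isArc_image_vecIn [DecidableEq V] (hK : IsCapFinset K) (hπ : finrank F π = 3) :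
    IsArc F ((sect K π).image (vecIn π)) := by
  have hpoints := hK.sect_subset_points π
  constructor
  · simp only [Finset.forall_mem_image]
    exact fun P hP Q hQ hne => linearIndependent_vecIn (hpoints hP) (hpoints hQ)
      (ne_of_apply_ne _ hne)
  · simp only [Finset.forall_mem_image]
    refine fun P hP Q hQ R hR hPQ hPR hQR => noncollinear_vecIn hπ (hpoints hP) (hpoints hQ)
      (hpoints hR) fun m hm hPm hQm hRm => ?_
    rcases hK.eq_or_eq hm (mem_sect.1 hP).1 (mem_sect.1 hQ).1 (mem_sect.1 hR).1 hPm hQm hRm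
      (ne_of_apply_ne _ hPQ) with rfl | rfl
    exacts [hPR rfl, hQR rfl]

lemma IsCapFinset.tangentVectors_vecIn [DecidableEq V] (hK : IsCapFinset K) (hP : P ∈ sect K π) :
    tangentVectors K π (vecIn π P) =
      (tangentLines K P π).image fun L => vecIn π (otherPoint L P) := by
  rw [tangentVectors, span_vecIn (hK.sect_subset_points π hP)]

lemma IsCapFinset.card_tangentVectors_vecIn [DecidableEq V] (hK : IsCapFinset K)
    (hP : P ∈ sect K π) :
    (tangentVectors K π (vecIn π P)).card = (tangentLines K P π).card := by
  have hP1 := hK.finrank_eq_one P (mem_sect.1 hP).1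
  rw [hK.tangentVectors_vecIn hP, Finset.card_image_of_injOn]
  intro L hL M hM hLM
  obtain ⟨hPM, -, hM2, -⟩ := (mem_tangentLines hP1).1 hM
  refine eq_of_otherPoint_le hP1 hL hM2 hPM ?_
  rw [vecIn_injOn (otherPoint_mem_points_of_mem_tangentLines hP1 hL)
    (otherPoint_mem_points_of_mem_tangentLines hP1 hM) hLM]
  exact (mem_points.1 (otherPoint_mem_points hM2 hP1)).2

lemma IsCapFinset.kerIn_mem_tangentLines (hK : IsCapFinset K) (hπ : finrank F π = 3)
    (hP : P ∈ sect K π) {u : Dual F π} (hu : u ≠ 0) (hPu : u (vecIn π P) = 0)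
    (htangent : ∀ R ∈ sect K π, u (vecIn π R) = 0 → vecIn π R = vecIn π P) :
    kerIn u ∈ tangentLines K P π := by
  have hpoints := hK.sect_subset_points π
  refine (mem_tangentLines (hK.finrank_eq_one P (mem_sect.1 hP).1)).2
    ⟨(apply_vecIn_eq_zero_iff (hpoints hP) u).1 hPu, kerIn_le u, finrank_kerIn hπ hu,
      fun R hR hRu => ?_⟩
  have hRπ : R ∈ sect K π := mem_sect.2 ⟨hR, hRu.trans (kerIn_le u)⟩
  exact vecIn_injOn (hpoints hRπ) (hpoints hP)
    (htangent R hRπ ((apply_vecIn_eq_zero_iff (hpoints hRπ) u).2 hRu))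

lemma IsCapFinset.tangentSystem_sect [DecidableEq V] [Fintype F] (hK : IsCapFinset K)
    (hπ : finrank F π = 3) :
    TangentSystem (F := F) ((sect K π).image (vecIn π)) (tangentVectors K π) := by
  have hpoints := hK.sect_subset_points π
  have hone : ∀ P ∈ sect K π, finrank F P = 1 := fun P hP =>
    hK.finrank_eq_one P (mem_sect.1 hP).1
  refine ⟨hK.isArc_image_vecIn hπ, ?_, ?_, ?_, ?_⟩
  · simp only [Finset.forall_mem_image]
    intro P hP x hx R hR hne
    rw [hK.tangentVectors_vecIn hP] at hx
    obtain ⟨L, hL, rfl⟩ := Finset.mem_image.1 hx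
    refine noncollinear_vecIn hπ (hpoints hP)
      (otherPoint_mem_points_of_mem_tangentLines (hone P hP) hL) (hpoints hR)
      fun m hm hPm hLm hRm => hne ?_
    obtain rfl := eq_of_otherPoint_le (hone P hP) hL hm hPm hLm
    rw [((mem_tangentLines (hone P hP)).1 hL).2.2.2 R (mem_sect.1 hR).1 hRm]
  · simp only [Finset.forall_mem_image]
    intro P hP
    rw [hK.tangentVectors_vecIn hP]
    simp only [Finset.forall_mem_image]
    refine fun L hL M hM hne => noncollinear_vecIn hπ (hpoints hP)
      (otherPoint_mem_points_of_mem_tangentLines (hone P hP) hL)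
      (otherPoint_mem_points_of_mem_tangentLines (hone P hP) hM) fun m hm hPm hLm hMm => hne ?_
    rw [eq_of_otherPoint_le (hone P hP) hL hm hPm hLm,
      eq_of_otherPoint_le (hone P hP) hM hm hPm hMm]
  · simp only [Finset.forall_mem_image]
    intro P hP
    rw [hK.card_tangentVectors_vecIn hP, Finset.card_image_of_injOn (vecIn_injOn.mono hpoints),
      hK.card_tangentLines_of_plane (mem_sect.1 hP).1 (mem_sect.1 hP).2 hπ]
  · simp only [Finset.forall_mem_image]
    intro P hP u hu hPu htangent
    have hL := hK.kerIn_mem_tangentLines hπ hP hu hPu htangent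
    rw [hK.tangentVectors_vecIn hP]
    refine ⟨_, Finset.mem_image_of_mem _ hL, ?_⟩
    rw [apply_vecIn_eq_zero_iff (otherPoint_mem_points_of_mem_tangentLines (hone P hP) hL)]
    exact (mem_points.1 (otherPoint_mem_points (finrank_kerIn hπ hu) (hone P hP))).2

lemma IsCapFinset.joinTangent_vecIn_iff [DecidableEq V] (hK : IsCapFinset K) (hπ : finrank F π = 3)
    (hX : X ∈ points π) (hP : P ∈ sect K π) (hPX : P ≠ X) :
    JoinTangent F ((sect K π).image (vecIn π)) (vecIn π X) (vecIn π P) ↔ Tangent K P X := by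
  have hpoints := hK.sect_subset_points π
  have hker (u : Dual F π) (hu : u ≠ 0) (hXu : u (vecIn π X) = 0) (hPu : u (vecIn π P) = 0) :
      P ⊔ X = kerIn u :=
    line_eq (mem_points.1 (hpoints hP)).1 (mem_points.1 hX).1 hPX (finrank_kerIn hπ hu)
      ((apply_vecIn_eq_zero_iff (hpoints hP) u).1 hPu) ((apply_vecIn_eq_zero_iff hX u).1 hXu)
  simp only [JoinTangent, Finset.forall_mem_image]
  constructor
  · intro h R hR hRPX
    obtain ⟨u, hu⟩ := exists_isJoin hπ (linearIndependent_vecIn hX (hpoints hP) hPX.symm)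
    have hRπ : R ∈ sect K π :=
      mem_sect.2 ⟨hR, hRPX.trans (sup_le (mem_sect.1 hP).2 (mem_points.1 hX).2)⟩
    rw [hker u hu.ne_zero hu.left hu.right] at hRPX
    exact vecIn_injOn (hpoints hRπ) (hpoints hP) (h u hu.ne_zero hu.left hu.right hRπ
      ((apply_vecIn_eq_zero_iff (hpoints hRπ) u).2 hRPX))
  · intro h u hu hXu hPu R hR hRu
    rw [h R (mem_sect.1 hR).1]
    rw [hker u hu hXu hPu]
    exact (apply_vecIn_eq_zero_iff (hpoints hR) u).1 hRu

lemma IsCapFinset.tangentCount_add_card_sect_le [Fintype F] [CharP F 2] (hK : IsCapFinset K)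
    (hπ : finrank F π = 3) (hX : finrank F X = 1) (hXπ : X ≤ π) (hXK : X ∉ K)
    (hne : ∃ P ∈ sect K π, ¬Tangent K P X) :
    tangentCount K X π + (sect K π).card ≤ Fintype.card F + 2 := by
  classical
  by_contra! hlt
  obtain ⟨P₀, hP₀, hnontangent⟩ := hne
  have hpoints := hK.sect_subset_points π
  have hXpoints : X ∈ points π := mem_points.2 ⟨hX, hXπ⟩
  have hneX : ∀ P ∈ sect K π, P ≠ X := fun P hP h => hXK (h ▸ (mem_sect.1 hP).1)
  have htangents : JoinTangent F ((sect K π).image (vecIn π)) (vecIn π X) (vecIn π P₀) := by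
    refine (hK.tangentSystem_sect hπ).joinTangent_of_card_lt hπ ?_
      (A := {P ∈ sect K π | Tangent K P X}.image (vecIn π))
      (Finset.image_subset_image (Finset.filter_subset _ _)) ?_ ?_ _
      (Finset.mem_image_of_mem _ hP₀)
    · simp only [Finset.forall_mem_image]
      exact fun P hP => linearIndependent_vecIn hXpoints (hpoints hP) (hneX P hP).symm
    · simp only [Finset.forall_mem_image, Finset.mem_filter]
      exact fun P hP => (hK.joinTangent_vecIn_iff hπ hXpoints hP.1 (hneX P hP.1)).2 hP.2
    · rw [Finset.card_image_of_injOn (vecIn_injOn.mono hpoints), Finset.card_image_of_injOn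
        (vecIn_injOn.mono ((Finset.filter_subset _ _).trans hpoints))]
      exact hlt
  exact hnontangent ((hK.joinTangent_vecIn_iff hπ hXpoints hP₀ (hneX P₀ hP₀)).1 htangents)

end PlaneSection

section SectionSizes

variable {F : Type*} [Field F] {V : Type*} [AddCommGroup V] [Module F V]
  {K : Finset (Submodule F V)} {U W X : Submodule F V}

/-- The size of the section of `K` by `W`, as an integer. -/
noncomputable def sectCard (K : Finset (Submodule F V)) (W : Submodule F V) : ℤ :=
  (sect K W).card

/-- Every line joining `X` to a point of the section of the cap `K` by `W` is tangent to `K`. For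
`X ∉ K` this says that `X` extends the section. -/
def Extends (K : Finset (Submodule F V)) (X W : Submodule F V) : Prop :=
  ∀ P ∈ sect K W, Tangent K P X

lemma sect_mono (h : U ≤ W) : sect K U ⊆ sect K W :=
  fun _ hP => mem_sect.2 ⟨(mem_sect.1 hP).1, (mem_sect.1 hP).2.trans h⟩

lemma filter_sect_le (h : U ≤ W) : {P ∈ sect K W | P ≤ U} = sect K U := by
  ext P
  simp only [Finset.mem_filter, mem_sect]
  exact ⟨fun h => ⟨h.1.1, h.2⟩, fun hP => ⟨⟨hP.1, hP.2.trans h⟩, hP.2⟩⟩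

lemma sectCard_nonneg (K : Finset (Submodule F V)) (W : Submodule F V) : 0 ≤ sectCard K W :=
  Int.natCast_nonneg _

lemma sectCard_mono (h : U ≤ W) : sectCard K U ≤ sectCard K W :=
  Nat.cast_le.2 (Finset.card_le_card (sect_mono h))

lemma card_filter_le_and_not_le (h : U ≤ W) :
    (({P ∈ K | P ≤ W ∧ ¬P ≤ U}.card : ℕ) : ℤ) = sectCard K W - sectCard K U := by
  have hsdiff : {P ∈ K | P ≤ W ∧ ¬P ≤ U} = sect K W \ sect K U := by
    ext P
    simp only [Finset.mem_filter, Finset.mem_sdiff, mem_sect]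
    tauto
  rw [hsdiff, Finset.cast_card_sdiff (sect_mono h), sectCard, sectCard]

lemma tangentCount_eq_sectCard (K : Finset (Submodule F V)) (X W : Submodule F V) :
    (tangentCount K X W : ℤ) = sectCard {P ∈ K | Tangent K P X} W := by
  rw [tangentCount, sectCard, sect, sect, Finset.filter_comm]

lemma tangentCount_mono (h : U ≤ W) : (tangentCount K X U : ℤ) ≤ tangentCount K X W := by
  simp only [tangentCount_eq_sectCard]
  exact sectCard_mono h

lemma Extends.mono (h : Extends K X W) (hU : U ≤ W) : Extends K X U :=
  fun P hP => h P (sect_mono hU hP)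

lemma Extends.tangentCount_eq (h : Extends K X W) : (tangentCount K X W : ℤ) = sectCard K W := by
  rw [tangentCount, sectCard, Finset.filter_true_of_mem h]

variable [Finite V]

lemma sum_sectCard_sub (hK : ∀ P ∈ K, finrank F P = 1) (h : U ≤ W) :
    ∑ M ∈ coversIn U W, (sectCard K M - sectCard K U) = sectCard K W - sectCard K U := by
  rw [← card_filter_le_and_not_le h, ← sum_card_filter_coversIn hK h, Nat.cast_sum]
  exact Finset.sum_congr rfl fun M hM => (card_filter_le_and_not_le (mem_coversIn.1 hM).1).symm

lemma sum_sectCard (hK : ∀ P ∈ K, finrank F P = 1) (h : U ≤ W) :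
    ∑ M ∈ coversIn U W, sectCard K M =
      sectCard K W - sectCard K U + (coversIn U W).card * sectCard K U := by
  have hsum := sum_sectCard_sub hK h
  rw [Finset.sum_sub_distrib, Finset.sum_const, nsmul_eq_mul] at hsum
  linarith

lemma IsCapFinset.sum_tangentCount_sub (hK : IsCapFinset K) (X : Submodule F V) (h : U ≤ W) :
    ∑ M ∈ coversIn U W, ((tangentCount K X M : ℤ) - tangentCount K X U) =
      tangentCount K X W - tangentCount K X U := by
  simp only [tangentCount_eq_sectCard]
  exact sum_sectCard_sub (fun P hP => hK.finrank_eq_one P (Finset.mem_filter.1 hP).1) h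

end SectionSizes

section PlaneDefect

variable {F : Type*} [Field F] [Fintype F] {V : Type*} [AddCommGroup V] [Module F V] [Finite V]
  {K : Finset (Submodule F V)} {m π P R L W X : Submodule F V}

local notation "q" => (Fintype.card F : ℤ)

/-- The number by which the section of `K` by the plane `π` falls short of a hyperoval, that is,
the number of tangents in `π` at each point of the section. -/
noncomputable def planeDefect (K : Finset (Submodule F V)) (π : Submodule F V) : ℤ :=
  q + 2 - sectCard K π

lemma IsCapFinset.card_tangentLines_eq_planeDefect (hK : IsCapFinset K) (hπ : finrank F π = 3)
    (hP : P ∈ sect K π) : ((tangentLines K P π).card : ℤ) = planeDefect K π := by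
  have hsum := hK.card_tangentLines_of_plane (mem_sect.1 hP).1 (mem_sect.1 hP).2 hπ
  rw [planeDefect, sectCard]
  push_cast [← @Nat.cast_inj ℤ] at hsum
  linarith

lemma IsCapFinset.planeDefect_nonneg (hK : IsCapFinset K) (hπ : finrank F π = 3) :
    0 ≤ planeDefect K π := by
  rcases (sect K π).eq_empty_or_nonempty with hempty | ⟨P, hP⟩
  · rw [planeDefect, sectCard, hempty, Finset.card_empty, Nat.cast_zero, sub_zero]
    positivity
  · rw [← hK.card_tangentLines_eq_planeDefect hπ hP]
    positivity

lemma IsCapFinset.sum_planeDefect (hK : IsCapFinset K) (hmW : m ≤ W) (hm : sectCard K m = 2) :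
    ∑ π ∈ coversIn m W, planeDefect K π = q * (coversIn m W).card + 2 - sectCard K W := by
  simp only [planeDefect]
  rw [Finset.sum_sub_distrib, sum_sectCard hK.finrank_eq_one hmW, Finset.sum_const,
    nsmul_eq_mul, hm]
  ring

lemma IsCapFinset.tangentCount_le_planeDefect [CharP F 2] (hK : IsCapFinset K)
    (hπ : finrank F π = 3) (hX : finrank F X = 1) (hXπ : X ≤ π) (hXK : X ∉ K)
    (h : ¬Extends K X π) : (tangentCount K X π : ℤ) ≤ planeDefect K π := by
  have hle := hK.tangentCount_add_card_sect_le hπ hX hXπ hXK (by simpa [Extends] using h)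
  rw [planeDefect, sectCard]
  push_cast [← @Nat.cast_le ℤ] at hle
  linarith

omit [Fintype F] in
lemma IsCapFinset.sect_sup (hK : IsCapFinset K) (hP : P ∈ K) (hR : R ∈ K) (hPR : P ≠ R) :
    sect K (P ⊔ R) = {P, R} := by
  have hm := finrank_line (hK.finrank_eq_one P hP) (hK.finrank_eq_one R hR) hPR
  ext S
  simp only [mem_sect, Finset.mem_insert, Finset.mem_singleton]
  constructor
  · rintro ⟨hS, hSm⟩
    exact hK.eq_or_eq hm hP hR hS le_sup_left le_sup_right hSm hPR
  · rintro (rfl | rfl)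
    exacts [⟨hP, le_sup_left⟩, ⟨hR, le_sup_right⟩]

omit [Fintype F] in
lemma IsCapFinset.sectCard_sup (hK : IsCapFinset K) (hP : P ∈ K) (hR : R ∈ K) (hPR : P ≠ R) :
    sectCard K (P ⊔ R) = 2 := by
  rw [sectCard, hK.sect_sup hP hR hPR, Finset.card_pair hPR, Nat.cast_two]

omit [Fintype F] in
lemma IsCapFinset.exists_secant_of_not_extends (hK : IsCapFinset K) (hX : finrank F X = 1)
    (hXW : X ≤ W) (hXK : X ∉ K) (h : ¬Extends K X W) :
    ∃ m : Submodule F V, finrank F m = 2 ∧ X ≤ m ∧ m ≤ W ∧ sectCard K m = 2 ∧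
      tangentCount K X m = 0 := by
  simp only [Extends, Tangent] at h
  push Not at h
  obtain ⟨P, hP, R, hR, hRPX, hRP⟩ := h
  obtain ⟨hP, hPW⟩ := mem_sect.1 hP
  have hline {S : Submodule F V} (hS : S ∈ K) : finrank F ↥(S ⊔ X) = 2 :=
    finrank_line (hK.finrank_eq_one S hS) hX fun h => hXK (h ▸ hS)
  have hm : P ⊔ R = P ⊔ X := line_eq (hK.finrank_eq_one P hP) (hK.finrank_eq_one R hR) hRP.symm
    (hline hP) le_sup_left hRPX
  refine ⟨P ⊔ X, hline hP, le_sup_right, sup_le hPW hXW, ?_, ?_⟩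
  · rw [← hm, hK.sectCard_sup hP hR hRP.symm]
  · rw [tangentCount, ← hm, hK.sect_sup hP hR hRP.symm, Finset.card_eq_zero,
      Finset.filter_eq_empty_iff]
    simp only [Finset.mem_insert, Finset.mem_singleton, forall_eq_or_imp, forall_eq]
    refine ⟨fun htangent => hRP (htangent R hR hRPX), fun htangent => hRP ?_⟩
    have hRX : R ⊔ X = P ⊔ X := line_eq (hK.finrank_eq_one R hR) hX
      (fun h => hXK (h ▸ hR)) (hline hP) hRPX le_sup_right
    exact (htangent P hP (hRX ▸ le_sup_left)).symm

/-- The defects of the planes of `W` through a secant through `X` bound the numbers of tangents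
through `X` in these planes. -/
lemma IsCapFinset.tangentCount_le_of_not_extends [CharP F 2] (hK : IsCapFinset K) {k : ℕ}
    (hW : finrank F W = k + 2) (hX : finrank F X = 1) (hXW : X ≤ W) (hXK : X ∉ K)
    (h : ¬Extends K X W) :
    (tangentCount K X W : ℤ) ≤ q * ∑ i ∈ Finset.range k, q ^ i + 2 - sectCard K W := by
  obtain ⟨m, hm, hXm, hmW, hsect, hcount⟩ := hK.exists_secant_of_not_extends hX hXW hXK h
  have hsum := hK.sum_tangentCount_sub X hmW
  simp only [hcount, Nat.cast_zero, sub_zero] at hsum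
  have hdefect := hK.sum_planeDefect hmW hsect
  rw [card_coversIn hmW (by rw [hW, hm, add_comm])] at hdefect
  push_cast at hdefect
  rw [← hsum, ← hdefect]
  refine Finset.sum_le_sum fun π hπ => ?_
  obtain ⟨hmπ, -, hπ⟩ := mem_coversIn.1 hπ
  refine hK.tangentCount_le_planeDefect (by rw [hπ, hm]) hX (hXm.trans hmπ) hXK fun hext => ?_
  have heq := (hext.mono hmπ).tangentCount_eq
  rw [hcount, hsect] at heq
  norm_num at heq

omit [Fintype F] in
lemma finrank_inf_line (hπ : finrank F π = 3) (hL : finrank F L = 2) (hLπ : L ≤ π)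
    (hm : finrank F m = 2) (hmπ : m ≤ π) (h : m ≠ L) : finrank F ↥(m ⊓ L) = 1 := by
  have hsum := Submodule.finrank_sup_add_finrank_inf_eq m L
  have hle := Submodule.finrank_mono (sup_le hmπ hLπ)
  have hlt : finrank F m < finrank F ↥(m ⊔ L) := Submodule.finrank_lt_finrank_of_lt <|
    left_lt_sup.2 fun hLm => h (Submodule.eq_of_le_of_finrank_le hLm (by rw [hm, hL])).symm
  omega

omit [Fintype F] in
lemma card_filter_points_line_tangent (hπ : finrank F π = 3) (hL : finrank F L = 2) (hLπ : L ≤ π)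
    (hR : finrank F R = 1) (hRπ : R ≤ π) (hRL : ¬R ≤ L) :
    {X ∈ points L | Tangent K R X}.card = (tangentLines K R π).card := by
  have hline : ∀ X ∈ points L, R ≠ X := fun X hX h => hRL (h ▸ (mem_points.1 hX).2)
  have hinf {M : Submodule F V} (hM : finrank F M = 2) (hMπ : M ≤ π) (hRM : R ≤ M) :
      finrank F ↥(M ⊓ L) = 1 :=
    finrank_inf_line hπ hL hLπ hM hMπ fun h => hRL (h ▸ hRM)
  refine Finset.card_nbij' (R ⊔ ·) (· ⊓ L) ?_ ?_ ?_ ?_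
  · intro X hX
    obtain ⟨hXL, htangent⟩ := Finset.mem_filter.1 hX
    exact (mem_tangentLines hR).2 ⟨le_sup_left, sup_le hRπ ((mem_points.1 hXL).2.trans hLπ),
      finrank_line hR (mem_points.1 hXL).1 (hline X hXL), htangent⟩
  · intro M hM
    obtain ⟨hRM, hMπ, hM, htangent⟩ := (mem_tangentLines hR).1 hM
    exact Finset.mem_filter.2 ⟨mem_points.2 ⟨hinf hM hMπ hRM, inf_le_right⟩,
      fun S hS hSle => htangent S hS (hSle.trans (sup_le hRM inf_le_left))⟩
  · intro X hX
    have hXL := (Finset.mem_filter.1 hX).1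
    obtain ⟨hX, hXle⟩ := mem_points.1 hXL
    exact (point_eq_of_le hX (hinf (finrank_line hR hX (hline X hXL))
      (sup_le hRπ (hXle.trans hLπ)) le_sup_left) (le_inf le_sup_right hXle)).symm
  · intro M hM
    obtain ⟨hRM, hMπ, hM, -⟩ := (mem_tangentLines hR).1 hM
    exact line_eq hR (hinf hM hMπ hRM) (fun h => hRL (h ▸ inf_le_right)) hM hRM inf_le_left

lemma IsCapFinset.card_filter_points_line_tangent_eq_planeDefect (hK : IsCapFinset K)
    (hπ : finrank F π = 3) (hL : finrank F L = 2) (hLπ : L ≤ π) (hR : R ∈ sect K π) (hRL : ¬R ≤ L) :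
    ({X ∈ points L | Tangent K R X}.card : ℤ) = planeDefect K π := by
  rw [← hK.card_tangentLines_eq_planeDefect hπ hR, card_filter_points_line_tangent hπ hL
    hLπ (hK.finrank_eq_one R (mem_sect.1 hR).1) (mem_sect.1 hR).2 hRL]

omit [Fintype F] in
lemma card_filter_points_tangent_and (hP : finrank F P = 1) (hPW : P ≤ W)
    (p : Submodule F V → Prop) [DecidablePred p] (hpP : ¬p P) :
    {X ∈ points W | Tangent K P X ∧ p X}.card =
      ∑ L ∈ tangentLines K P W, {X ∈ points L | p X}.card := by
  have hne {X} (hX : p X) : P ≠ X := fun h => hpP (h ▸ hX)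
  rw [Finset.card_eq_sum_card_fiberwise (f := (P ⊔ ·)) (t := tangentLines K P W)]
  · refine Finset.sum_congr rfl fun L hL => congrArg Finset.card (Finset.ext fun X => ?_)
    obtain ⟨hPL, hLW, hL, htangent⟩ := (mem_tangentLines hP).1 hL
    simp only [Finset.mem_filter, mem_points]
    constructor
    · rintro ⟨⟨⟨hX, -⟩, -, hpX⟩, rfl⟩
      exact ⟨⟨hX, le_sup_right⟩, hpX⟩
    · rintro ⟨⟨hX, hXL⟩, hpX⟩
      have hline := line_eq hP hX (hne hpX) hL hPL hXL
      exact ⟨⟨⟨hX, hXL.trans hLW⟩, fun R hR hRle => htangent R hR (hline ▸ hRle), hpX⟩, hline⟩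
  · intro X hX
    simp only [Finset.mem_coe, Finset.mem_filter, mem_points] at hX
    obtain ⟨⟨hX, hXW⟩, htangent, hpX⟩ := hX
    exact (mem_tangentLines hP).2
      ⟨le_sup_left, sup_le hPW hXW, finrank_line hP hX (hne hpX), htangent⟩

lemma IsCapFinset.card_filter_points_tangent_and_notMem (hK : IsCapFinset K) (hP : P ∈ sect K W) :
    {X ∈ points W | Tangent K P X ∧ X ∉ K}.card =
      Fintype.card F * (tangentLines K P W).card := by
  obtain ⟨hPK, hPW⟩ := mem_sect.1 hP
  have hP1 := hK.finrank_eq_one P hPK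
  rw [card_filter_points_tangent_and hP1 hPW _ (not_not.2 hPK), mul_comm]
  refine Finset.sum_const_nat fun L hL => ?_
  obtain ⟨hPL, -, hL, htangent⟩ := (mem_tangentLines hP1).1 hL
  have herase : {X ∈ points L | X ∉ K} = (points L).erase P := by
    ext X
    simp only [Finset.mem_filter, Finset.mem_erase, mem_points]
    exact ⟨fun h => ⟨fun hXP => h.2 (hXP ▸ hPK), h.1⟩,
      fun h => ⟨h.2, fun hXK => h.1 (htangent X hXK h.2.2)⟩⟩
  rw [herase, Finset.card_erase_of_mem (mem_points.2 ⟨hP1, hPL⟩),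
    card_points_of_finrank_eq_two hL, Nat.add_sub_cancel]

lemma IsCapFinset.card_filter_points_tangent_and_tangent (hK : IsCapFinset K)
    (hπ : finrank F π = 3) (hP : P ∈ sect K π) (hR : R ∈ sect K π) (hPR : P ≠ R) :
    ({X ∈ points π | Tangent K P X ∧ Tangent K R X}.card : ℤ) = planeDefect K π ^ 2 := by
  obtain ⟨hPK, hPπ⟩ := mem_sect.1 hP
  have hP1 := hK.finrank_eq_one P hPK
  have hline : ∀ L ∈ tangentLines K P π,
      ({X ∈ points L | Tangent K R X}.card : ℤ) = planeDefect K π := by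
    intro L hL
    obtain ⟨-, hLπ, hL, htangent⟩ := (mem_tangentLines hP1).1 hL
    exact hK.card_filter_points_line_tangent_eq_planeDefect hπ hL hLπ hR
      fun hRL => hPR (htangent R (mem_sect.1 hR).1 hRL).symm
  rw [card_filter_points_tangent_and hP1 hPπ (Tangent K R) fun h => hPR (h P hPK le_sup_right),
    Nat.cast_sum, Finset.sum_congr rfl hline, Finset.sum_const, nsmul_eq_mul,
    hK.card_tangentLines_eq_planeDefect hπ hP, sq]

end PlaneDefect

section Extensions

variable {F : Type*} [Field F] {V : Type*} [AddCommGroup V] [Module F V]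
  {K C S : Finset (Submodule F V)} {P W X : Submodule F V}

noncomputable instance (K : Finset (Submodule F V)) (X W : Submodule F V) :
    Decidable (Extends K X W) := by
  unfold Extends
  infer_instance

lemma IsCapFinset.mono (hC : IsCapFinset C) (h : K ⊆ C) : IsCapFinset K where
  finrank_eq_one P hP := hC.finrank_eq_one P (h hP)
  card_sect_le_two m hm :=
    (Finset.card_le_card (Finset.filter_subset_filter _ h)).trans (hC.card_sect_le_two m hm)

lemma IsCapFinset.isCapFinset_sect (hK : IsCapFinset K) (W : Submodule F V) :
    IsCapFinset (sect K W) :=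
  hK.mono (Finset.filter_subset _ _)

variable [Finite V]

lemma IsCapFinset.insert (hK : IsCapFinset K) (hX : finrank F X = 1)
    (h : ∀ P ∈ K, Tangent K P X) : IsCapFinset (insert X K) := by
  constructor
  · simpa only [Finset.mem_insert, forall_eq_or_imp] using ⟨hX, hK.finrank_eq_one⟩
  · intro m hm
    rw [sect, Finset.filter_insert]
    split_ifs with hXm
    · refine (Finset.card_insert_le _ _).trans (Nat.succ_le_succ (Finset.card_le_one.2 ?_))
      intro P hP R hR
      obtain ⟨hP, hPm⟩ := mem_sect.1 hP
      obtain ⟨hR, hRm⟩ := mem_sect.1 hR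
      rcases eq_or_ne P X with rfl | hPX
      · exact h R hR P hP le_sup_right
      · exact (h P hP R hR (line_eq (hK.finrank_eq_one P hP) hX hPX hm hPm hXm ▸ hRm)).symm
    · exact hK.card_sect_le_two m hm

/-- The points of `W` outside the cap `K` that extend the section of `K` by `W` to a larger
cap. -/
noncomputable def extensionPoints (K : Finset (Submodule F V)) (W : Submodule F V) :
    Finset (Submodule F V) :=
  {X ∈ points W | X ∉ K ∧ Extends K X W}

lemma mem_extensionPoints :
    X ∈ extensionPoints K W ↔ finrank F X = 1 ∧ X ≤ W ∧ X ∉ K ∧ Extends K X W := by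
  rw [extensionPoints, Finset.mem_filter, mem_points, and_assoc]

lemma disjoint_extensionPoints_sect (K : Finset (Submodule F V)) (W : Submodule F V) :
    Disjoint (extensionPoints K W) (sect K W) :=
  Finset.disjoint_left.2 fun _ hX hXK => (mem_extensionPoints.1 hX).2.2.1 (mem_sect.1 hXK).1

lemma IsCapFinset.sup_mem_tangentLines (hK : IsCapFinset K) (hP : P ∈ sect K W)
    (hX : X ∈ extensionPoints K W) : P ⊔ X ∈ tangentLines K P W := by
  obtain ⟨hX, hXW, hXK, hext⟩ := mem_extensionPoints.1 hX
  have hP1 := hK.finrank_eq_one P (mem_sect.1 hP).1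
  exact (mem_tangentLines hP1).2 ⟨le_sup_left, sup_le (mem_sect.1 hP).2 hXW,
    finrank_line hP1 hX fun h => hXK (h ▸ (mem_sect.1 hP).1), hext P hP⟩

lemma IsCapFinset.exists_complete (hK : IsCapFinset K) (hKW : ∀ P ∈ K, P ≤ W) :
    ∃ C, K ⊆ C ∧ IsCapFinset C ∧ (∀ P ∈ C, P ≤ W) ∧ extensionPoints C W = ∅ := by
  classical
  obtain ⟨C, hC, hmax⟩ := Finset.exists_max_image
    {C : Finset (Submodule F V) | K ⊆ C ∧ IsCapFinset C ∧ ∀ P ∈ C, P ≤ W} Finset.card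
    ⟨K, by simpa using ⟨hK, hKW⟩⟩
  simp only [Finset.mem_filter, Finset.mem_univ, true_and] at hC hmax
  obtain ⟨hKC, hC, hCW⟩ := hC
  refine ⟨C, hKC, hC, hCW, Finset.eq_empty_of_forall_notMem fun X hX => ?_⟩
  obtain ⟨hX, hXW, hXC, hext⟩ := mem_extensionPoints.1 hX
  have hle := hmax (Insert.insert X C) ⟨hKC.trans (Finset.subset_insert _ _),
    hC.insert hX fun P hP => hext P (mem_sect.2 ⟨hP, hCW P hP⟩), by
      simpa only [Finset.mem_insert, forall_eq_or_imp] using ⟨hXW, hCW⟩⟩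
  rw [Finset.card_insert_of_notMem hXC] at hle
  omega

lemma IsCapFinset.card_filter_not_tangent_union_le (hK : IsCapFinset K)
    (hX : X ∈ extensionPoints K W) (hXS : X ∉ S) (hS : ∀ Y ∈ S, finrank F Y = 1) :
    {P ∈ sect K W | ¬Tangent (S ∪ sect K W) P X}.card ≤ S.card := by
  obtain ⟨hX, -, hXK, hext⟩ := mem_extensionPoints.1 hX
  refine Finset.card_le_card_of_forall_subsingleton (fun P Y => Y ≤ P ⊔ X) ?_ ?_
  · intro P hP
    obtain ⟨hP, hntan⟩ := Finset.mem_filter.1 hP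
    simp only [Tangent, not_forall, Finset.mem_union] at hntan
    obtain ⟨Y, hY | hY, hYle, hYP⟩ := hntan
    · exact ⟨Y, hY, hYle⟩
    · exact absurd (hext P hP Y (mem_sect.1 hY).1 hYle) hYP
  · rintro Y hY P ⟨hP, hYP⟩ R ⟨hR, hYR⟩
    have hP := (Finset.mem_filter.1 hP).1
    have hR := (mem_sect.1 (Finset.mem_filter.1 hR).1).1
    have hXY : Y ≠ X := fun h => hXS (h ▸ hY)
    have hline : ∀ Q ∈ K, Y ≤ Q ⊔ X → Y ⊔ X = Q ⊔ X := fun Q hQ hYQ => line_eq (hS Y hY) hX hXY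
      (finrank_line (hK.finrank_eq_one Q hQ) hX fun h => hXK (h ▸ hQ)) hYQ le_sup_right
    refine (hext P hP R hR ?_).symm
    rw [← hline P (mem_sect.1 hP).1 hYP, hline R hR hYR]
    exact le_sup_left

end Extensions

section PlaneExtensions

variable {F : Type*} [Field F] [Fintype F] {V : Type*} [AddCommGroup V] [Module F V] [Finite V]
  {K S : Finset (Submodule F V)} {P X L π : Submodule F V}

local notation "q" => (Fintype.card F : ℤ)

lemma IsCapFinset.sum_tangentCount_tangentLine (hK : IsCapFinset K) (hπ : finrank F π = 3)
    (hP : P ∈ sect K π) (hL : L ∈ tangentLines K P π) :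
    ∑ X ∈ (points L).erase P, (tangentCount K X π : ℤ) =
      q + (sectCard K π - 1) * planeDefect K π := by
  have hPK := (mem_sect.1 hP).1
  have hP1 := hK.finrank_eq_one P hPK
  obtain ⟨hPL, hLπ, hL, htangent⟩ := (mem_tangentLines hP1).1 hL
  have hswap : ∑ X ∈ (points L).erase P, (tangentCount K X π : ℤ) =
      ∑ R ∈ sect K π, ({X ∈ (points L).erase P | Tangent K R X}.card : ℤ) := by
    exact_mod_cast Finset.sum_card_bipartiteAbove_eq_sum_card_bipartiteBelow
      (fun X R => Tangent K R X)
  have hself : {X ∈ (points L).erase P | Tangent K P X} = (points L).erase P :=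
    Finset.filter_true_of_mem fun X hX R hR hRle =>
      htangent R hR (hRle.trans (sup_le hPL (mem_points.1 (Finset.mem_of_mem_erase hX)).2))
  have hother : ∀ R ∈ (sect K π).erase P,
      ({X ∈ (points L).erase P | Tangent K R X}.card : ℤ) = planeDefect K π := by
    intro R hR
    obtain ⟨hRP, hR⟩ := Finset.mem_erase.1 hR
    rw [← hK.card_filter_points_line_tangent_eq_planeDefect hπ hL hLπ hR
      fun hRL => hRP (htangent R (mem_sect.1 hR).1 hRL), Finset.filter_erase,
      Finset.erase_eq_of_notMem fun h =>
        hRP ((Finset.mem_filter.1 h).2 P hPK le_sup_right).symm]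
  rw [hswap, ← Finset.add_sum_erase _ _ hP, Finset.sum_congr rfl hother, hself,
    Finset.card_erase_of_mem (mem_points.2 ⟨hP1, hPL⟩), card_points_of_finrank_eq_two hL,
    Finset.sum_const, nsmul_eq_mul, Finset.cast_card_erase_of_mem hP, sectCard,
    Nat.add_sub_cancel]

lemma IsCapFinset.exists_mem_extensionPoints_le [CharP F 2] (hK : IsCapFinset K)
    (hπ : finrank F π = 3) (hP : P ∈ sect K π) (hL : L ∈ tangentLines K P π)
    (h : planeDefect K π * (planeDefect K π - 1) < q) : ∃ X ∈ extensionPoints K π, X ≤ L := by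
  by_contra! hno
  have hP1 := hK.finrank_eq_one P (mem_sect.1 hP).1
  obtain ⟨hPL, hLπ, hL2, htangent⟩ := (mem_tangentLines hP1).1 hL
  have hle : ∀ X ∈ (points L).erase P, (tangentCount K X π : ℤ) ≤ planeDefect K π := by
    intro X hX
    obtain ⟨hXP, hX⟩ := Finset.mem_erase.1 hX
    obtain ⟨hX, hXL⟩ := mem_points.1 hX
    have hXK : X ∉ K := fun h => hXP (htangent X h hXL)
    exact hK.tangentCount_le_planeDefect hπ hX (hXL.trans hLπ) hXK fun hext =>
      hno X (mem_extensionPoints.2 ⟨hX, hXL.trans hLπ, hXK, hext⟩) hXL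
  have hsum := Finset.sum_le_card_nsmul _ _ _ hle
  rw [hK.sum_tangentCount_tangentLine hπ hP hL,
    Finset.card_erase_of_mem (mem_points.2 ⟨hP1, hPL⟩), card_points_of_finrank_eq_two hL2,
    Nat.add_sub_cancel, nsmul_eq_mul] at hsum
  have hsect : sectCard K π = q + 2 - planeDefect K π := by
    rw [planeDefect]
    ring
  rw [hsect] at hsum
  linarith

/-- Adjoin the points one at a time: each point already adjoined spoils at most one tangent
through the next one, and `tangentCount_add_card_sect_le` leaves no room for this. -/
lemma IsCapFinset.union_sect_of_plane [CharP F 2] (hK : IsCapFinset K) (hπ : finrank F π = 3)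
    (h : planeDefect K π < sectCard K π) (hS : S ⊆ extensionPoints K π) :
    IsCapFinset (S ∪ sect K π) := by
  induction S using Finset.induction_on with
  | empty => simpa only [Finset.empty_union] using hK.isCapFinset_sect π
  | insert X S hXS ih =>
    obtain ⟨hXext, hS⟩ := Finset.insert_subset_iff.1 hS
    have hC := ih hS
    obtain ⟨hX, hXπ, hXK, -⟩ := mem_extensionPoints.1 hXext
    rw [Finset.insert_union]
    refine hC.insert hX ?_
    by_contra! hne
    have hsect : sect (S ∪ sect K π) π = S ∪ sect K π :=
      Finset.filter_true_of_mem fun P hP => (Finset.mem_union.1 hP).elim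
        (fun hP => (mem_extensionPoints.1 (hS hP)).2.1) fun hP => (mem_sect.1 hP).2
    have hcount := hC.tangentCount_add_card_sect_le hπ hX hXπ (fun hXC =>
      (Finset.mem_union.1 hXC).elim hXS fun hXs => hXK (mem_sect.1 hXs).1) (hsect.symm ▸ hne)
    have hspoiled := hK.card_filter_not_tangent_union_le hXext hXS
      fun Y hY => hC.finrank_eq_one Y (Finset.mem_union_left _ hY)
    have htangent : {P ∈ sect K π | Tangent (S ∪ sect K π) P X}.card ≤
        tangentCount (S ∪ sect K π) X π := by
      rw [tangentCount, hsect]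
      exact Finset.card_le_card (Finset.filter_subset_filter _ Finset.subset_union_right)
    rw [hsect, Finset.card_union_of_disjoint
      ((disjoint_extensionPoints_sect K π).mono_left hS)] at hcount
    have hsplit := Finset.card_filter_add_card_filter_not (s := sect K π)
      (fun P => Tangent (S ∪ sect K π) P X)
    simp only [planeDefect, sectCard] at h
    omega

lemma IsCapFinset.card_extensionPoints_le [CharP F 2] (hK : IsCapFinset K)
    (hπ : finrank F π = 3) (h : planeDefect K π < sectCard K π) :
    ((extensionPoints K π).card : ℤ) ≤ planeDefect K π := by
  have hC := hK.union_sect_of_plane hπ h subset_rfl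
  have hnonneg := hC.planeDefect_nonneg hπ
  rw [planeDefect, sectCard, sect, Finset.filter_true_of_mem fun P hP =>
    (Finset.mem_union.1 hP).elim (fun hP => (mem_extensionPoints.1 hP).2.1)
      fun hP => (mem_sect.1 hP).2,
    Finset.card_union_of_disjoint (disjoint_extensionPoints_sect K π)] at hnonneg
  rw [planeDefect, sectCard]
  push_cast at hnonneg
  linarith

lemma IsCapFinset.planeDefect_le_card_extensionPoints [CharP F 2] (hK : IsCapFinset K)
    (hπ : finrank F π = 3) (hs : 0 < sectCard K π)
    (h : planeDefect K π * (planeDefect K π - 1) < q) :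
    planeDefect K π ≤ (extensionPoints K π).card := by
  obtain ⟨P, hP⟩ : (sect K π).Nonempty := Finset.card_pos.1 (Nat.cast_pos.1 hs)
  rw [← hK.card_tangentLines_eq_planeDefect hπ hP, Nat.cast_le]
  refine Finset.card_le_card_of_surjOn (P ⊔ ·) fun L hL => ?_
  obtain ⟨X, hX, hXL⟩ := hK.exists_mem_extensionPoints_le hπ hP hL h
  have hP1 := hK.finrank_eq_one P (mem_sect.1 hP).1
  obtain ⟨hPL, -, hL, -⟩ := (mem_tangentLines hP1).1 hL
  obtain ⟨hX1, -, hXK, -⟩ := mem_extensionPoints.1 hX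
  exact ⟨X, hX, line_eq hP1 hX1 (fun h => hXK (h ▸ (mem_sect.1 hP).1)) hL hPL hXL⟩

end PlaneExtensions

/-! ### Solids -/

section PlanesThrough

variable {F : Type*} [Field F] {V : Type*} [AddCommGroup V] [Module F V] [Finite V]
  {K : Finset (Submodule F V)} {A X π m : Submodule F V}

/-- The planes of `A` that contain `X`. -/
noncomputable def planesThrough (X A : Submodule F V) : Finset (Submodule F V) :=
  {π | X ≤ π ∧ π ≤ A ∧ finrank F π = 3}

lemma mem_planesThrough : π ∈ planesThrough X A ↔ X ≤ π ∧ π ≤ A ∧ finrank F π = 3 := by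
  simp [planesThrough]

lemma filter_planesThrough_le (hm : finrank F m = 2) (hXm : X ≤ m) :
    {π ∈ planesThrough X A | m ≤ π} = coversIn m A := by
  ext π
  simp only [Finset.mem_filter, mem_planesThrough, mem_coversIn, hm]
  exact ⟨fun h => ⟨h.2, h.1.2⟩, fun h => ⟨⟨hXm.trans h.1, h.2⟩, h.1⟩⟩

lemma mem_extensionPoints_of_mem_planesThrough (hX : X ∈ extensionPoints K A)
    (hπ : π ∈ planesThrough X A) : X ∈ extensionPoints K π := by
  obtain ⟨hX, -, hXK, hext⟩ := mem_extensionPoints.1 hX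
  obtain ⟨hXπ, hπA, -⟩ := mem_planesThrough.1 hπ
  exact mem_extensionPoints.2 ⟨hX, hXπ, hXK, hext.mono hπA⟩

lemma cast_card_offDiag {α : Type*} (s : Finset α) :
    (s.offDiag.card : ℤ) = s.card * (s.card - 1) := by
  classical
  rw [Finset.offDiag_card, Nat.cast_sub (Nat.le_mul_self _)]
  push_cast
  ring

omit [Finite V] in
lemma sectCard_mul_sub_one (hπ : π ≤ A) : sectCard K π * (sectCard K π - 1) =
    ({p ∈ (sect K A).offDiag | p.1 ≤ π ∧ p.2 ≤ π}.card : ℤ) := by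
  rw [sectCard, ← cast_card_offDiag, ← filter_sect_le hπ]
  congr 2
  ext p
  simp only [Finset.mem_offDiag, Finset.mem_filter]
  tauto

/-- A line joining two points of the section misses `X`, so exactly one plane through `X`
contains both points. -/
lemma IsCapFinset.sum_sectCard_mul_sub_one_planesThrough (hK : IsCapFinset K)
    (hX : X ∈ extensionPoints K A) :
    ∑ π ∈ planesThrough X A, sectCard K π * (sectCard K π - 1) =
      sectCard K A * (sectCard K A - 1) := by
  obtain ⟨hX, hXA, hXK, hext⟩ := mem_extensionPoints.1 hX
  have hpairs : ∀ π ∈ planesThrough X A, sectCard K π * (sectCard K π - 1) =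
      ({p ∈ (sect K A).offDiag | p.1 ≤ π ∧ p.2 ≤ π}.card : ℤ) := fun π hπ =>
    sectCard_mul_sub_one (mem_planesThrough.1 hπ).2.1
  have hplane : ∀ p ∈ (sect K A).offDiag,
      {π ∈ planesThrough X A | p.1 ≤ π ∧ p.2 ≤ π}.card = 1 := by
    rintro ⟨P, R⟩ hp
    obtain ⟨hP, hR, hPR⟩ := Finset.mem_offDiag.1 hp
    obtain ⟨hPK, hPA⟩ := mem_sect.1 hP
    obtain ⟨hRK, hRA⟩ := mem_sect.1 hR
    have hR1 := hK.finrank_eq_one R hRK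
    have hline := finrank_line (hK.finrank_eq_one P hPK) hX fun h => hXK (h ▸ hPK)
    have hRline : ¬R ≤ P ⊔ X := fun h => hPR (hext P hP R hRK h).symm
    refine Finset.card_eq_one.2 ⟨P ⊔ X ⊔ R, ?_⟩
    ext π
    simp only [mem_planesThrough, Finset.mem_filter, Finset.mem_singleton]
    constructor
    · rintro ⟨⟨hXπ, -, hπ⟩, hPπ, hRπ⟩
      exact (sup_point_eq hR1 hRline (sup_le hPπ hXπ) hRπ (by rw [hπ, hline])).symm
    · rintro rfl
      exact ⟨⟨le_sup_right.trans le_sup_left, sup_le (sup_le hPA hXA) hRA,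
        by rw [finrank_sup_point hR1 hRline, hline]⟩, le_sup_left.trans le_sup_left, le_sup_right⟩
  have hcount := Finset.sum_card_bipartiteAbove_eq_sum_card_bipartiteBelow
    (s := planesThrough X A) (t := (sect K A).offDiag) fun π p => p.1 ≤ π ∧ p.2 ≤ π
  rw [Finset.sum_congr rfl hpairs, sectCard, ← cast_card_offDiag, Finset.card_eq_sum_ones,
    ← Finset.sum_congr rfl hplane]
  exact_mod_cast hcount

end PlanesThrough

section Solids

variable {F : Type*} [Field F] [Fintype F] {V : Type*} [AddCommGroup V] [Module F V] [Finite V]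
  {K : Finset (Submodule F V)} {A X P π m : Submodule F V}

local notation "q" => (Fintype.card F : ℤ)

lemma card_planesThrough (hX : finrank F X = 1) (hXA : X ≤ A) (hA : finrank F A = 4) :
    (planesThrough X A).card = Fintype.card F ^ 2 + Fintype.card F + 1 := by
  have hline : ∀ L ∈ coversIn X A, {π ∈ planesThrough X A | L ≤ π}.card =
      Fintype.card F + 1 := by
    intro L hL
    obtain ⟨hXL, hLA, hL⟩ := mem_coversIn.1 hL
    rw [hX] at hL
    rw [filter_planesThrough_le hL hXL, card_coversIn_of_finrank_add_two hLA (by rw [hA, hL])]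
  have hplane : ∀ π ∈ planesThrough X A, {L ∈ coversIn X A | L ≤ π}.card =
      Fintype.card F + 1 := by
    intro π hπ
    obtain ⟨hXπ, hπA, hπ⟩ := mem_planesThrough.1 hπ
    have hfilter : {L ∈ coversIn X A | L ≤ π} = coversIn X π := by
      ext L
      simp only [Finset.mem_filter, mem_coversIn]
      exact ⟨fun h => ⟨h.1.1, h.2, h.1.2.2⟩, fun h => ⟨⟨h.1, h.2.1.trans hπA, h.2.2⟩, h.2.1⟩⟩
    rw [hfilter, card_coversIn_of_finrank_add_two hXπ (by rw [hπ, hX])]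
  have hcount := Finset.card_mul_eq_card_mul _ hline hplane
  rw [card_coversIn_of_finrank_add_three hXA (by rw [hA, hX])] at hcount
  exact (Nat.eq_of_mul_eq_mul_right (Nat.succ_pos _) hcount).symm

lemma IsCapFinset.sum_sectCard_planesThrough (hK : IsCapFinset K) (hX : finrank F X = 1)
    (hXA : X ≤ A) (hXK : X ∉ K) (hA : finrank F A = 4) :
    ∑ π ∈ planesThrough X A, sectCard K π = sectCard K A * (q + 1) := by
  have hpoint : ∀ P ∈ sect K A, {π ∈ planesThrough X A | P ≤ π}.card =
      Fintype.card F + 1 := by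
    intro P hP
    obtain ⟨hPK, hPA⟩ := mem_sect.1 hP
    have hline := finrank_line hX (hK.finrank_eq_one P hPK) fun h => hXK (h ▸ hPK)
    rw [← card_coversIn_of_finrank_add_two (sup_le hXA hPA) (by rw [hA, hline]),
      ← filter_planesThrough_le hline le_sup_left]
    congr 1
    refine Finset.filter_congr fun π hπ => ?_
    rw [sup_le_iff, and_iff_right (mem_planesThrough.1 hπ).1]
  have hcount := Finset.sum_card_bipartiteAbove_eq_sum_card_bipartiteBelow
    (s := planesThrough X A) (t := sect K A) fun π P => P ≤ π
  simp only [Finset.bipartiteAbove, Finset.bipartiteBelow] at hcount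
  rw [Finset.sum_congr rfl hpoint, Finset.sum_const, smul_eq_mul, Finset.sum_congr rfl fun π hπ =>
    congrArg Finset.card (filter_sect_le (mem_planesThrough.1 hπ).2.1)] at hcount
  simp only [sectCard]
  exact_mod_cast hcount

/-- The number of tangents in the solid `A` at each point of the section of the cap `K` by
`A`. -/
noncomputable def solidDefect (K : Finset (Submodule F V)) (A : Submodule F V) : ℤ :=
  q ^ 2 + q + 2 - sectCard K A

lemma IsCapFinset.card_tangentLines_eq_solidDefect (hK : IsCapFinset K) (hA : finrank F A = 4)
    (hP : P ∈ sect K A) : ((tangentLines K P A).card : ℤ) = solidDefect K A := by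
  obtain ⟨hPK, hPA⟩ := mem_sect.1 hP
  have hsum := hK.card_tangentLines_add_card_sect hPK hPA
  rw [card_coversIn_of_finrank_add_three hPA (by rw [hA, hK.finrank_eq_one P hPK])] at hsum
  rw [solidDefect, sectCard]
  push_cast [← @Nat.cast_inj ℤ] at hsum
  linarith

omit [Fintype F] in
lemma tangentLines_mono (h : π ≤ A) : tangentLines K P π ⊆ tangentLines K P A := by
  refine Finset.filter_subset_filter _ fun L hL => ?_
  obtain ⟨hPL, hLπ, hL⟩ := mem_coversIn.1 hL
  exact mem_coversIn.2 ⟨hPL, hLπ.trans h, hL⟩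

/-- Otherwise all planes of `A` would meet `K` in `0` or `q + 2` points, which is impossible for
the planes through a point of `A` off `K`. -/
lemma IsCapFinset.solidDefect_ne_zero (hK : IsCapFinset K) (hA : finrank F A = 4)
    (hq : 3 ≤ Fintype.card F) : solidDefect K A ≠ 0 := by
  intro h
  have hdvd : ∀ X, ∀ π ∈ planesThrough X A, (q + 2) ∣ sectCard K π := by
    intro X π hπ
    obtain ⟨-, hπA, hπ⟩ := mem_planesThrough.1 hπ
    rcases (sect K π).eq_empty_or_nonempty with hempty | ⟨P, hP⟩
    · rw [sectCard, hempty, Finset.card_empty, Nat.cast_zero]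
      exact dvd_zero _
    · have hempty := hK.card_tangentLines_eq_solidDefect hA (sect_mono hπA hP)
      rw [h, Nat.cast_eq_zero, Finset.card_eq_zero] at hempty
      have hπP := hK.card_tangentLines_eq_planeDefect hπ hP
      rw [Finset.subset_empty.1 ((tangentLines_mono hπA).trans hempty.subset),
        Finset.card_empty, Nat.cast_zero, planeDefect] at hπP
      exact (sub_eq_zero.1 hπP.symm) ▸ dvd_rfl
  have hq' : (3 : ℤ) ≤ q := by exact_mod_cast hq
  have hcard : sectCard K A = q ^ 2 + q + 2 := by
    rw [solidDefect] at h
    linarith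
  obtain ⟨X, hXA, hX⟩ : ∃ X ∈ points A, X ∉ sect K A := by
    refine Finset.exists_mem_notMem_of_card_lt_card ?_
    rw [← @Nat.cast_lt ℤ, ← sectCard, hcard, card_points, hA]
    simp only [Finset.sum_range_succ, Finset.sum_range_zero]
    push_cast
    nlinarith
  obtain ⟨hX1, hXA⟩ := mem_points.1 hXA
  have hsum := hK.sum_sectCard_planesThrough hX1 hXA (fun h => hX (mem_sect.2 ⟨h, hXA⟩)) hA
  have hmod : (q + 2) * (q ^ 2 + 3) - sectCard K A * (q + 1) = 4 := by
    rw [hcard]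
    ring
  have hfour := dvd_sub (dvd_mul_right (q + 2) (q ^ 2 + 3)) (hsum ▸ Finset.dvd_sum (hdvd X))
  rw [hmod] at hfour
  linarith [Int.le_of_dvd (by norm_num) hfour]

/-- Some plane through a tangent has defect `1`, and a section of defect `1` is extended by a
point of the tangent. -/
lemma IsCapFinset.exists_planeDefect_eq_one (hK : IsCapFinset K) (hA : finrank F A = 4)
    (hq : 3 ≤ Fintype.card F) (hlarge : q ^ 2 + 1 < sectCard K A) :
    ∃ π, π ≤ A ∧ finrank F π = 3 ∧ planeDefect K π = 1 ∧
      ∃ P ∈ sect K π, (tangentLines K P π).Nonempty := by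
  obtain ⟨P, hP⟩ : (sect K A).Nonempty := by
    rw [← Finset.card_pos, ← Nat.cast_pos (α := ℤ), ← sectCard]
    nlinarith
  have hP1 := hK.finrank_eq_one P (mem_sect.1 hP).1
  obtain ⟨L, hL⟩ : (tangentLines K P A).Nonempty := by
    rw [← Finset.card_ne_zero, ← Nat.cast_ne_zero (R := ℤ),
      hK.card_tangentLines_eq_solidDefect hA hP]
    exact hK.solidDefect_ne_zero hA hq
  obtain ⟨hPL, hLA, hL2, htangent⟩ := (mem_tangentLines hP1).1 hL
  have hsectL : sectCard K L = 1 := by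
    have hsect : sect K L = {P} := by
      ext R
      simp only [mem_sect, Finset.mem_singleton]
      exact ⟨fun hR => htangent R hR.1 hR.2, fun hR => hR ▸ ⟨(mem_sect.1 hP).1, hPL⟩⟩
    rw [sectCard, hsect, Finset.card_singleton, Nat.cast_one]
  have hsum := sum_sectCard hK.finrank_eq_one hLA
  rw [hsectL, card_coversIn_of_finrank_add_two hLA (by rw [hA, hL2])] at hsum
  push_cast at hsum
  have hmem : ∀ π ∈ coversIn L A, L ∈ tangentLines K P π := fun π hπ =>
    (mem_tangentLines hP1).2 ⟨hPL, (mem_coversIn.1 hπ).1, hL2, htangent⟩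
  obtain ⟨π, hπ, hlt⟩ : ∃ π ∈ coversIn L A, q < sectCard K π := by
    by_contra! hle
    have hcard := Finset.sum_le_card_nsmul _ _ _ hle
    rw [hsum, card_coversIn_of_finrank_add_two hLA (by rw [hA, hL2]), nsmul_eq_mul] at hcard
    push_cast at hcard
    nlinarith
  obtain ⟨hLπ, hπA, hπ3⟩ := mem_coversIn.1 hπ
  rw [hL2] at hπ3
  have hPπ : P ∈ sect K π := mem_sect.2 ⟨(mem_sect.1 hP).1, hPL.trans hLπ⟩
  refine ⟨π, hπA, hπ3, le_antisymm ?_ ?_, P, hPπ, L, hmem π hπ⟩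
  · rw [planeDefect]
    linarith
  · rw [← hK.card_tangentLines_eq_planeDefect hπ3 hPπ]
    exact_mod_cast Finset.card_pos.2 ⟨L, hmem π hπ⟩

lemma IsCapFinset.sectCard_le_of_extensionPoints_eq_empty [CharP F 2] (hK : IsCapFinset K)
    (hA : finrank F A = 4) (hq : 3 ≤ Fintype.card F) (hcomplete : extensionPoints K A = ∅) :
    sectCard K A ≤ q ^ 2 + 1 := by
  by_contra! hlarge
  obtain ⟨π, hπA, hπ, hdefect, P, hP, L, hL⟩ := hK.exists_planeDefect_eq_one hA hq hlarge
  obtain ⟨X, hX, -⟩ := hK.exists_mem_extensionPoints_le hπ hP hL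
    (by rw [hdefect, sub_self, mul_zero]; exact_mod_cast Fintype.card_pos)
  obtain ⟨hX1, hXπ, hXK, hext⟩ := mem_extensionPoints.1 hX
  have hXA : X ∉ extensionPoints K A := hcomplete ▸ Finset.notMem_empty X
  rw [mem_extensionPoints] at hXA
  have hle := hK.tangentCount_le_of_not_extends (k := 2) hA hX1 (hXπ.trans hπA) hXK
    fun h => hXA ⟨hX1, hXπ.trans hπA, hXK, h⟩
  have hmono := tangentCount_mono (K := K) (X := X) hπA
  rw [hext.tangentCount_eq] at hmono
  rw [planeDefect] at hdefect
  simp only [Finset.sum_range_succ, Finset.sum_range_zero] at hle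
  linarith

lemma IsCapFinset.sectCard_le_sq_add_one [CharP F 2] (hK : IsCapFinset K)
    (hA : finrank F A = 4) (hq : 3 ≤ Fintype.card F) : sectCard K A ≤ q ^ 2 + 1 := by
  obtain ⟨C, hKC, hC, -, hcomplete⟩ :=
    (hK.isCapFinset_sect A).exists_complete fun P hP => (mem_sect.1 hP).2
  refine le_trans (Nat.cast_le.2 (Finset.card_le_card fun P hP => ?_))
    (hC.sectCard_le_of_extensionPoints_eq_empty hA hq hcomplete)
  exact mem_sect.2 ⟨hKC hP, (mem_sect.1 hP).2⟩

end Solids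

section SolidExtensions

variable {F : Type*} [Field F] [Fintype F] {V : Type*} [AddCommGroup V] [Module F V] [Finite V]
  {K : Finset (Submodule F V)} {A X P π m : Submodule F V}

local notation "q" => (Fintype.card F : ℤ)

lemma IsCapFinset.exists_planeDefect_lt_sectCard (hK : IsCapFinset K) (hA : finrank F A = 4)
    (hm : finrank F m = 2) (hmA : m ≤ A) (hlarge : (q + 1) * (q + 2) < 2 * sectCard K A) :
    ∃ π ∈ coversIn m A, planeDefect K π < sectCard K π := by
  by_contra! hle
  have htwice : ∀ π ∈ coversIn m A, 2 * sectCard K π ≤ q + 2 := by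
    intro π hπ
    have hπ := hle π hπ
    rw [planeDefect] at hπ
    linarith
  have hsum := Finset.sum_le_card_nsmul _ _ _ htwice
  rw [← Finset.mul_sum, sum_sectCard hK.finrank_eq_one hmA,
    card_coversIn_of_finrank_add_two hmA (by rw [hA, hm]), nsmul_eq_mul] at hsum
  push_cast at hsum
  have hnonneg := mul_nonneg (Int.natCast_nonneg (Fintype.card F)) (sectCard_nonneg K m)
  linarith

lemma IsCapFinset.union_sect_of_solid [CharP F 2] (hK : IsCapFinset K) (hA : finrank F A = 4)
    (hlarge : (q + 1) * (q + 2) < 2 * sectCard K A) :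
    IsCapFinset (extensionPoints K A ∪ sect K A) := by
  have hpoints : ∀ P ∈ extensionPoints K A ∪ sect K A, finrank F P = 1 ∧ P ≤ A := fun P hP =>
    (Finset.mem_union.1 hP).elim
      (fun hP => ⟨(mem_extensionPoints.1 hP).1, (mem_extensionPoints.1 hP).2.1⟩)
      fun hP => mem_points.1 (hK.sect_subset_points A hP)
  refine ⟨fun P hP => (hpoints P hP).1, fun m hm => ?_⟩
  by_contra! hlt
  obtain ⟨P, hP, R, hR, hPR⟩ := Finset.one_lt_card.1 (one_lt_two.trans hlt)
  obtain ⟨hP, hPm⟩ := mem_sect.1 hP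
  obtain ⟨hR, hRm⟩ := mem_sect.1 hR
  have hmA : m ≤ A := by
    rw [← line_eq (hpoints P hP).1 (hpoints R hR).1 hPR hm hPm hRm]
    exact sup_le (hpoints P hP).2 (hpoints R hR).2
  obtain ⟨π, hπ, hrich⟩ := hK.exists_planeDefect_lt_sectCard hA hm hmA hlarge
  obtain ⟨hmπ, hπA, hπ⟩ := mem_coversIn.1 hπ
  have hcap := hK.union_sect_of_plane (by rw [hπ, hm]) hrich subset_rfl
  refine hlt.not_ge (le_trans (Finset.card_le_card fun S hS => ?_) (hcap.card_sect_le_two m hm))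
  obtain ⟨hS, hSm⟩ := mem_sect.1 hS
  refine mem_sect.2 ⟨Finset.mem_union.2 ((Finset.mem_union.1 hS).imp (fun hS => ?_) fun hS =>
    mem_sect.2 ⟨(mem_sect.1 hS).1, hSm.trans hmπ⟩), hSm⟩
  obtain ⟨hS, -, hSK, hext⟩ := mem_extensionPoints.1 hS
  exact mem_extensionPoints.2 ⟨hS, hSm.trans hmπ, hSK, hext.mono hπA⟩

lemma IsCapFinset.card_extensionPoints_add_sectCard_le [CharP F 2] (hK : IsCapFinset K)
    (hA : finrank F A = 4) (hq : 3 ≤ Fintype.card F)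
    (hlarge : (q + 1) * (q + 2) < 2 * sectCard K A) :
    ((extensionPoints K A).card : ℤ) + sectCard K A ≤ q ^ 2 + 1 := by
  have hle := (hK.union_sect_of_solid hA hlarge).sectCard_le_sq_add_one hA hq
  have hsect : sect (extensionPoints K A ∪ sect K A) A = extensionPoints K A ∪ sect K A :=
    Finset.filter_true_of_mem fun P hP => (Finset.mem_union.1 hP).elim
      (fun hP => (mem_extensionPoints.1 hP).2.1) fun hP => (mem_sect.1 hP).2
  rw [sectCard, hsect, Finset.card_union_of_disjoint (disjoint_extensionPoints_sect K A)] at hle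
  rw [sectCard]
  exact_mod_cast hle

lemma IsCapFinset.one_le_planeDefect (hK : IsCapFinset K) (hπ : finrank F π = 3)
    (hX : X ∈ extensionPoints K π) : 1 ≤ planeDefect K π := by
  rcases (sect K π).eq_empty_or_nonempty with hempty | ⟨P, hP⟩
  · rw [planeDefect, sectCard, hempty, Finset.card_empty, Nat.cast_zero]
    linarith [Int.natCast_nonneg (Fintype.card F)]
  · rw [← hK.card_tangentLines_eq_planeDefect hπ hP]
    exact_mod_cast Finset.card_pos.2 ⟨_, hK.sup_mem_tangentLines hP hX⟩

lemma IsCapFinset.sum_planeDefect_sub_one (hK : IsCapFinset K) (hA : finrank F A = 4)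
    (hX : X ∈ extensionPoints K A) :
    ∑ π ∈ planesThrough X A, (planeDefect K π - 1) = (q + 1) * (solidDefect K A - 1) := by
  obtain ⟨hX, hXA, hXK, -⟩ := mem_extensionPoints.1 hX
  have hsum := hK.sum_sectCard_planesThrough hX hXA hXK hA
  simp only [planeDefect, Finset.sum_sub_distrib, Finset.sum_const, nsmul_eq_mul,
    card_planesThrough hX hXA hA, hsum, solidDefect]
  push_cast
  ring

lemma IsCapFinset.sum_planeDefect_sub_one_sq (hK : IsCapFinset K) (hA : finrank F A = 4)
    (hX : X ∈ extensionPoints K A) :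
    ∑ π ∈ planesThrough X A, (planeDefect K π - 1) ^ 2 =
      (solidDefect K A - 1) * (solidDefect K A - 1 + q) := by
  have hlinear := hK.sum_planeDefect_sub_one hA hX
  have hpairs := hK.sum_sectCard_mul_sub_one_planesThrough hX
  have hexpand : ∀ π ∈ planesThrough X A, (planeDefect K π - 1) ^ 2 =
      sectCard K π * (sectCard K π - 1) + (2 * q + 1) * (planeDefect K π - 1) - q * (q + 1) := by
    intro π _
    rw [planeDefect]
    ring
  obtain ⟨hX, hXA, -, -⟩ := mem_extensionPoints.1 hX
  rw [Finset.sum_congr rfl hexpand, Finset.sum_sub_distrib, Finset.sum_add_distrib,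
    ← Finset.mul_sum, hlinear, hpairs, Finset.sum_const, nsmul_eq_mul,
    card_planesThrough hX hXA hA, solidDefect]
  push_cast
  ring

/-- The right-hand side minus the left-hand side is `(x + x ^ 2) * w` in the first case, and
`q ≤ 2 * x` in the second. -/
lemma mul_le_ite_of_add_eq {k s x w : ℤ} (hk : 0 < k) (hs : s + x = k + 1) (hx : 0 ≤ x)
    (hw : 0 < x → 0 ≤ w) :
    (k + 1) * ((k - 2 * x) * w) ≤ if x + 1 < s then s * (s - 1) * w else 0 := by
  obtain rfl : s = k + 1 - x := by linarith
  split_ifs with hlt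
  · have hrest : 0 ≤ (x + x ^ 2) * w := by
      rcases hx.eq_or_lt with rfl | hx
      · norm_num
      · exact mul_nonneg (by positivity) (hw hx)
    linarith
  · exact mul_nonpos_of_nonneg_of_nonpos (by linarith)
      (mul_nonpos_of_nonpos_of_nonneg (by linarith) (hw (by linarith)))

lemma IsCapFinset.le_sum_planesThrough_rich (hK : IsCapFinset K) (hA : finrank F A = 4)
    (hX : X ∈ extensionPoints K A) {c : ℤ} (hc : c ≤ 2) :
    (q + 1) * ((q + 2 * (c - 1)) * ((q + 1) * (solidDefect K A - 1)) -
        2 * ((solidDefect K A - 1) * (solidDefect K A - 1 + q)) -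
        (c - 1) * q * (q ^ 2 + q + 1)) ≤
      ∑ π ∈ planesThrough X A with planeDefect K π < sectCard K π,
        sectCard K π * (sectCard K π - 1) * (planeDefect K π - c) := by
  have hplane : ∀ π ∈ planesThrough X A,
      (q + 1) * ((q - 2 * (planeDefect K π - 1)) * (planeDefect K π - c)) ≤
        if planeDefect K π < sectCard K π then
          sectCard K π * (sectCard K π - 1) * (planeDefect K π - c) else 0 := by
    intro π hπ
    have hpos := hK.one_le_planeDefect (mem_planesThrough.1 hπ).2.2
      (mem_extensionPoints_of_mem_planesThrough hX hπ)
    have hle := mul_le_ite_of_add_eq (k := q) (s := sectCard K π) (x := planeDefect K π - 1)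
      (w := planeDefect K π - c) (Int.natCast_pos.2 Fintype.card_pos)
      (by rw [planeDefect]; ring) (by linarith) (fun h => by linarith)
    rwa [sub_add_cancel] at hle
  have hexpand : ∀ π ∈ planesThrough X A,
      (q + 1) * ((q - 2 * (planeDefect K π - 1)) * (planeDefect K π - c)) =
        (q + 1) * ((q + 2 * (c - 1)) * (planeDefect K π - 1) - 2 * (planeDefect K π - 1) ^ 2 -
          (c - 1) * q) := fun π _ => by ring
  have hsum := Finset.sum_le_sum hplane
  rw [Finset.sum_congr rfl hexpand, ← Finset.mul_sum, Finset.sum_sub_distrib,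
    Finset.sum_sub_distrib, ← Finset.mul_sum, ← Finset.mul_sum, hK.sum_planeDefect_sub_one hA hX,
    hK.sum_planeDefect_sub_one_sq hA hX, Finset.sum_const, nsmul_eq_mul,
    card_planesThrough (mem_extensionPoints.1 hX).1 (mem_extensionPoints.1 hX).2.1 hA] at hsum
  rw [Finset.sum_filter]
  refine le_of_eq_of_le ?_ hsum
  push_cast
  ring

end SolidExtensions

/-! ### Caps in a projective 4-space -/

section PlaneCounts

variable {F : Type*} [Field F] {V : Type*} [AddCommGroup V] [Module F V] [Finite V]
  {K : Finset (Submodule F V)} {A P R W X π : Submodule F V}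

/-- The planes of `W`. -/
noncomputable def planes (W : Submodule F V) : Finset (Submodule F V) :=
  {π | π ≤ W ∧ finrank F π = 3}

/-- The solids of `W`. -/
noncomputable def solids (W : Submodule F V) : Finset (Submodule F V) :=
  {A | A ≤ W ∧ finrank F A = 4}

/-- The points of `W` outside `K`. -/
noncomputable def offPoints (K : Finset (Submodule F V)) (W : Submodule F V) :
    Finset (Submodule F V) :=
  {X ∈ points W | X ∉ K}

lemma mem_planes : π ∈ planes W ↔ π ≤ W ∧ finrank F π = 3 := by simp [planes]

lemma mem_solids : A ∈ solids W ↔ A ≤ W ∧ finrank F A = 4 := by simp [solids]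

lemma mem_offPoints : X ∈ offPoints K W ↔ finrank F X = 1 ∧ X ≤ W ∧ X ∉ K := by
  simp [offPoints, mem_points, and_assoc]

lemma IsCapFinset.sum_planes_mul_eq (hK : IsCapFinset K) (W : Submodule F V)
    (f : Submodule F V → ℤ) :
    ∑ π ∈ planes W, sectCard K π * (sectCard K π - 1) * f π =
      ∑ p ∈ (sect K W).offDiag, ∑ π ∈ coversIn (p.1 ⊔ p.2) W, f π := by
  have hpairs : ∀ π ∈ planes W, sectCard K π * (sectCard K π - 1) * f π =
      ∑ p ∈ (sect K W).offDiag with p.1 ≤ π ∧ p.2 ≤ π, f π := fun π hπ => by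
    rw [sectCard_mul_sub_one (mem_planes.1 hπ).1, Finset.sum_const, nsmul_eq_mul]
  rw [Finset.sum_congr rfl hpairs]
  refine Finset.sum_comm' fun π p => ?_
  simp only [Finset.mem_filter, mem_planes, mem_coversIn, sup_le_iff]
  have hline (hp : p ∈ (sect K W).offDiag) : finrank F ↥(p.1 ⊔ p.2) = 2 :=
    have hp := Finset.mem_offDiag.1 hp
    finrank_line (hK.finrank_eq_one _ (mem_sect.1 hp.1).1)
      (hK.finrank_eq_one _ (mem_sect.1 hp.2.1).1) hp.2.2
  exact ⟨fun ⟨⟨hπW, hπ⟩, hp, hle⟩ => ⟨⟨hle, hπW, by rw [hπ, hline hp]⟩, hp⟩,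
    fun ⟨⟨hle, hπW, hπ⟩, hp⟩ => ⟨⟨hπW, by rw [hπ, hline hp]⟩, hp, hle⟩⟩

lemma IsCapFinset.sum_planes_mul_of_forall_secant (hK : IsCapFinset K) (W : Submodule F V)
    (f : Submodule F V → ℤ) (c : ℤ)
    (h : ∀ m ≤ W, finrank F m = 2 → sectCard K m = 2 → ∑ π ∈ coversIn m W, f π = c) :
    ∑ π ∈ planes W, sectCard K π * (sectCard K π - 1) * f π =
      sectCard K W * (sectCard K W - 1) * c := by
  rw [hK.sum_planes_mul_eq, sectCard, ← cast_card_offDiag, ← nsmul_eq_mul, ← Finset.sum_const]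
  refine Finset.sum_congr rfl fun p hp => ?_
  obtain ⟨hP, hR, hPR⟩ := Finset.mem_offDiag.1 hp
  obtain ⟨⟨hPK, hPW⟩, hRK, hRW⟩ := And.intro (mem_sect.1 hP) (mem_sect.1 hR)
  exact h _ (sup_le hPW hRW)
    (finrank_line (hK.finrank_eq_one _ hPK) (hK.finrank_eq_one _ hRK) hPR)
    (hK.sectCard_sup hPK hRK hPR)

lemma IsCapFinset.le_sum_planes_mul_of_forall_secant (hK : IsCapFinset K) (W : Submodule F V)
    (f : Submodule F V → ℤ) (c : ℤ)
    (h : ∀ m ≤ W, finrank F m = 2 → sectCard K m = 2 → c ≤ ∑ π ∈ coversIn m W, f π) :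
    sectCard K W * (sectCard K W - 1) * c ≤
      ∑ π ∈ planes W, sectCard K π * (sectCard K π - 1) * f π := by
  rw [hK.sum_planes_mul_eq, sectCard, ← cast_card_offDiag, ← nsmul_eq_mul, ← Finset.sum_const]
  refine Finset.sum_le_sum fun p hp => ?_
  obtain ⟨hP, hR, hPR⟩ := Finset.mem_offDiag.1 hp
  obtain ⟨⟨hPK, hPW⟩, hRK, hRW⟩ := And.intro (mem_sect.1 hP) (mem_sect.1 hR)
  exact h _ (sup_le hPW hRW)
    (finrank_line (hK.finrank_eq_one _ hPK) (hK.finrank_eq_one _ hRK) hPR)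
    (hK.sectCard_sup hPK hRK hPR)

lemma IsCapFinset.not_le_sup_of_tangent (hK : IsCapFinset K) (hP : P ∈ K) (hR : R ∈ K)
    (hPR : P ≠ R) (hX : finrank F X = 1) (hPX : Tangent K P X) (hRX : Tangent K R X) :
    ¬X ≤ P ⊔ R := by
  intro hle
  have hP1 := hK.finrank_eq_one P hP
  have hPX_ne : P ≠ X := by
    rintro rfl
    exact hPR (hRX P hP le_sup_right)
  have hline := line_eq hP1 hX hPX_ne (finrank_line hP1 (hK.finrank_eq_one R hR) hPR)
    le_sup_left hle
  exact hPR (hPX R hR (hline ▸ le_sup_right)).symm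

omit [Finite V] in
lemma notMem_of_tangent_of_tangent (hPR : P ≠ R) (hPX : Tangent K P X) (hRX : Tangent K R X) :
    X ∉ K := fun hX =>
  hPR ((hPX X hX le_sup_right).symm.trans (hRX X hX le_sup_right))

/-- Two points of the section span a line missing `X`, so they lie in at most one plane
through `X`. -/
lemma IsCapFinset.sum_le_tangentCount_sq (hK : IsCapFinset K) {S : Finset (Submodule F V)}
    (hS : S ⊆ planes W) (hX : ∀ π ∈ S, X ∈ extensionPoints K π) :
    ∑ π ∈ S, sectCard K π * (sectCard K π - 1) ≤ (tangentCount K X W : ℤ) ^ 2 := by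
  have hpairs : ∀ π ∈ S, sectCard K π * (sectCard K π - 1) = ((sect K π).offDiag.card : ℤ) :=
    fun π _ => (cast_card_offDiag _).symm
  have hdisjoint : (S : Set (Submodule F V)).PairwiseDisjoint fun π => (sect K π).offDiag := by
    intro π hπ π' hπ' hne
    rw [Function.onFun, Finset.disjoint_left]
    rintro ⟨P, R⟩ h h'
    obtain ⟨hP, hR, hPR⟩ := Finset.mem_offDiag.1 h
    obtain ⟨hP', hR', -⟩ := Finset.mem_offDiag.1 h'
    obtain ⟨hX1, hXπ, -, hext⟩ := mem_extensionPoints.1 (hX π hπ)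
    have hXπ' := (mem_extensionPoints.1 (hX π' hπ')).2.1
    obtain ⟨⟨hPK, hPπ⟩, hRK, hRπ⟩ := And.intro (mem_sect.1 hP) (mem_sect.1 hR)
    have hline := finrank_line (hK.finrank_eq_one P hPK) (hK.finrank_eq_one R hRK) hPR
    have hnot := hK.not_le_sup_of_tangent hPK hRK hPR hX1 (hext P hP) (hext R hR)
    refine hne (Eq.trans (Eq.symm ?_) (?_ : P ⊔ R ⊔ X = π'))
    · exact sup_point_eq hX1 hnot (sup_le hPπ hRπ) hXπ
        (by rw [hline, (mem_planes.1 (hS hπ)).2])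
    · exact sup_point_eq hX1 hnot (sup_le (mem_sect.1 hP').2 (mem_sect.1 hR').2) hXπ'
        (by rw [hline, (mem_planes.1 (hS hπ')).2])
  have hsubset : (S.biUnion fun π => (sect K π).offDiag) ⊆
      {P ∈ sect K W | Tangent K P X} ×ˢ {P ∈ sect K W | Tangent K P X} := by
    refine Finset.biUnion_subset.2 fun π hπ p hp => ?_
    have hsect {P} (hP : P ∈ sect K π) : P ∈ {P ∈ sect K W | Tangent K P X} :=
      Finset.mem_filter.2 ⟨sect_mono (mem_planes.1 (hS hπ)).1 hP,
        (mem_extensionPoints.1 (hX π hπ)).2.2.2 P hP⟩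
    obtain ⟨hP, hR, -⟩ := Finset.mem_offDiag.1 hp
    exact Finset.mem_product.2 ⟨hsect hP, hsect hR⟩
  have hcard := Finset.card_le_card hsubset
  rw [Finset.card_biUnion hdisjoint, Finset.card_product, ← sq] at hcard
  rw [Finset.sum_congr rfl hpairs]
  exact_mod_cast hcard

end PlaneCounts

section FourSpace

variable {F : Type*} [Field F] [Fintype F] {V : Type*} [AddCommGroup V] [Module F V] [Finite V]
  {K : Finset (Submodule F V)} {W : Submodule F V}

local notation "q" => (Fintype.card F : ℤ)

/-- The number of tangents in the projective 4-space `W` at each point of the section of the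
cap `K` by `W`. -/
noncomputable def fourSpaceDefect (K : Finset (Submodule F V)) (W : Submodule F V) : ℤ :=
  q ^ 3 + q ^ 2 + q + 2 - sectCard K W

lemma IsCapFinset.card_tangentLines_eq_fourSpaceDefect (hK : IsCapFinset K)
    (hW : finrank F W = 5) {P : Submodule F V} (hP : P ∈ sect K W) :
    ((tangentLines K P W).card : ℤ) = fourSpaceDefect K W := by
  obtain ⟨hPK, hPW⟩ := mem_sect.1 hP
  have hsum := hK.card_tangentLines_add_card_sect hPK hPW
  rw [card_coversIn_of_finrank_add_four hPW (by rw [hW, hK.finrank_eq_one P hPK])] at hsum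
  rw [fourSpaceDefect, sectCard]
  push_cast [← @Nat.cast_inj ℤ] at hsum
  linarith

lemma sum_solids_sum_planes (hW : finrank F W = 5) (f : Submodule F V → ℤ) :
    ∑ A ∈ solids W, ∑ π ∈ planes A, f π = (q + 1) * ∑ π ∈ planes W, f π := by
  rw [Finset.sum_comm' (t' := planes W) (s' := fun π => coversIn π W), Finset.mul_sum]
  · refine Finset.sum_congr rfl fun π hπ => ?_
    obtain ⟨hπW, hπ⟩ := mem_planes.1 hπ
    rw [Finset.sum_const, card_coversIn_of_finrank_add_two hπW (by rw [hW, hπ]), nsmul_eq_mul]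
    push_cast
    rfl
  · intro A π
    simp only [mem_solids, mem_planes, mem_coversIn]
    exact ⟨fun ⟨⟨hAW, hA⟩, hπA, hπ⟩ => ⟨⟨hπA, hAW, by rw [hA, hπ]⟩, hπA.trans hAW, hπ⟩,
      fun ⟨⟨hπA, hAW, hA⟩, _, hπ⟩ => ⟨⟨hAW, by rw [hA, hπ]⟩, hπA, hπ⟩⟩

lemma IsCapFinset.sum_planes_mul_sub_one (hK : IsCapFinset K) (hW : finrank F W = 5) :
    ∑ π ∈ planes W, sectCard K π * (sectCard K π - 1) =
      sectCard K W * (sectCard K W - 1) * (q ^ 2 + q + 1) := by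
  have hsum := hK.sum_planes_mul_of_forall_secant W (fun _ => 1) (q ^ 2 + q + 1)
    fun m hmW hm _ => by
      rw [Finset.sum_const, card_coversIn_of_finrank_add_three hmW (by rw [hW, hm])]
      simp
  simpa only [mul_one] using hsum

lemma IsCapFinset.sum_planes_mul_planeDefect (hK : IsCapFinset K) (hW : finrank F W = 5) :
    ∑ π ∈ planes W, sectCard K π * (sectCard K π - 1) * planeDefect K π =
      sectCard K W * (sectCard K W - 1) * fourSpaceDefect K W := by
  refine hK.sum_planes_mul_of_forall_secant W _ _ fun m hmW hm hs => ?_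
  rw [hK.sum_planeDefect hmW hs, card_coversIn_of_finrank_add_three hmW (by rw [hW, hm]),
    fourSpaceDefect]
  push_cast
  ring

lemma IsCapFinset.card_offPoints (hK : IsCapFinset K) (hW : finrank F W = 5) :
    ((offPoints K W).card : ℤ) = q ^ 4 + q ^ 3 + q ^ 2 + q + 1 - sectCard K W := by
  have hsdiff : offPoints K W = points W \ sect K W := by
    ext X
    simp only [mem_offPoints, Finset.mem_sdiff, mem_points, mem_sect]
    tauto
  rw [hsdiff, Finset.cast_card_sdiff (hK.sect_subset_points W), card_points, hW, sectCard]
  simp only [Finset.sum_range_succ, Finset.sum_range_zero]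
  push_cast
  ring

lemma IsCapFinset.sum_tangentCount_offPoints (hK : IsCapFinset K) (hW : finrank F W = 5) :
    ∑ X ∈ offPoints K W, (tangentCount K X W : ℤ) =
      sectCard K W * (q * fourSpaceDefect K W) := by
  have hpoint : ∀ P ∈ sect K W, ({X ∈ offPoints K W | Tangent K P X}.card : ℤ) =
      q * fourSpaceDefect K W := by
    intro P hP
    rw [← hK.card_tangentLines_eq_fourSpaceDefect hW hP, offPoints, Finset.filter_filter]
    simp only [and_comm (a := _ ∉ K)]
    exact_mod_cast hK.card_filter_points_tangent_and_notMem hP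
  have hcount := Finset.sum_card_bipartiteAbove_eq_sum_card_bipartiteBelow
    (s := offPoints K W) (t := sect K W) fun X P => Tangent K P X
  simp only [tangentCount]
  simp only [Finset.bipartiteAbove, Finset.bipartiteBelow] at hcount
  rw [← Nat.cast_sum, hcount, Nat.cast_sum, Finset.sum_congr rfl hpoint,
    Finset.sum_const, nsmul_eq_mul, sectCard]

lemma IsCapFinset.card_offPoints_tangent_and_tangent (hK : IsCapFinset K)
    {P R : Submodule F V} (hP : P ∈ sect K W) (hR : R ∈ sect K W) (hPR : P ≠ R) :
    ({X ∈ offPoints K W | Tangent K P X ∧ Tangent K R X}.card : ℤ) =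
      ∑ π ∈ coversIn (P ⊔ R) W, planeDefect K π ^ 2 := by
  obtain ⟨⟨hPK, hPW⟩, hRK, hRW⟩ := And.intro (mem_sect.1 hP) (mem_sect.1 hR)
  have hline := finrank_line (hK.finrank_eq_one P hPK) (hK.finrank_eq_one R hRK) hPR
  set S : Finset (Submodule F V) := {X ∈ offPoints K W | Tangent K P X ∧ Tangent K R X} with hS
  have hmem {X : Submodule F V} :
      X ∈ S ↔ (finrank F X = 1 ∧ X ≤ W ∧ X ∉ K) ∧ Tangent K P X ∧ Tangent K R X := by
    rw [hS, Finset.mem_filter, mem_offPoints]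
  have hnot {X : Submodule F V} (hX : finrank F X = 1) (hPX : Tangent K P X) (hRX : Tangent K R X) :
      ¬X ≤ P ⊔ R := hK.not_le_sup_of_tangent hPK hRK hPR hX hPX hRX
  have hall : {X ∈ S | X ≤ W ∧ ¬X ≤ P ⊔ R} = S := Finset.filter_true_of_mem fun X hX => by
    obtain ⟨⟨hX, hXW, -⟩, hPX, hRX⟩ := hmem.1 hX
    exact ⟨hXW, hnot hX hPX hRX⟩
  have hsum := sum_card_filter_coversIn (fun X hX => (hmem.1 hX).1.1) (sup_le hPW hRW) (S := S)
  rw [← hall, ← hsum, Nat.cast_sum]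
  refine Finset.sum_congr rfl fun π hπ => ?_
  obtain ⟨hle, hπW, hπ⟩ := mem_coversIn.1 hπ
  rw [← hK.card_filter_points_tangent_and_tangent (by rw [hπ, hline])
    (mem_sect.2 ⟨hPK, le_sup_left.trans hle⟩) (mem_sect.2 ⟨hRK, le_sup_right.trans hle⟩) hPR]
  refine congrArg _ (congrArg _ (Finset.ext fun X => ?_))
  simp only [Finset.mem_filter, hmem, mem_points]
  exact ⟨fun ⟨⟨⟨hX, _, _⟩, htangent⟩, hXπ, _⟩ => ⟨⟨hX, hXπ⟩, htangent⟩,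
    fun ⟨⟨hX, hXπ⟩, hPX, hRX⟩ => ⟨⟨⟨hX, hXπ.trans hπW, notMem_of_tangent_of_tangent hPR hPX hRX⟩,
      hPX, hRX⟩, hXπ, hnot hX hPX hRX⟩⟩

lemma IsCapFinset.sum_tangentCount_mul_sub_one (hK : IsCapFinset K) (W : Submodule F V) :
    ∑ X ∈ offPoints K W, (tangentCount K X W : ℤ) * (tangentCount K X W - 1) =
      ∑ π ∈ planes W, sectCard K π * (sectCard K π - 1) * planeDefect K π ^ 2 := by
  have hpairs : ∀ X ∈ offPoints K W, (tangentCount K X W : ℤ) * (tangentCount K X W - 1) =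
      ({p ∈ (sect K W).offDiag | Tangent K p.1 X ∧ Tangent K p.2 X}.card : ℤ) := by
    intro X _
    rw [tangentCount, ← cast_card_offDiag]
    congr 2
    ext p
    simp only [Finset.mem_offDiag, Finset.mem_filter]
    tauto
  have hcount := Finset.sum_card_bipartiteAbove_eq_sum_card_bipartiteBelow
    (s := offPoints K W) (t := (sect K W).offDiag) fun X p => Tangent K p.1 X ∧ Tangent K p.2 X
  rw [hK.sum_planes_mul_eq, Finset.sum_congr rfl hpairs, ← Nat.cast_sum]
  refine (congrArg Nat.cast hcount).trans ?_
  rw [Nat.cast_sum]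
  refine Finset.sum_congr rfl fun p hp => ?_
  obtain ⟨hP, hR, hPR⟩ := Finset.mem_offDiag.1 hp
  exact hK.card_offPoints_tangent_and_tangent hP hR hPR

end FourSpace

section FiniteSums

variable {ι α : Type*}

lemma sum_le_of_pos_unique {s : Finset ι} {f : ι → ℤ} {c : ℤ} (hc : 0 ≤ c)
    (h : ∀ i ∈ s, 0 < f i → f i ≤ c)
    (hunique : ∀ i ∈ s, ∀ j ∈ s, 0 < f i → 0 < f j → i = j) : ∑ i ∈ s, f i ≤ c := by
  classical
  by_cases hpos : ∃ i ∈ s, 0 < f i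
  · obtain ⟨i, hi, hfi⟩ := hpos
    rw [← Finset.add_sum_erase s f hi]
    refine add_le_of_le_of_nonpos (h i hi hfi) (Finset.sum_nonpos fun j hj => ?_)
    obtain ⟨hne, hj⟩ := Finset.mem_erase.1 hj
    exact not_lt.1 fun hfj => hne (hunique j hj i hi hfj hfi)
  · push Not at hpos
    exact (Finset.sum_nonpos hpos).trans hc

lemma sum_le_sum_sum {s : Finset α} {S : Finset ι} {t : ι → Finset α} {f : α → ℤ}
    (hf : ∀ b, 0 ≤ f b) (h : ∀ b ∈ s, ∃ a ∈ S, b ∈ t a) :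
    ∑ b ∈ s, f b ≤ ∑ a ∈ S, ∑ b ∈ t a, f b := by
  classical
  calc ∑ b ∈ s, f b ≤ ∑ b ∈ s, ∑ a ∈ S with b ∈ t a, f b := Finset.sum_le_sum fun b hb => by
        obtain ⟨a, ha, hba⟩ := h b hb
        exact Finset.single_le_sum (f := fun _ => f b) (fun _ _ => hf b)
          (Finset.mem_filter.2 ⟨ha, hba⟩)
    _ = ∑ a ∈ S, ∑ b ∈ s with b ∈ t a, f b := Finset.sum_comm' fun b a => by
        simp only [Finset.mem_filter]
        tauto
    _ ≤ ∑ a ∈ S, ∑ b ∈ t a, f b := Finset.sum_le_sum fun a _ =>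
        Finset.sum_le_sum_of_subset_of_nonneg (fun b hb => (Finset.mem_filter.1 hb).2)
          fun b _ _ => hf b

lemma card_mul_sub_sq_mul_le_card_biUnion [DecidableEq α] {s : Finset ι} {t : ι → Finset α}
    {a b : ℤ} (hb : 0 ≤ b) (ht : ∀ i ∈ s, a ≤ (t i).card)
    (hinter : ∀ i ∈ s, ∀ j ∈ s, i ≠ j → ((t i ∩ t j).card : ℤ) ≤ b) :
    s.card * a - s.card ^ 2 * b ≤ (s.biUnion t).card := by
  classical
  induction s using Finset.induction_on with
  | empty => simp
  | insert i s his ih =>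
    have hs := ih (fun j hj => ht j (Finset.mem_insert_of_mem hj)) fun j hj k hk =>
      hinter j (Finset.mem_insert_of_mem hj) k (Finset.mem_insert_of_mem hk)
    have hi := ht i (Finset.mem_insert_self i s)
    have hoverlap : ((t i ∩ s.biUnion t).card : ℤ) ≤ s.card * b := by
      rw [Finset.inter_biUnion, ← nsmul_eq_mul]
      refine le_trans (by exact_mod_cast Finset.card_biUnion_le)
        (Finset.sum_le_card_nsmul s (fun j => ((t i ∩ t j).card : ℤ)) b fun j hj => ?_)
      exact hinter i (Finset.mem_insert_self i s) j (Finset.mem_insert_of_mem hj)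
        fun hij => his (hij ▸ hj)
    have hunion := congrArg (Nat.cast (R := ℤ))
      (Finset.card_union_add_card_inter (t i) (s.biUnion t))
    push_cast at hunion
    rw [Finset.biUnion_insert, Finset.card_insert_of_notMem his]
    push_cast
    nlinarith [mul_nonneg (Nat.cast_nonneg (α := ℤ) s.card) hb]

end FiniteSums

section Covering

variable {F : Type*} [Field F] [Fintype F] {V : Type*} [AddCommGroup V] [Module F V] [Finite V]
  {K : Finset (Submodule F V)} {A A' W X π : Submodule F V}

local notation "q" => (Fintype.card F : ℤ)

/-- The planes of `W` to which `X` extends the cap `K` and whose section is close in size to a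
hyperoval, which has defect `0`. -/
noncomputable def nearHyperovalPlanes (K : Finset (Submodule F V)) (X W : Submodule F V) :
    Finset (Submodule F V) :=
  {π ∈ planes W | X ∈ extensionPoints K π ∧ planeDefect K π * (planeDefect K π - 1) < q}

/-- The solids of `W` to which `X` extends the cap `K` and whose section is close in size to an
ovoid, which has defect `q + 1`. -/
noncomputable def nearOvoidSolids (K : Finset (Submodule F V)) (X W : Submodule F V) :
    Finset (Submodule F V) :=
  {A ∈ solids W | X ∈ extensionPoints K A ∧ 8 * solidDefect K A ≤ q ^ 2}

/-- The solids of `W` to which `X` extends the cap `K` and whose section is larger than about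
half an ovoid. -/
noncomputable def halfOvoidSolids (K : Finset (Submodule F V)) (X W : Submodule F V) :
    Finset (Submodule F V) :=
  {A ∈ solids W | X ∈ extensionPoints K A ∧ solidDefect K A < sectCard K A}

lemma mem_nearHyperovalPlanes : π ∈ nearHyperovalPlanes K X W ↔ (π ≤ W ∧ finrank F π = 3) ∧
    X ∈ extensionPoints K π ∧ planeDefect K π * (planeDefect K π - 1) < q := by
  simp [nearHyperovalPlanes, mem_planes]

lemma mem_nearOvoidSolids : A ∈ nearOvoidSolids K X W ↔ (A ≤ W ∧ finrank F A = 4) ∧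
    X ∈ extensionPoints K A ∧ 8 * solidDefect K A ≤ q ^ 2 := by
  simp [nearOvoidSolids, mem_solids]

lemma mem_halfOvoidSolids : A ∈ halfOvoidSolids K X W ↔ (A ≤ W ∧ finrank F A = 4) ∧
    X ∈ extensionPoints K A ∧ solidDefect K A < sectCard K A := by
  simp [halfOvoidSolids, mem_solids]

lemma IsCapFinset.sectCard_le_of_plane (hK : IsCapFinset K) (hπ : finrank F π = 3) :
    sectCard K π ≤ q + 2 := by
  have h := hK.planeDefect_nonneg hπ
  rw [planeDefect] at h
  linarith

omit [Fintype F] [Finite V] in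
lemma sectCard_mul_sub_one_nonneg (K : Finset (Submodule F V)) (M : Submodule F V) :
    0 ≤ sectCard K M * (sectCard K M - 1) := by
  rw [sectCard, ← cast_card_offDiag]
  exact Int.natCast_nonneg _

omit [Fintype F] in
lemma finrank_inf_lt (hA : finrank F A = finrank F A') (hne : A ≠ A') :
    finrank F ↥(A ⊓ A') < finrank F A := by
  refine Submodule.finrank_lt_finrank_of_lt (inf_lt_left.2 fun hle => hne ?_)
  exact Submodule.eq_of_le_of_finrank_eq hle hA

omit [Fintype F] in
lemma eq_inf_of_le_of_le (hA : finrank F A = finrank F π + 1) (hA' : finrank F A' = finrank F π + 1)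
    (hne : A ≠ A') (hle : π ≤ A) (hle' : π ≤ A') : π = A ⊓ A' := by
  have hlt := finrank_inf_lt (hA.trans hA'.symm) hne
  exact Submodule.eq_of_le_of_finrank_le (le_inf hle hle') (by omega)

lemma IsCapFinset.sectCard_inf_le (hK : IsCapFinset K) (hW : finrank F W = 5) (hA : A ∈ solids W)
    (hA' : A' ∈ solids W) (hne : A ≠ A') : sectCard K (A ⊓ A') ≤ q + 2 := by
  obtain ⟨⟨hAW, hA⟩, hAW', hA'⟩ := And.intro (mem_solids.1 hA) (mem_solids.1 hA')
  have hlt := finrank_inf_lt (hA.trans hA'.symm) hne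
  have hsup := Submodule.finrank_mono (sup_le hAW hAW')
  have hadd := Submodule.finrank_sup_add_finrank_inf_eq A A'
  exact hK.sectCard_le_of_plane (by omega)

/-- Each of these solids adds at least `7 * q ^ 2 / 8` tangents to those met in `π`. -/
lemma IsCapFinset.card_filter_nearOvoidSolids_le_two (hK : IsCapFinset K) (hπ : π ∈ planes W)
    (hX : X ∈ extensionPoints K π) (hτ : 8 * (tangentCount K X W : ℤ) < 21 * q ^ 2) :
    {A ∈ nearOvoidSolids K X W | π ≤ A}.card ≤ 2 := by
  obtain ⟨hπW, hπ⟩ := mem_planes.1 hπ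
  have hsubset : {A ∈ nearOvoidSolids K X W | π ≤ A} ⊆ coversIn π W := by
    intro A hA
    obtain ⟨hA, hπA⟩ := Finset.mem_filter.1 hA
    obtain ⟨⟨hAW, hA⟩, -⟩ := mem_nearOvoidSolids.1 hA
    exact mem_coversIn.2 ⟨hπA, hAW, by rw [hA, hπ]⟩
  have hgain : ∀ A ∈ nearOvoidSolids K X W,
      7 * q ^ 2 ≤ 8 * ((tangentCount K X A : ℤ) - tangentCount K X π) := by
    intro A hA
    obtain ⟨-, hXA, hdefect⟩ := mem_nearOvoidSolids.1 hA
    rw [(mem_extensionPoints.1 hXA).2.2.2.tangentCount_eq,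
      (mem_extensionPoints.1 hX).2.2.2.tangentCount_eq]
    rw [solidDefect] at hdefect
    linarith [hK.sectCard_le_of_plane hπ]
  have htotal : ∑ A ∈ nearOvoidSolids K X W with π ≤ A, 7 * q ^ 2 ≤
      8 * ((tangentCount K X W : ℤ) - tangentCount K X π) := by
    rw [← hK.sum_tangentCount_sub X hπW, Finset.mul_sum]
    refine (Finset.sum_le_sum fun A hA => hgain A (Finset.mem_filter.1 hA).1).trans
      (Finset.sum_le_sum_of_subset_of_nonneg hsubset fun A hA _ => ?_)
    linarith [tangentCount_mono (K := K) (X := X) (mem_coversIn.1 hA).1]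
  rw [Finset.sum_const, nsmul_eq_mul] at htotal
  by_contra! hcard
  have hcard : (3 : ℤ) ≤ ({A ∈ nearOvoidSolids K X W | π ≤ A}.card : ℤ) := by exact_mod_cast hcard
  nlinarith [hcard, sq_nonneg q, Int.natCast_nonneg (tangentCount K X π)]

lemma IsCapFinset.card_halfOvoidSolids_le_six (hK : IsCapFinset K) (hW : finrank F W = 5)
    (hq : 2048 ≤ q) (hτ : 8 * (tangentCount K X W : ℤ) < 21 * q ^ 2) :
    (halfOvoidSolids K X W).card ≤ 6 := by
  by_contra! hcard
  obtain ⟨S, hS, hS7⟩ := Finset.exists_subset_card_eq (show 7 ≤ (halfOvoidSolids K X W).card by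
    omega)
  obtain ⟨a, ha, ha'⟩ : ∃ a : ℤ, q ^ 2 + q + 1 ≤ 2 * a ∧ 2 * a ≤ q ^ 2 + q + 2 :=
    ⟨(q ^ 2 + q + 2) / 2, by omega, by omega⟩
  have hunion := card_mul_sub_sq_mul_le_card_biUnion (s := S) (t := sect K) (a := a) (b := q + 2)
    (by positivity) (fun A hA => ?_) fun A hA A' hA' hne => ?_
  · have hsubset : S.biUnion (sect K) ⊆ {P ∈ sect K W | Tangent K P X} :=
      Finset.biUnion_subset.2 fun A hA P hP => by
        obtain ⟨⟨hAW, -⟩, hXA, -⟩ := mem_halfOvoidSolids.1 (hS hA)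
        exact Finset.mem_filter.2 ⟨sect_mono hAW hP, (mem_extensionPoints.1 hXA).2.2.2 P hP⟩
    have hle : ((S.biUnion (sect K)).card : ℤ) ≤ tangentCount K X W := by
      exact_mod_cast Finset.card_le_card hsubset
    rw [hS7] at hunion
    push_cast at hunion
    nlinarith
  · obtain ⟨-, -, hlt⟩ := mem_halfOvoidSolids.1 (hS hA)
    rw [solidDefect] at hlt
    change a ≤ sectCard K A
    linarith
  · have hinf : sect K A ∩ sect K A' = sect K (A ⊓ A') := by
      ext P
      simp only [Finset.mem_inter, mem_sect, le_inf_iff]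
      tauto
    rw [hinf]
    exact hK.sectCard_inf_le hW (mem_solids.2 (mem_halfOvoidSolids.1 (hS hA)).1)
      (mem_solids.2 (mem_halfOvoidSolids.1 (hS hA')).1) hne

omit [Finite V] in
lemma mul_planeDefect_le (hq : 2048 ≤ q) (h : planeDefect K π * (planeDefect K π - 1) < q) :
    41 * planeDefect K π ≤ q := by
  by_contra! hlt
  nlinarith

lemma IsCapFinset.sum_tangentCount_sub_solidDefect (hK : IsCapFinset K) (hW : finrank F W = 5)
    (hπ : π ∈ planes W) (hX : X ∈ extensionPoints K π) :
    ∑ A ∈ coversIn π W, ((tangentCount K X A : ℤ) - solidDefect K A) =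
      tangentCount K X W - fourSpaceDefect K W + q * (q + 2 - 2 * planeDefect K π) := by
  obtain ⟨hπW, hπ⟩ := mem_planes.1 hπ
  have hcard : ((coversIn π W).card : ℤ) = q + 1 := by
    rw [card_coversIn_of_finrank_add_two hπW (by rw [hW, hπ])]
    push_cast
    rfl
  have hτ := hK.sum_tangentCount_sub X hπW
  have hsect := sum_sectCard hK.finrank_eq_one hπW
  rw [Finset.sum_sub_distrib, Finset.sum_const, nsmul_eq_mul, hcard,
    (mem_extensionPoints.1 hX).2.2.2.tangentCount_eq] at hτ
  rw [hcard] at hsect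
  simp only [solidDefect]
  rw [Finset.sum_sub_distrib, Finset.sum_sub_distrib, Finset.sum_const, nsmul_eq_mul, hcard, hsect,
    planeDefect, fourSpaceDefect]
  linear_combination hτ

lemma IsCapFinset.mem_halfOvoidSolids_of_solidDefect_lt [CharP F 2] (hK : IsCapFinset K)
    (hA : A ∈ solids W) (hX : finrank F X = 1) (hXA : X ≤ A) (hXK : X ∉ K)
    (h : solidDefect K A < tangentCount K X A) : A ∈ halfOvoidSolids K X W := by
  obtain ⟨hAW, hA⟩ := mem_solids.1 hA
  have hext : Extends K X A := by
    by_contra hext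
    have hle := hK.tangentCount_le_of_not_extends (k := 2) hA hX hXA hXK hext
    simp only [Finset.sum_range_succ, Finset.sum_range_zero] at hle
    rw [solidDefect] at h
    linarith
  exact mem_halfOvoidSolids.2 ⟨⟨hAW, hA⟩, mem_extensionPoints.2 ⟨hX, hXA, hXK, hext⟩,
    hext.tangentCount_eq ▸ h⟩

/-- If `X` has few missing tangents then some solid through `π` has a positive term in
`sum_tangentCount_sub_solidDefect`; without near-ovoid solids one positive term is not enough. -/
lemma IsCapFinset.exists_eq_inf_halfOvoidSolids [CharP F 2] (hK : IsCapFinset K)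
    (hW : finrank F W = 5) (hq : 2048 ≤ q) (hπ : π ∈ nearHyperovalPlanes K X W)
    (huncovered : ∀ A ∈ nearOvoidSolids K X W, ¬π ≤ A)
    (hdeficit : 5 * (fourSpaceDefect K W - tangentCount K X W) < q ^ 2) :
    ∃ A ∈ halfOvoidSolids K X W, ∃ A' ∈ halfOvoidSolids K X W, π = A ⊓ A' := by
  obtain ⟨⟨hπW, hπ3⟩, hX, hd⟩ := mem_nearHyperovalPlanes.1 hπ
  obtain ⟨hX1, hXπ, hXK, -⟩ := mem_extensionPoints.1 hX
  have hmem : ∀ A ∈ coversIn π W, A ∈ solids W := fun A hA =>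
    mem_solids.2 ⟨(mem_coversIn.1 hA).2.1, by rw [(mem_coversIn.1 hA).2.2, hπ3]⟩
  have hhalf : ∀ A ∈ coversIn π W, 0 < 4 * ((tangentCount K X A : ℤ) - solidDefect K A) →
      A ∈ halfOvoidSolids K X W := fun A hA hpos =>
    hK.mem_halfOvoidSolids_of_solidDefect_lt (hmem A hA) hX1 (hXπ.trans (mem_coversIn.1 hA).1) hXK
      (by linarith)
  by_contra! hnone
  have hsum : ∑ A ∈ coversIn π W, 4 * ((tangentCount K X A : ℤ) - solidDefect K A) ≤
      3 * q ^ 2 + 4 * q + 8 := by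
    refine sum_le_of_pos_unique (by positivity) (fun A hA hpos => ?_)
      fun A hA A' hA' hpos hpos' => ?_
    · obtain ⟨hAW, hXA, -⟩ := mem_halfOvoidSolids.1 (hhalf A hA hpos)
      have hfar : ¬8 * solidDefect K A ≤ q ^ 2 := fun h =>
        huncovered A (mem_nearOvoidSolids.2 ⟨hAW, hXA, h⟩) (mem_coversIn.1 hA).1
      rw [(mem_extensionPoints.1 hXA).2.2.2.tangentCount_eq]
      rw [solidDefect] at hfar ⊢
      linarith
    · by_contra hne
      exact hnone A (hhalf A hA hpos) A' (hhalf A' hA' hpos') (eq_inf_of_le_of_le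
        (mem_coversIn.1 hA).2.2 (mem_coversIn.1 hA').2.2 hne (mem_coversIn.1 hA).1
        (mem_coversIn.1 hA').1)
  rw [← Finset.mul_sum, hK.sum_tangentCount_sub_solidDefect hW (mem_planes.2 ⟨hπW, hπ3⟩) hX] at hsum
  nlinarith [mul_planeDefect_le hq hd]

lemma IsCapFinset.sum_covered_nearHyperovalPlanes_le (hK : IsCapFinset K) (X W : Submodule F V) :
    ∑ π ∈ nearHyperovalPlanes K X W with ∃ A ∈ nearOvoidSolids K X W, π ≤ A,
      sectCard K π * (sectCard K π - 1) ≤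
    ∑ A ∈ nearOvoidSolids K X W, sectCard K A * (sectCard K A - 1) := by
  have hsolid : ∀ A ∈ nearOvoidSolids K X W, sectCard K A * (sectCard K A - 1) =
      ∑ π ∈ planesThrough X A, sectCard K π * (sectCard K π - 1) := fun A hA =>
    (hK.sum_sectCard_mul_sub_one_planesThrough (mem_nearOvoidSolids.1 hA).2.1).symm
  rw [Finset.sum_congr rfl hsolid]
  refine sum_le_sum_sum (sectCard_mul_sub_one_nonneg K) fun π hπ => ?_
  obtain ⟨hπ, A, hA, hπA⟩ := Finset.mem_filter.1 hπ
  obtain ⟨⟨-, hπ⟩, hX, -⟩ := mem_nearHyperovalPlanes.1 hπ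
  exact ⟨A, hA, mem_planesThrough.2 ⟨(mem_extensionPoints.1 hX).2.1, hπA, hπ⟩⟩

lemma IsCapFinset.sum_uncovered_nearHyperovalPlanes_le [CharP F 2] (hK : IsCapFinset K)
    (hW : finrank F W = 5) (hq : 2048 ≤ q) (hτ : 8 * (tangentCount K X W : ℤ) < 21 * q ^ 2)
    (hdeficit : 5 * (fourSpaceDefect K W - tangentCount K X W) < q ^ 2) :
    ∑ π ∈ nearHyperovalPlanes K X W with ¬∃ A ∈ nearOvoidSolids K X W, π ≤ A,
      sectCard K π * (sectCard K π - 1) ≤ 36 * (q + 2) ^ 2 := by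
  have hsubset : {π ∈ nearHyperovalPlanes K X W | ¬∃ A ∈ nearOvoidSolids K X W, π ≤ A} ⊆
      (halfOvoidSolids K X W ×ˢ halfOvoidSolids K X W).image fun p => p.1 ⊓ p.2 := by
    intro π hπ
    obtain ⟨hπ, huncovered⟩ := Finset.mem_filter.1 hπ
    push Not at huncovered
    obtain ⟨A, hA, A', hA', rfl⟩ := hK.exists_eq_inf_halfOvoidSolids hW hq hπ huncovered hdeficit
    exact Finset.mem_image.2 ⟨(A, A'), Finset.mem_product.2 ⟨hA, hA'⟩, rfl⟩
  have hcard := (Finset.card_le_card hsubset).trans Finset.card_image_le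
  have hhalf := hK.card_halfOvoidSolids_le_six hW hq hτ
  rw [Finset.card_product] at hcard
  have hcard : {π ∈ nearHyperovalPlanes K X W | ¬∃ A ∈ nearOvoidSolids K X W, π ≤ A}.card ≤ 36 :=
    hcard.trans (Nat.mul_le_mul hhalf hhalf)
  refine (Finset.sum_le_card_nsmul _ _ ((q + 2) ^ 2) fun π hπ => ?_).trans ?_
  · obtain ⟨⟨-, hπ⟩, -⟩ := mem_nearHyperovalPlanes.1 (Finset.mem_filter.1 hπ).1
    nlinarith [hK.sectCard_le_of_plane hπ, sectCard_nonneg K π]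
  · rw [nsmul_eq_mul]
    exact mul_le_mul_of_nonneg_right (by exact_mod_cast hcard) (by positivity)

lemma IsCapFinset.sum_nearHyperovalPlanes_le [CharP F 2] (hK : IsCapFinset K)
    (hW : finrank F W = 5) (hq : 2048 ≤ q) (hτ : 8 * (tangentCount K X W : ℤ) < 21 * q ^ 2) :
    ∑ π ∈ nearHyperovalPlanes K X W, sectCard K π * (sectCard K π - 1) ≤
      ∑ A ∈ nearOvoidSolids K X W, sectCard K A * (sectCard K A - 1) +
      (if q ^ 2 ≤ 5 * (fourSpaceDefect K W - tangentCount K X W) then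
        (tangentCount K X W : ℤ) ^ 2 else 0) + 36 * (q + 2) ^ 2 := by
  split_ifs with hdeficit
  · have hpairs := hK.sum_le_tangentCount_sq (S := nearHyperovalPlanes K X W)
      (Finset.filter_subset _ _) fun π hπ => (mem_nearHyperovalPlanes.1 hπ).2.1
    have hsolids := Finset.sum_nonneg fun A (_ : A ∈ nearOvoidSolids K X W) =>
      sectCard_mul_sub_one_nonneg K A
    linarith [hpairs, sq_nonneg (q + 2)]
  · rw [← Finset.sum_filter_add_sum_filter_not (nearHyperovalPlanes K X W)
      fun π => ∃ A ∈ nearOvoidSolids K X W, π ≤ A, add_zero]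
    exact add_le_add (hK.sum_covered_nearHyperovalPlanes_le X W)
      (hK.sum_uncovered_nearHyperovalPlanes_le hW hq hτ (not_le.1 hdeficit))

end Covering

section WeightArithmetic

variable {q : ℤ}

/-- If `k = q² + 1 - e`, the estimate amounts to `(q + 1) * (e - 60) ^ 2 ≥ 0`. -/
lemma mul_le_of_sq_sub_le {k x : ℤ} (hq : 2048 ≤ q) (hx : 0 ≤ x) (hk : 0 ≤ k * (k - 1))
    (h : q ^ 2 - 119 < k → x ≤ q ^ 2 + 1 - k) :
    x * (9 * q ^ 4 * ((q + 1) * (120 - (q ^ 2 + 1 - k)) - 3600)) ≤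
      36000 * (k * (k - 1) * max (q + 1 - (q ^ 2 + 1 - k)) 0) := by
  obtain ⟨e, rfl⟩ : ∃ e, k = q ^ 2 + 1 - e := ⟨q ^ 2 + 1 - k, by ring⟩
  rw [sub_sub_cancel] at h ⊢
  rcases le_or_gt ((q + 1) * (120 - e) - 3600) 0 with hneg | hpos
  · exact (mul_nonpos_of_nonneg_of_nonpos hx
      (mul_nonpos_of_nonneg_of_nonpos (by positivity) hneg)).trans (by positivity)
  have he : e < 120 := by
    by_contra! hge
    nlinarith
  have hxe := h (by linarith)
  have hq2 : 2048 ^ 2 ≤ q ^ 2 := pow_le_pow_left₀ (by norm_num) hq 2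
  have hpairs : 9 * q ^ 4 ≤ 10 * ((q ^ 2 + 1 - e) * (q ^ 2 + 1 - e - 1)) := by
    have hmul : (q ^ 2 - 119) * (q ^ 2 - 120) ≤ (q ^ 2 + 1 - e) * (q ^ 2 + 1 - e - 1) :=
      mul_le_mul (by linarith) (by linarith) (by linarith) (by linarith)
    nlinarith
  have hsolid : x * ((q + 1) * (120 - e) - 3600) ≤ 3600 * max (q + 1 - e) 0 := by
    have hsq : 0 ≤ (q + 1) * (e - 60) ^ 2 := by positivity
    linarith [mul_le_mul_of_nonneg_right hxe hpos.le, le_max_left (q + 1 - e) 0]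
  calc _ = 9 * q ^ 4 * (x * ((q + 1) * (120 - e) - 3600)) := by ring
    _ ≤ 9 * q ^ 4 * (3600 * max (q + 1 - e) 0) := mul_le_mul_of_nonneg_left hsolid (by positivity)
    _ ≤ 10 * ((q ^ 2 + 1 - e) * (q ^ 2 + 1 - e - 1)) * (3600 * max (q + 1 - e) 0) :=
        mul_le_mul_of_nonneg_right hpairs (by positivity)
    _ = _ := by ring

end WeightArithmetic

section NearOvoidWeight

variable {F : Type*} [Field F] [Fintype F] {V : Type*} [AddCommGroup V] [Module F V] [Finite V]
  {K : Finset (Submodule F V)} {A W X : Submodule F V}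

local notation "q" => (Fintype.card F : ℤ)

lemma IsCapFinset.tangentCount_le_fourSpaceDefect [CharP F 2] (hK : IsCapFinset K)
    (hW : finrank F W = 5) (hcomplete : extensionPoints K W = ∅) (hX : X ∈ offPoints K W) :
    (tangentCount K X W : ℤ) ≤ fourSpaceDefect K W := by
  obtain ⟨hX1, hXW, hXK⟩ := mem_offPoints.1 hX
  have hext : ¬Extends K X W := fun h =>
    Finset.notMem_empty X (hcomplete ▸ mem_extensionPoints.2 ⟨hX1, hXW, hXK, h⟩)
  have hle := hK.tangentCount_le_of_not_extends (k := 3) hW hX1 hXW hXK hext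
  simp only [Finset.sum_range_succ, Finset.sum_range_zero] at hle
  rw [fourSpaceDefect]
  linarith

lemma IsCapFinset.sum_planes_mul_planeDefect_sq_le [CharP F 2] (hK : IsCapFinset K)
    (hW : finrank F W = 5) (hcomplete : extensionPoints K W = ∅) :
    ∑ π ∈ planes W, sectCard K π * (sectCard K π - 1) * planeDefect K π ^ 2 ≤
      sectCard K W * (q * fourSpaceDefect K W * (fourSpaceDefect K W - 1)) := by
  calc ∑ π ∈ planes W, sectCard K π * (sectCard K π - 1) * planeDefect K π ^ 2
    _ = ∑ X ∈ offPoints K W, (tangentCount K X W : ℤ) * (tangentCount K X W - 1) :=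
        (hK.sum_tangentCount_mul_sub_one W).symm
    _ ≤ ∑ X ∈ offPoints K W, (tangentCount K X W : ℤ) * (fourSpaceDefect K W - 1) :=
        Finset.sum_le_sum fun X hX => mul_le_mul_of_nonneg_left
          (sub_le_sub_right (hK.tangentCount_le_fourSpaceDefect hW hcomplete hX) 1)
          (Int.natCast_nonneg _)
    _ = _ := by
        rw [← Finset.sum_mul, hK.sum_tangentCount_offPoints hW]
        ring

lemma IsCapFinset.sum_fourSpaceDefect_sub_tangentCount (hK : IsCapFinset K)
    (hW : finrank F W = 5) :
    ∑ X ∈ offPoints K W, (fourSpaceDefect K W - tangentCount K X W) =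
      fourSpaceDefect K W * ((q + 1) * (fourSpaceDefect K W - 1) - q * (q ^ 2 + q + 1)) := by
  rw [Finset.sum_sub_distrib, hK.sum_tangentCount_offPoints hW, Finset.sum_const, nsmul_eq_mul,
    hK.card_offPoints hW, fourSpaceDefect]
  ring

lemma IsCapFinset.fourSpaceDefect_pos [CharP F 2] (hK : IsCapFinset K) (hW : finrank F W = 5)
    (hq : 3 ≤ Fintype.card F) (hcard : 2 ≤ sectCard K W) : 0 < fourSpaceDefect K W := by
  obtain ⟨P, hP, R, hR, hPR⟩ := Finset.one_lt_card.1
    (show 1 < (sect K W).card by rw [sectCard] at hcard; exact_mod_cast hcard)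
  obtain ⟨⟨hPK, hPW⟩, hRK, hRW⟩ := And.intro (mem_sect.1 hP) (mem_sect.1 hR)
  have hline := finrank_line (hK.finrank_eq_one P hPK) (hK.finrank_eq_one R hRK) hPR
  obtain ⟨π, hπ⟩ : (coversIn (P ⊔ R) W).Nonempty := by
    rw [← Finset.card_pos, card_coversIn_of_finrank_add_three (sup_le hPW hRW)
      (by rw [hW, hline])]
    positivity
  obtain ⟨-, hπW, hπ3⟩ := mem_coversIn.1 hπ
  have hsum := sum_sectCard hK.finrank_eq_one hπW
  have hle : ∑ A ∈ coversIn π W, sectCard K A ≤ ∑ A ∈ coversIn π W, (q ^ 2 + 1) :=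
    Finset.sum_le_sum fun A hA =>
      hK.sectCard_le_sq_add_one (by rw [(mem_coversIn.1 hA).2.2, hπ3, hline]) hq
  rw [hsum, Finset.sum_const, nsmul_eq_mul,
    card_coversIn_of_finrank_add_two hπW (by rw [hW, hπ3, hline])] at hle
  push_cast at hle
  rw [fourSpaceDefect]
  nlinarith [sectCard_nonneg K π]

omit [Fintype F] in
lemma sum_offPoints_sum_planes (K : Finset (Submodule F V)) (W : Submodule F V)
    (p : Submodule F V → Prop) [DecidablePred p] (f : Submodule F V → ℤ) :
    ∑ X ∈ offPoints K W, ∑ π ∈ planes W with X ∈ extensionPoints K π ∧ p π, f π =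
      ∑ π ∈ planes W with p π, (extensionPoints K π).card * f π := by
  rw [Finset.sum_comm' (t' := {π ∈ planes W | p π}) (s' := extensionPoints K)]
  · simp only [Finset.sum_const, nsmul_eq_mul]
  · intro X π
    simp only [mem_offPoints, Finset.mem_filter, mem_planes]
    refine ⟨fun ⟨_, hπ, hXπ, hp⟩ => ⟨hXπ, hπ, hp⟩, fun ⟨hXπ, hπ, hp⟩ => ⟨?_, hπ, hXπ, hp⟩⟩
    obtain ⟨hX1, hX, hXK, -⟩ := mem_extensionPoints.1 hXπ
    exact ⟨hX1, hX.trans hπ.1, hXK⟩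

/-- The number of triples `(A, P, R)` with `A` a solid of `W` close to an ovoid and `P ≠ R` points
of its section, each triple counted once for every point extending the cap to `A`. -/
noncomputable def nearOvoidWeight (K : Finset (Submodule F V)) (W : Submodule F V) : ℤ :=
  ∑ X ∈ offPoints K W, ∑ A ∈ nearOvoidSolids K X W, sectCard K A * (sectCard K A - 1)

/-- The total defect, over the pairs of distinct points of the section, of the planes of `W`
through both points that are not close to a hyperoval. -/
noncomputable def farHyperovalWeight (K : Finset (Submodule F V)) (W : Submodule F V) : ℤ :=
  ∑ π ∈ planes W with ¬planeDefect K π * (planeDefect K π - 1) < q,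
    sectCard K π * (sectCard K π - 1) * planeDefect K π

lemma IsCapFinset.sub_farHyperovalWeight_le_sum_nearHyperovalPlanes [CharP F 2]
    (hK : IsCapFinset K) (hW : finrank F W = 5) :
    sectCard K W * (sectCard K W - 1) * fourSpaceDefect K W - farHyperovalWeight K W ≤
      ∑ X ∈ offPoints K W, ∑ π ∈ nearHyperovalPlanes K X W,
        sectCard K π * (sectCard K π - 1) := by
  have hsplit := Finset.sum_filter_add_sum_filter_not (planes W)
    (fun π => planeDefect K π * (planeDefect K π - 1) < q)
    fun π => sectCard K π * (sectCard K π - 1) * planeDefect K π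
  rw [hK.sum_planes_mul_planeDefect hW] at hsplit
  calc _ = ∑ π ∈ planes W with planeDefect K π * (planeDefect K π - 1) < q,
        sectCard K π * (sectCard K π - 1) * planeDefect K π := by
        rw [farHyperovalWeight]
        linarith
    _ ≤ ∑ π ∈ planes W with planeDefect K π * (planeDefect K π - 1) < q,
        (extensionPoints K π).card * (sectCard K π * (sectCard K π - 1)) := by
        refine Finset.sum_le_sum fun π hπ => ?_
        obtain ⟨hπ, hd⟩ := Finset.mem_filter.1 hπ
        rcases (sectCard_nonneg K π).eq_or_lt with hs | hs
        · simp [← hs]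
        · rw [mul_comm]
          exact mul_le_mul_of_nonneg_right
            (hK.planeDefect_le_card_extensionPoints (mem_planes.1 hπ).2 hs hd)
            (sectCard_mul_sub_one_nonneg K π)
    _ = _ := (sum_offPoints_sum_planes K W _ _).symm

lemma IsCapFinset.sq_mul_sum_nearHyperovalPlanes_le [CharP F 2] (hK : IsCapFinset K)
    (hW : finrank F W = 5) (hcomplete : extensionPoints K W = ∅) (hq : 2048 ≤ q)
    (ht : 8 * fourSpaceDefect K W < 21 * q ^ 2) (hX : X ∈ offPoints K W) :
    q ^ 2 * ∑ π ∈ nearHyperovalPlanes K X W, sectCard K π * (sectCard K π - 1) ≤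
      q ^ 2 * ∑ A ∈ nearOvoidSolids K X W, sectCard K A * (sectCard K A - 1) +
        5 * fourSpaceDefect K W ^ 2 * (fourSpaceDefect K W - tangentCount K X W) +
        q ^ 2 * (36 * (q + 2) ^ 2) := by
  have hτ := hK.tangentCount_le_fourSpaceDefect hW hcomplete hX
  have hτ0 : (0 : ℤ) ≤ tangentCount K X W := Int.natCast_nonneg _
  have hdeficit : q ^ 2 * (if q ^ 2 ≤ 5 * (fourSpaceDefect K W - tangentCount K X W) then
      (tangentCount K X W : ℤ) ^ 2 else 0) ≤
      5 * (fourSpaceDefect K W - tangentCount K X W) * fourSpaceDefect K W ^ 2 := by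
    split_ifs with h
    · exact mul_le_mul h (pow_le_pow_left₀ hτ0 hτ 2) (sq_nonneg _) (by linarith)
    · rw [mul_zero]
      exact mul_nonneg (by linarith) (sq_nonneg _)
  have hle := mul_le_mul_of_nonneg_left
    (hK.sum_nearHyperovalPlanes_le hW hq (X := X) (by linarith)) (sq_nonneg q)
  linarith

lemma IsCapFinset.le_nearOvoidWeight [CharP F 2] (hK : IsCapFinset K)
    (hW : finrank F W = 5) (hcomplete : extensionPoints K W = ∅) (hq : 2048 ≤ q)
    (ht : 8 * fourSpaceDefect K W < 21 * q ^ 2) :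
    q ^ 2 * (sectCard K W * (sectCard K W - 1) * fourSpaceDefect K W - farHyperovalWeight K W) ≤
      q ^ 2 * nearOvoidWeight K W +
        5 * fourSpaceDefect K W ^ 3 *
          ((q + 1) * (fourSpaceDefect K W - 1) - q * (q ^ 2 + q + 1)) +
        q ^ 2 * ((offPoints K W).card * (36 * (q + 2) ^ 2)) := by
  refine (mul_le_mul_of_nonneg_left
    (hK.sub_farHyperovalWeight_le_sum_nearHyperovalPlanes hW) (sq_nonneg q)).trans ?_
  rw [Finset.mul_sum]
  refine (Finset.sum_le_sum fun X hX =>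
    hK.sq_mul_sum_nearHyperovalPlanes_le hW hcomplete hq ht hX).trans_eq ?_
  rw [Finset.sum_add_distrib, Finset.sum_add_distrib, ← Finset.mul_sum, ← Finset.mul_sum,
    hK.sum_fourSpaceDefect_sub_tangentCount hW, Finset.sum_const, nsmul_eq_mul, nearOvoidWeight]
  ring

lemma IsCapFinset.sum_nearOvoidSolids_sum_planesThrough_le (hK : IsCapFinset K)
    {f : Submodule F V → ℤ} (hf : ∀ π, 0 ≤ f π) (hτ : 8 * (tangentCount K X W : ℤ) < 21 * q ^ 2) :
    ∑ A ∈ nearOvoidSolids K X W, ∑ π ∈ planesThrough X A with planeDefect K π < sectCard K π,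
        f π ≤
      ∑ π ∈ planes W with X ∈ extensionPoints K π ∧ planeDefect K π < sectCard K π, 2 * f π := by
  rw [Finset.sum_comm'
    (t' := {π ∈ planes W | X ∈ extensionPoints K π ∧ planeDefect K π < sectCard K π})
    (s' := fun π => {A ∈ nearOvoidSolids K X W | π ≤ A})]
  · refine Finset.sum_le_sum fun π hπ => ?_
    obtain ⟨hπ, hXπ, -⟩ := Finset.mem_filter.1 hπ
    rw [Finset.sum_const, nsmul_eq_mul]
    exact mul_le_mul_of_nonneg_right
      (by exact_mod_cast hK.card_filter_nearOvoidSolids_le_two hπ hXπ hτ) (hf π)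
  · intro A π
    simp only [Finset.mem_filter, mem_planes]
    constructor
    · rintro ⟨hA, hπ, hd⟩
      obtain ⟨⟨hAW, -⟩, hXA, -⟩ := mem_nearOvoidSolids.1 hA
      obtain ⟨-, hπA, hπ3⟩ := mem_planesThrough.1 hπ
      exact ⟨⟨hA, hπA⟩, ⟨hπA.trans hAW, hπ3⟩,
        mem_extensionPoints_of_mem_planesThrough hXA hπ, hd⟩
    · rintro ⟨⟨hA, hπA⟩, ⟨-, hπ3⟩, hXπ, hd⟩
      exact ⟨hA, mem_planesThrough.2 ⟨(mem_extensionPoints.1 hXπ).2.1, hπA, hπ3⟩, hd⟩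

lemma IsCapFinset.sum_sum_planesThrough_le [CharP F 2] (hK : IsCapFinset K)
    (hW : finrank F W = 5) (hcomplete : extensionPoints K W = ∅)
    (ht : 8 * fourSpaceDefect K W < 21 * q ^ 2) (c : ℤ) :
    ∑ X ∈ offPoints K W, ∑ A ∈ nearOvoidSolids K X W,
        ∑ π ∈ planesThrough X A with planeDefect K π < sectCard K π,
          sectCard K π * (sectCard K π - 1) * (planeDefect K π - c) ≤
      2 * ∑ π ∈ planes W, sectCard K π * (sectCard K π - 1) *
        (planeDefect K π * max (planeDefect K π - c) 0) := by
  set f : Submodule F V → ℤ := fun π =>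
    sectCard K π * (sectCard K π - 1) * max (planeDefect K π - c) 0
  have hf : ∀ π, 0 ≤ f π := fun π =>
    mul_nonneg (sectCard_mul_sub_one_nonneg K π) (le_max_right _ _)
  calc _ ≤ ∑ X ∈ offPoints K W, ∑ A ∈ nearOvoidSolids K X W,
        ∑ π ∈ planesThrough X A with planeDefect K π < sectCard K π, f π :=
        Finset.sum_le_sum fun X _ => Finset.sum_le_sum fun A _ => Finset.sum_le_sum fun π _ =>
          mul_le_mul_of_nonneg_left (le_max_left _ _) (sectCard_mul_sub_one_nonneg K π)
    _ ≤ ∑ X ∈ offPoints K W, ∑ π ∈ planes W with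
        X ∈ extensionPoints K π ∧ planeDefect K π < sectCard K π, 2 * f π :=
        Finset.sum_le_sum fun X hX => hK.sum_nearOvoidSolids_sum_planesThrough_le hf
          (by linarith [hK.tangentCount_le_fourSpaceDefect hW hcomplete hX])
    _ = ∑ π ∈ planes W with planeDefect K π < sectCard K π,
        (extensionPoints K π).card * (2 * f π) := sum_offPoints_sum_planes K W _ _
    _ ≤ ∑ π ∈ planes W with planeDefect K π < sectCard K π, planeDefect K π * (2 * f π) :=
        Finset.sum_le_sum fun π hπ => mul_le_mul_of_nonneg_right
          (hK.card_extensionPoints_le (mem_planes.1 (Finset.mem_filter.1 hπ).1).2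
            (Finset.mem_filter.1 hπ).2)
          (mul_nonneg zero_le_two (hf π))
    _ ≤ ∑ π ∈ planes W, planeDefect K π * (2 * f π) :=
        Finset.sum_le_sum_of_subset_of_nonneg (Finset.filter_subset _ _) fun π hπ _ =>
          mul_nonneg (hK.planeDefect_nonneg (mem_planes.1 hπ).2) (mul_nonneg zero_le_two (hf π))
    _ = _ := by
        rw [Finset.mul_sum]
        exact Finset.sum_congr rfl fun π _ => by ring

lemma IsCapFinset.le_sum_planes_max (hK : IsCapFinset K) (hA : finrank F A = 4) :
    sectCard K A * (sectCard K A - 1) * max (q + 1 - (q ^ 2 + 1 - sectCard K A)) 0 ≤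
      ∑ π ∈ planes A, sectCard K π * (sectCard K π - 1) * max (2 - planeDefect K π) 0 := by
  refine hK.le_sum_planes_mul_of_forall_secant A _ _ fun m hmA hm hs =>
    max_le ?_ (Finset.sum_nonneg fun π _ => le_max_right _ _)
  have hle : ∑ π ∈ coversIn m A, (2 - planeDefect K π) ≤
      ∑ π ∈ coversIn m A, max (2 - planeDefect K π) 0 :=
    Finset.sum_le_sum fun π _ => le_max_left _ _
  rw [Finset.sum_sub_distrib, hK.sum_planeDefect hmA hs, Finset.sum_const, nsmul_eq_mul,
    card_coversIn_of_finrank_add_two hmA (by rw [hA, hm])] at hle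
  push_cast at hle
  linarith

/-- A plane lies in `q + 1` solids, and a solid whose section has `q² + 1 - e` points carries at
most `e` of the pairs counted on the left. -/
lemma IsCapFinset.sum_nearOvoidSolids_le_sum_planes_max [CharP F 2] (hK : IsCapFinset K)
    (hW : finrank F W = 5) (hq : 2048 ≤ q) :
    ∑ X ∈ offPoints K W, ∑ A ∈ nearOvoidSolids K X W,
        9 * q ^ 4 * ((q + 1) * (120 - (q ^ 2 + 1 - sectCard K A)) - 3600) ≤
      36000 * ((q + 1) *
        ∑ π ∈ planes W, sectCard K π * (sectCard K π - 1) * max (2 - planeDefect K π) 0) := by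
  rw [← sum_solids_sum_planes hW, Finset.mul_sum, Finset.sum_comm' (t' := solids W)
    (s' := fun A => {X ∈ offPoints K W | A ∈ nearOvoidSolids K X W})]
  · refine Finset.sum_le_sum fun A hA => ?_
    obtain ⟨-, hA4⟩ := mem_solids.1 hA
    rw [Finset.sum_const, nsmul_eq_mul]
    refine le_trans ?_ (mul_le_mul_of_nonneg_left (hK.le_sum_planes_max hA4) (by norm_num))
    refine mul_le_of_sq_sub_le hq (Int.natCast_nonneg _) (sectCard_mul_sub_one_nonneg K A)
      fun hlarge => ?_
    have hsubset : {X ∈ offPoints K W | A ∈ nearOvoidSolids K X W} ⊆ extensionPoints K A :=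
      fun X hX => (mem_nearOvoidSolids.1 (Finset.mem_filter.1 hX).2).2.1
    have hext := hK.card_extensionPoints_add_sectCard_le hA4 (by omega) (by nlinarith)
    have hcard : ({X ∈ offPoints K W | A ∈ nearOvoidSolids K X W}.card : ℤ) ≤
        (extensionPoints K A).card := by exact_mod_cast Finset.card_le_card hsubset
    linarith
  · intro X A
    simp only [Finset.mem_filter, mem_nearOvoidSolids, mem_solids]
    tauto

end NearOvoidWeight

/-! ### The bound in a projective 4-space -/

section MomentArithmetic

lemma sub_mul_sub_add_one_nonneg (d a : ℤ) : 0 ≤ (d - a) * (d - (a + 1)) := by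
  rcases le_or_gt d a with h | h
  · exact mul_nonneg_of_nonpos_of_nonpos (by linarith) (by linarith)
  · exact mul_nonneg (by linarith) (by linarith)

lemma two_mul_mul_max_le (d : ℤ) : 2 * (d * max (d - 2) 0) ≤ 3 * ((d - 1) * (d - (1 + 1))) := by
  rcases le_or_gt d 2 with hd | hd
  · rw [max_eq_right (by linarith)]
    linarith [sub_mul_sub_add_one_nonneg d 1]
  · rw [max_eq_left (by linarith)]
    linarith [sub_mul_sub_add_one_nonneg d 2]

lemma two_mul_max_le (d : ℤ) : 2 * max (2 - d) 0 ≤ (d - 2) * (d - (2 + 1)) := by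
  rcases le_or_gt d 2 with hd | hd
  · rw [max_eq_left (by linarith)]
    linarith [sub_mul_sub_add_one_nonneg d 1]
  · rw [max_eq_right (by linarith)]
    linarith [sub_mul_sub_add_one_nonneg d 2]

variable {q t : ℤ}

lemma mul_le_of_moment_two_nonneg (hq : 2048 ≤ q) (ht : 0 < t)
    (hlt : q * t < (3 * q - 100) * (q ^ 2 + q + 1))
    (h : 0 ≤ q * t * (t - 1) + (q ^ 3 + q ^ 2 + q + 1 - t) * (6 * (q ^ 2 + q + 1) - 5 * t)) :
    q * t ≤ (2 * q + 10) * (q ^ 2 + q + 1) := by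
  by_contra! hgt
  obtain ⟨Θ, hΘ⟩ : ∃ Θ, Θ = q ^ 2 + q + 1 := ⟨_, rfl⟩
  rw [show q ^ 3 + q ^ 2 + q + 1 - t = q * Θ + 1 - t by rw [hΘ]; ring, ← hΘ] at h
  rw [← hΘ] at hlt hgt
  have hΘ0 : 0 < Θ := by rw [hΘ]; positivity
  have htwo : 2 * Θ < t := by nlinarith
  have hthree : t < 3 * Θ := by nlinarith
  have hends := mul_nonneg (sub_nonneg.2 hgt.le) (sub_nonneg.2 hlt.le)
  have hmid : 0 ≤ q * ((t - 2 * Θ) * (3 * Θ - t)) :=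
    mul_nonneg (by linarith) (mul_nonneg (by linarith) (by linarith))
  have hqh := mul_nonneg (show 0 ≤ q by linarith) h
  have hlin : 0 < q * (5 * t + q * t - 6 * Θ) := mul_pos (by linarith) (by nlinarith)
  have hsq : 0 < (2 * q - 290) * Θ ^ 2 := mul_pos (by linarith) (by positivity)
  nlinarith [mul_nonneg (sub_nonneg.2 hgt.le) hΘ0.le]

lemma mul_le_or_le_mul_of_moment_one_nonneg (hq : 2048 ≤ q) (ht : 0 < t)
    (h : 0 ≤ q * t * (t - 1) + (q ^ 3 + q ^ 2 + q + 1 - t) * (2 * (q ^ 2 + q + 1) - 3 * t)) :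
    q * t ≤ (q + 3) * (q ^ 2 + q + 1) ∨ (2 * q - 10) * (q ^ 2 + q + 1) ≤ q * t := by
  by_contra! hbetween
  obtain ⟨Θ, hΘ⟩ : ∃ Θ, Θ = q ^ 2 + q + 1 := ⟨_, rfl⟩
  rw [show q ^ 3 + q ^ 2 + q + 1 - t = q * Θ + 1 - t by rw [hΘ]; ring, ← hΘ] at h
  rw [← hΘ] at hbetween
  obtain ⟨hgt, hlt⟩ := hbetween
  have hΘ0 : 0 < Θ := by rw [hΘ]; positivity
  have hone : Θ < t := by nlinarith
  have htwo : t < 2 * Θ := by nlinarith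
  have hends := mul_nonneg (sub_nonneg.2 hgt.le) (sub_nonneg.2 hlt.le)
  have hmid : 0 ≤ q * ((t - Θ) * (2 * Θ - t)) :=
    mul_nonneg (by linarith) (mul_nonneg (by linarith) (by linarith))
  have hqh := mul_nonneg (show 0 ≤ q by linarith) h
  have hlin : 0 < q * (3 * t + q * t - 2 * Θ) := mul_pos (by linarith) (by nlinarith)
  have hsq : 0 < (2 * q - 60) * Θ ^ 2 := mul_pos (by linarith) (by positivity)
  nlinarith [mul_nonneg (sub_nonneg.2 hgt.le) hΘ0.le]

lemma moment_one_le (hq : 2048 ≤ q) (hlo : (2 * q - 10) * (q ^ 2 + q + 1) ≤ q * t)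
    (hhi : q * t ≤ (2 * q + 10) * (q ^ 2 + q + 1)) :
    q * t * (t - 1) + (q ^ 3 + q ^ 2 + q + 1 - t) * (2 * (q ^ 2 + q + 1) - 3 * t) ≤
      20 * (q ^ 2 + q + 1) ^ 2 := by
  obtain ⟨Θ, hΘ⟩ : ∃ Θ, Θ = q ^ 2 + q + 1 := ⟨_, rfl⟩
  rw [show q ^ 3 + q ^ 2 + q + 1 - t = q * Θ + 1 - t by rw [hΘ]; ring, ← hΘ]
  rw [← hΘ] at hlo hhi
  have hΘ0 : 0 < Θ := by rw [hΘ]; positivity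
  have hthi : 200 * t ≤ 401 * Θ := by nlinarith
  have htlo : 399 * Θ ≤ 200 * t := by nlinarith
  have hmid : (q * t - 2 * q * Θ) * (t - Θ) ≤ 10 * Θ * (t - Θ) :=
    mul_le_mul_of_nonneg_right (by linarith) (by linarith)
  have hlin : 0 < q * t + 3 * t - 2 * Θ := by nlinarith
  nlinarith

lemma moment_two_le (hq : 2048 ≤ q) (hlo : (2 * q - 10) * (q ^ 2 + q + 1) ≤ q * t)
    (hhi : q * t ≤ (2 * q + 10) * (q ^ 2 + q + 1)) :
    q * t * (t - 1) + (q ^ 3 + q ^ 2 + q + 1 - t) * (6 * (q ^ 2 + q + 1) - 5 * t) ≤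
      20 * (q ^ 2 + q + 1) ^ 2 := by
  obtain ⟨Θ, hΘ⟩ : ∃ Θ, Θ = q ^ 2 + q + 1 := ⟨_, rfl⟩
  rw [show q ^ 3 + q ^ 2 + q + 1 - t = q * Θ + 1 - t by rw [hΘ]; ring, ← hΘ]
  rw [← hΘ] at hlo hhi
  have hΘ0 : 0 < Θ := by rw [hΘ]; positivity
  have hthi : 200 * t ≤ 401 * Θ := by nlinarith
  have htlo : 399 * Θ ≤ 200 * t := by nlinarith
  have hmid : (2 * q * Θ - q * t) * (3 * Θ - t) ≤ 10 * Θ * (3 * Θ - t) :=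
    mul_le_mul_of_nonneg_right (by linarith) (by linarith)
  have hlin : 0 < q * t + 5 * t - 6 * Θ := by nlinarith
  nlinarith

variable {S far k N D : ℤ}

lemma pairs_mul_le (hq : 2048 ≤ q) (ht0 : 0 ≤ t) (ht : t ≤ 3 * q ^ 2) (hD : D ≤ 2 * q ^ 3)
    (hN : N ≤ 2 * q ^ 4) (hfar : far ≤ q ^ 7)
    (h : q ^ 2 * (k * (k - 1) * t - far) ≤
      q ^ 2 * S + 5 * t ^ 3 * D + q ^ 2 * (N * (36 * (q + 2) ^ 2))) :
    k * (k - 1) * t ≤ S + 280 * q ^ 7 := by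
  have hdeficit : 5 * t ^ 3 * D ≤ q ^ 2 * (270 * q ^ 7) :=
    calc 5 * t ^ 3 * D ≤ 5 * t ^ 3 * (2 * q ^ 3) := by gcongr
      _ ≤ 5 * (3 * q ^ 2) ^ 3 * (2 * q ^ 3) := by gcongr
      _ = _ := by ring
  have herror : N * (36 * (q + 2) ^ 2) ≤ q ^ 7 :=
    calc N * (36 * (q + 2) ^ 2) ≤ 2 * q ^ 4 * (36 * (q + 2) ^ 2) := by gcongr
      _ ≤ 2 * q ^ 4 * (36 * (2 * q) ^ 2) := by gcongr; linarith
      _ = 288 * q ^ 6 := by ring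
      _ ≤ q * q ^ 6 := by gcongr; linarith
      _ = q ^ 7 := by ring
  have hq7 : 0 < q ^ 7 := by positivity
  refine le_of_mul_le_mul_left ?_ (show 0 < q ^ 2 by positivity)
  linarith [mul_le_mul_of_nonneg_left hfar (sq_nonneg q),
    mul_le_mul_of_nonneg_left herror (sq_nonneg q), mul_pos (show 0 < q ^ 2 by positivity) hq7]

lemma lt_mul_of_nearOvoidWeight_le (hq : 2048 ≤ q)
    (hk : k = q ^ 3 + q ^ 2 + q + 2 - t) (hN : N = q ^ 4 + q ^ 3 + q ^ 2 + q + 1 - k)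
    (hD : D = (q + 1) * (t - 1) - q * (q ^ 2 + q + 1)) (hD0 : 0 ≤ D)
    (hfar : 40 * far ≤ k * t * D) (hS : S ≤ 4 * (k * t * D))
    (h : q ^ 2 * (k * (k - 1) * t - far) ≤
      q ^ 2 * S + 5 * t ^ 3 * D + q ^ 2 * (N * (36 * (q + 2) ^ 2))) :
    (q + 3) * (q ^ 2 + q + 1) < q * t := by
  by_contra! hle
  have hq2 : 2048 * q ≤ q ^ 2 := by nlinarith
  have hq3 : 2048 * q ^ 2 ≤ q ^ 3 := by nlinarith
  have hq4 : 2048 * q ^ 3 ≤ q ^ 4 := by nlinarith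
  have hq7 : 0 < q ^ 7 := by positivity
  have htlo : q ^ 2 ≤ t := by nlinarith
  have ht0 : 0 ≤ t := by linarith
  have hthi : t ≤ 2 * q ^ 2 := by nlinarith
  have hklo : 9 * q ^ 3 ≤ 10 * (k - 1) := by linarith
  have hDhi : D ≤ 5 * q ^ 2 := by nlinarith
  have hktD : k * t * D ≤ 20 * q ^ 7 :=
    calc k * t * D ≤ 2 * q ^ 3 * (2 * q ^ 2) * (5 * q ^ 2) := by gcongr; linarith
      _ = 20 * q ^ 7 := by ring
  have hupper := pairs_mul_le hq ht0 (by linarith) (by linarith) (by linarith) (by linarith) h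
  have hpairs : 9 * q ^ 3 * (9 * q ^ 3) ≤ 10 * k * (10 * (k - 1)) :=
    mul_le_mul (by linarith) hklo (by positivity) (by linarith)
  have hlower : 81 * q ^ 8 ≤ 100 * (k * (k - 1) * t) := by
    linarith [mul_le_mul hpairs htlo (sq_nonneg q)
      (mul_nonneg (by linarith) (by linarith))]
  have hq8 : 2048 * q ^ 7 ≤ q * q ^ 7 := by gcongr
  linarith

lemma ten_mul_le_of_le_cube (hq : 2048 ≤ q) (hk : k ≤ q ^ 3) :
    10 * (k * (q ^ 2 + q + 1) ^ 2) ≤ 11 * q ^ 7 := by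
  have hΘ : 100 * (q ^ 2 + q + 1) ≤ 101 * q ^ 2 := by nlinarith
  have hsq : (100 * (q ^ 2 + q + 1)) ^ 2 ≤ (101 * q ^ 2) ^ 2 :=
    pow_le_pow_left₀ (by positivity) hΘ 2
  have hq7 : 0 < q ^ 7 := by positivity
  linarith [mul_le_mul_of_nonneg_right hk (sq_nonneg (q ^ 2 + q + 1)),
    mul_le_mul_of_nonneg_left hsq (show 0 ≤ q ^ 3 by positivity)]

lemma five_mul_le_of_nearOvoidWeight_le {n : ℤ} (hq : 2048 ≤ q) (htlo : 9 * q ^ 2 ≤ 5 * t)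
    (hthi : t ≤ 3 * q ^ 2) (hk : k = q ^ 3 + q ^ 2 + q + 2 - t)
    (hN : N = q ^ 4 + q ^ 3 + q ^ 2 + q + 1 - k)
    (hD : D ≤ 2 * q ^ 3) (hfar : far ≤ q ^ 7) (hS : S ≤ n * ((q ^ 2 + 1) * q ^ 2))
    (h : q ^ 2 * (k * (k - 1) * t - far) ≤
      q ^ 2 * S + 5 * t ^ 3 * D + q ^ 2 * (N * (36 * (q + 2) ^ 2))) :
    5 * q ^ 4 ≤ 4 * n := by
  have hq2 : 2048 * q ≤ q ^ 2 := by nlinarith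
  have hq3 : 2048 * q ^ 2 ≤ q ^ 3 := by nlinarith
  have hq4 : 2048 * q ^ 3 ≤ q ^ 4 := by nlinarith
  have hq6 : 2048 * q ^ 6 ≤ q * q ^ 6 := by gcongr
  have hq8 : 2048 * q ^ 7 ≤ q * q ^ 7 := by gcongr
  have hq60 : 0 < q ^ 6 := by positivity
  have hklo : 9 * q ^ 3 ≤ 10 * (k - 1) := by linarith
  have hupper := pairs_mul_le hq (by linarith) hthi hD (by linarith) hfar h
  have hpairs : 9 * q ^ 3 * (9 * q ^ 3) ≤ 10 * k * (10 * (k - 1)) :=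
    mul_le_mul (by linarith) hklo (by positivity) (by linarith)
  have hlower : 729 * q ^ 8 ≤ 500 * (k * (k - 1) * t) := by
    linarith [mul_le_mul hpairs htlo (by positivity)
      (mul_nonneg (by linarith) (by linarith))]
  refine le_of_mul_le_mul_right ?_ (show 0 < (q ^ 2 + 1) * q ^ 2 by positivity)
  linarith

lemma le_mul_of_sum_near_solids_le {n e m : ℤ} (hq : 2048 ≤ q) (hn : 5 * q ^ 4 ≤ 4 * n)
    (hm : 10 * m ≤ 11 * q ^ 7) (he : (q + 1) * q ^ 2 * (7 * e - 20 * n) ≤ 600 * m) :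
    e ≤ 79 * n := by
  by_contra! hgt
  have hq4 : 0 < q ^ 4 := by positivity
  have hlarge : 660 * q ^ 4 < 7 * e - 20 * n := by linarith
  have := calc q ^ 3 * (660 * q ^ 4) < q ^ 3 * (7 * e - 20 * n) :=
        mul_lt_mul_of_pos_left hlarge (by positivity)
    _ ≤ (q + 1) * q ^ 2 * (7 * e - 20 * n) :=
        mul_le_mul_of_nonneg_right (by linarith [sq_nonneg q]) (by linarith)
  linarith

lemma lt_of_sum_near_solids_le {n e m : ℤ} (hq : 2048 ≤ q) (hn : 5 * q ^ 4 ≤ 4 * n)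
    (hm : 10 * m ≤ 11 * q ^ 7) (he : (q + 1) * q ^ 2 * (7 * e - 20 * n) ≤ 600 * m) :
    36000 * ((q + 1) * (10 * m)) < 9 * q ^ 4 * ((q + 1) * (120 * n - e) - 3600 * n) := by
  have hle := le_mul_of_sum_near_solids_le hq hn hm he
  have hn0 : 0 < n := by linarith [show 0 < q ^ 4 by positivity]
  calc 36000 * ((q + 1) * (10 * m)) ≤ 36000 * ((q + 1) * (11 * q ^ 7)) := by gcongr
    _ = 396000 * (q ^ 7 * (q + 1)) := by ring
    _ < 400 * q * (q ^ 7 * (q + 1)) := mul_lt_mul_of_pos_right (by linarith) (by positivity)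
    _ = 80 * q ^ 4 * (q + 1) * (5 * q ^ 4) := by ring
    _ ≤ 80 * q ^ 4 * (q + 1) * (4 * n) := by gcongr
    _ ≤ 9 * q ^ 4 * ((q + 1) * (120 * n - e) - 3600 * n) := by
      have : 39 * ((q + 1) * n) ≤ (q + 1) * (120 * n - e) - 3600 * n := by nlinarith
      linarith [mul_le_mul_of_nonneg_left this (show 0 ≤ 9 * q ^ 4 by positivity),
        show 0 < q ^ 4 * ((q + 1) * n) by positivity]

end MomentArithmetic

section FourSpaceBound

variable {F : Type*} [Field F] [Fintype F] {V : Type*} [AddCommGroup V] [Module F V] [Finite V]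
  {K : Finset (Submodule F V)} {A W X : Submodule F V}

local notation "q" => (Fintype.card F : ℤ)

/-- The second moment `∑ s(s - 1)(d - a)(d - a - 1)` of the plane defects `d` about the consecutive
integers `a` and `a + 1`, over the ordered pairs of distinct points of the sections of size `s`. The
roots are consecutive so that every term is nonnegative. -/
noncomputable def defectMoment (K : Finset (Submodule F V)) (W : Submodule F V) (a : ℤ) : ℤ :=
  ∑ π ∈ planes W, sectCard K π * (sectCard K π - 1) *
    ((planeDefect K π - a) * (planeDefect K π - (a + 1)))

lemma defectMoment_nonneg (K : Finset (Submodule F V)) (W : Submodule F V) (a : ℤ) :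
    0 ≤ defectMoment K W a :=
  Finset.sum_nonneg fun π _ =>
    mul_nonneg (sectCard_mul_sub_one_nonneg K π) (sub_mul_sub_add_one_nonneg _ a)

lemma IsCapFinset.defectMoment_le [CharP F 2] (hK : IsCapFinset K) (hW : finrank F W = 5)
    (hcomplete : extensionPoints K W = ∅) (a : ℤ) :
    defectMoment K W a ≤
      sectCard K W * (q * fourSpaceDefect K W * (fourSpaceDefect K W - 1) +
        (q ^ 3 + q ^ 2 + q + 1 - fourSpaceDefect K W) *
          (a * (a + 1) * (q ^ 2 + q + 1) - (2 * a + 1) * fourSpaceDefect K W)) := by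
  have hexpand : defectMoment K W a =
      ∑ π ∈ planes W, sectCard K π * (sectCard K π - 1) * planeDefect K π ^ 2 -
      (2 * a + 1) * ∑ π ∈ planes W, sectCard K π * (sectCard K π - 1) * planeDefect K π +
      a * (a + 1) * ∑ π ∈ planes W, sectCard K π * (sectCard K π - 1) := by
    rw [defectMoment, Finset.mul_sum, Finset.mul_sum, ← Finset.sum_sub_distrib,
      ← Finset.sum_add_distrib]
    exact Finset.sum_congr rfl fun π _ => by ring
  have hcard : sectCard K W - 1 = q ^ 3 + q ^ 2 + q + 1 - fourSpaceDefect K W := by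
    rw [fourSpaceDefect]
    ring
  rw [hexpand, hK.sum_planes_mul_planeDefect hW, hK.sum_planes_mul_sub_one hW, ← hcard]
  linarith [hK.sum_planes_mul_planeDefect_sq_le hW hcomplete]

lemma IsCapFinset.forty_mul_farHyperovalWeight_le (hK : IsCapFinset K) (hq : 2048 ≤ q) {a : ℤ}
    (ha : a ≤ 1) : 40 * farHyperovalWeight K W ≤ defectMoment K W a := by
  rw [farHyperovalWeight, Finset.mul_sum]
  refine (Finset.sum_le_sum fun π hπ => ?_).trans
    (Finset.sum_le_sum_of_subset_of_nonneg (Finset.filter_subset _ _) fun π _ _ =>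
      mul_nonneg (sectCard_mul_sub_one_nonneg K π) (sub_mul_sub_add_one_nonneg _ a))
  obtain ⟨hπ, hfar⟩ := Finset.mem_filter.1 hπ
  have hd0 := hK.planeDefect_nonneg (mem_planes.1 hπ).2
  have hd : 45 ≤ planeDefect K π := by
    by_contra! hlt
    nlinarith
  have hterm : 40 * planeDefect K π ≤ (planeDefect K π - a) * (planeDefect K π - (a + 1)) := by
    nlinarith
  linarith [mul_le_mul_of_nonneg_left hterm (sectCard_mul_sub_one_nonneg K π)]

lemma IsCapFinset.sectCard_mul_sub_one_le_sum_planesThrough [CharP F 2] (hK : IsCapFinset K)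
    (hq : 2048 ≤ q) (hA : A ∈ nearOvoidSolids K X W) :
    sectCard K A * (sectCard K A - 1) ≤
      2 * ∑ π ∈ planesThrough X A with planeDefect K π < sectCard K π,
        sectCard K π * (sectCard K π - 1) * (planeDefect K π - 1) := by
  obtain ⟨⟨-, hA4⟩, hXA, hdefect⟩ := mem_nearOvoidSolids.1 hA
  have hrich := hK.le_sum_planesThrough_rich hA4 hXA (c := 1) (by norm_num)
  have hovoid := hK.sectCard_le_sq_add_one hA4 (by omega)
  have hcard0 := sectCard_nonneg K A
  have hcard : sectCard K A = q ^ 2 + q + 2 - solidDefect K A := by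
    rw [solidDefect]
    ring
  obtain ⟨e, he⟩ : ∃ e, e = solidDefect K A - 1 := ⟨_, rfl⟩
  rw [← he] at hrich
  have hpairs : sectCard K A * (sectCard K A - 1) ≤ (q ^ 2 + 1) * q ^ 2 := by nlinarith
  have hgap : 3 * q ^ 2 - 4 * q ≤ 4 * (q ^ 2 - q - 2 * e) := by linarith
  have hlower : q * (q ^ 2 - q - 2 * e) ≤ e * (q ^ 2 - q - 2 * e) :=
    mul_le_mul_of_nonneg_right (by linarith) (by nlinarith)
  have hlower' := mul_le_mul_of_nonneg_left hlower (show 0 ≤ q + 1 by linarith)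
  have hgap' := mul_le_mul_of_nonneg_left hgap (show 0 ≤ (q + 1) * q by positivity)
  have hcubic : 0 ≤ q ^ 2 * (q ^ 2 - q - 6) := mul_nonneg (by positivity) (by nlinarith)
  linarith

lemma IsCapFinset.nearOvoidWeight_le_four_mul_defectMoment [CharP F 2] (hK : IsCapFinset K)
    (hW : finrank F W = 5) (hcomplete : extensionPoints K W = ∅) (hq : 2048 ≤ q)
    (ht : 8 * fourSpaceDefect K W < 21 * q ^ 2) :
    nearOvoidWeight K W ≤ 4 * defectMoment K W 0 := by
  have hmoment : ∑ π ∈ planes W, sectCard K π * (sectCard K π - 1) *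
      (planeDefect K π * max (planeDefect K π - 1) 0) = defectMoment K W 0 := by
    refine Finset.sum_congr rfl fun π hπ => ?_
    rcases (hK.planeDefect_nonneg (mem_planes.1 hπ).2).eq_or_lt with hd | hd
    · simp [← hd]
    · rw [max_eq_left (by linarith), sub_zero, zero_add]
  calc nearOvoidWeight K W
    _ ≤ ∑ X ∈ offPoints K W, ∑ A ∈ nearOvoidSolids K X W,
        2 * ∑ π ∈ planesThrough X A with planeDefect K π < sectCard K π,
          sectCard K π * (sectCard K π - 1) * (planeDefect K π - 1) :=
        Finset.sum_le_sum fun X _ => Finset.sum_le_sum fun A hA =>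
          hK.sectCard_mul_sub_one_le_sum_planesThrough hq hA
    _ ≤ 2 * (2 * defectMoment K W 0) := by
        simp only [← Finset.mul_sum]
        rw [← hmoment]
        exact mul_le_mul_of_nonneg_left (hK.sum_sum_planesThrough_le hW hcomplete ht 1) zero_le_two
    _ = 4 * defectMoment K W 0 := by ring

lemma IsCapFinset.mul_sub_le_sum_planesThrough [CharP F 2] (hK : IsCapFinset K)
    (hq : 2048 ≤ q) (hA : A ∈ nearOvoidSolids K X W) :
    (q + 1) * q ^ 2 * (7 * (q ^ 2 + 1 - sectCard K A) - 20) ≤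
      10 * ∑ π ∈ planesThrough X A with planeDefect K π < sectCard K π,
        sectCard K π * (sectCard K π - 1) * (planeDefect K π - 2) := by
  obtain ⟨⟨-, hA4⟩, hXA, hdefect⟩ := mem_nearOvoidSolids.1 hA
  have hrich := hK.le_sum_planesThrough_rich hA4 hXA (c := 2) le_rfl
  have hovoid := hK.sectCard_le_sq_add_one hA4 (by omega)
  obtain ⟨e, he⟩ : ∃ e, e = q ^ 2 + 1 - sectCard K A := ⟨_, rfl⟩
  have hsolid : solidDefect K A = q + 1 + e := by
    rw [solidDefect, he]
    ring
  rw [hsolid] at hrich hdefect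
  rw [← he]
  have hquad : 0 ≤ e * (3 * q ^ 2 - 30 * q + 20 - 20 * e) :=
    mul_nonneg (by linarith) (by nlinarith)
  have hpoly : q ^ 2 * (7 * e - 20) ≤
      10 * ((q + 2) * (q + 1) * (q + e) - q * (q ^ 2 + q + 1) - 2 * (q + e) * (q + e + q)) := by
    linarith
  linarith [mul_le_mul_of_nonneg_left hpoly (show 0 ≤ q + 1 by linarith)]

lemma IsCapFinset.sum_nearOvoidSolids_le_defectMoment_one [CharP F 2] (hK : IsCapFinset K)
    (hW : finrank F W = 5) (hcomplete : extensionPoints K W = ∅) (hq : 2048 ≤ q)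
    (ht : 8 * fourSpaceDefect K W < 21 * q ^ 2) :
    ∑ X ∈ offPoints K W, ∑ A ∈ nearOvoidSolids K X W,
        (q + 1) * q ^ 2 * (7 * (q ^ 2 + 1 - sectCard K A) - 20) ≤
      30 * defectMoment K W 1 := by
  have hmoment : 2 * ∑ π ∈ planes W, sectCard K π * (sectCard K π - 1) *
      (planeDefect K π * max (planeDefect K π - 2) 0) ≤ 3 * defectMoment K W 1 := by
    rw [defectMoment, Finset.mul_sum, Finset.mul_sum]
    refine Finset.sum_le_sum fun π _ => ?_
    linarith [mul_le_mul_of_nonneg_left (two_mul_mul_max_le (planeDefect K π))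
      (sectCard_mul_sub_one_nonneg K π)]
  calc _ ≤ ∑ X ∈ offPoints K W, ∑ A ∈ nearOvoidSolids K X W,
        10 * ∑ π ∈ planesThrough X A with planeDefect K π < sectCard K π,
          sectCard K π * (sectCard K π - 1) * (planeDefect K π - 2) :=
        Finset.sum_le_sum fun X _ => Finset.sum_le_sum fun A hA =>
          hK.mul_sub_le_sum_planesThrough hq hA
    _ = 10 * ∑ X ∈ offPoints K W, ∑ A ∈ nearOvoidSolids K X W,
        ∑ π ∈ planesThrough X A with planeDefect K π < sectCard K π,
          sectCard K π * (sectCard K π - 1) * (planeDefect K π - 2) := by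
        simp only [← Finset.mul_sum]
    _ ≤ 10 * (2 * ∑ π ∈ planes W, sectCard K π * (sectCard K π - 1) *
        (planeDefect K π * max (planeDefect K π - 2) 0)) :=
        mul_le_mul_of_nonneg_left (hK.sum_sum_planesThrough_le hW hcomplete ht 2) (by norm_num)
    _ ≤ 30 * defectMoment K W 1 := by linarith

lemma IsCapFinset.nearOvoidWeight_le_sum_card_mul [CharP F 2] (hK : IsCapFinset K)
    (hq : 3 ≤ Fintype.card F) :
    nearOvoidWeight K W ≤
      (∑ X ∈ offPoints K W, ((nearOvoidSolids K X W).card : ℤ)) * ((q ^ 2 + 1) * q ^ 2) := by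
  rw [nearOvoidWeight, Finset.sum_mul]
  refine Finset.sum_le_sum fun X _ => ?_
  rw [← nsmul_eq_mul]
  refine Finset.sum_le_card_nsmul _ _ _ fun A hA => ?_
  have hovoid := hK.sectCard_le_sq_add_one (mem_nearOvoidSolids.1 hA).1.2 hq
  nlinarith [sectCard_nonneg K A]

lemma two_mul_sum_planes_max_le_defectMoment_two (K : Finset (Submodule F V))
    (W : Submodule F V) :
    2 * ∑ π ∈ planes W, sectCard K π * (sectCard K π - 1) * max (2 - planeDefect K π) 0 ≤
      defectMoment K W 2 := by
  rw [defectMoment, Finset.mul_sum]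
  refine Finset.sum_le_sum fun π _ => ?_
  linarith [mul_le_mul_of_nonneg_left (two_mul_max_le (planeDefect K π))
    (sectCard_mul_sub_one_nonneg K π)]

lemma IsCapFinset.mul_lt_mul_fourSpaceDefect [CharP F 2] (hK : IsCapFinset K)
    (hW : finrank F W = 5) (hcomplete : extensionPoints K W = ∅) (hq : 2048 ≤ q)
    (ht0 : 0 < fourSpaceDefect K W) (ht : 8 * fourSpaceDefect K W < 21 * q ^ 2) :
    (q + 3) * (q ^ 2 + q + 1) < q * fourSpaceDefect K W := by
  have hdeficit : 0 ≤ (q + 1) * (fourSpaceDefect K W - 1) - q * (q ^ 2 + q + 1) := by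
    refine nonneg_of_mul_nonneg_right ?_ ht0
    rw [← hK.sum_fourSpaceDefect_sub_tangentCount hW]
    exact Finset.sum_nonneg fun X hX =>
      sub_nonneg.2 (hK.tangentCount_le_fourSpaceDefect hW hcomplete hX)
  have hmoment : defectMoment K W 0 ≤ sectCard K W * fourSpaceDefect K W *
      ((q + 1) * (fourSpaceDefect K W - 1) - q * (q ^ 2 + q + 1)) :=
    (hK.defectMoment_le hW hcomplete 0).trans_eq (by ring)
  refine lt_mul_of_nearOvoidWeight_le hq (by rw [fourSpaceDefect]; ring) (hK.card_offPoints hW) rfl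
    hdeficit ((hK.forty_mul_farHyperovalWeight_le hq zero_le_one).trans hmoment) ?_
    (hK.le_nearOvoidWeight hW hcomplete hq ht)
  linarith [hK.nearOvoidWeight_le_four_mul_defectMoment hW hcomplete hq ht]

lemma IsCapFinset.lt_mul_fourSpaceDefect_of_le [CharP F 2] (hK : IsCapFinset K)
    (hW : finrank F W = 5) (hcomplete : extensionPoints K W = ∅) (hq : 2048 ≤ q)
    (hlo : (2 * q - 10) * (q ^ 2 + q + 1) ≤ q * fourSpaceDefect K W) :
    (2 * q + 10) * (q ^ 2 + q + 1) < q * fourSpaceDefect K W := by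
  by_contra! hhi
  have ht : 8 * fourSpaceDefect K W < 21 * q ^ 2 := by nlinarith
  have htlo : 9 * q ^ 2 ≤ 5 * fourSpaceDefect K W := by nlinarith
  have hcard : sectCard K W = q ^ 3 + q ^ 2 + q + 2 - fourSpaceDefect K W := by
    rw [fourSpaceDefect]
    ring
  obtain ⟨m, hm⟩ : ∃ m, m = sectCard K W * (q ^ 2 + q + 1) ^ 2 := ⟨_, rfl⟩
  have hm7 : 10 * m ≤ 11 * q ^ 7 := hm ▸ ten_mul_le_of_le_cube hq (by nlinarith)
  have hone : defectMoment K W 1 ≤ 20 * m := by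
    refine (hK.defectMoment_le hW hcomplete 1).trans ?_
    linarith [mul_le_mul_of_nonneg_left (moment_one_le hq hlo hhi) (sectCard_nonneg K W)]
  have htwo : defectMoment K W 2 ≤ 20 * m := by
    refine (hK.defectMoment_le hW hcomplete 2).trans ?_
    linarith [mul_le_mul_of_nonneg_left (moment_two_le hq hlo hhi) (sectCard_nonneg K W)]
  have hsolids := five_mul_le_of_nearOvoidWeight_le hq htlo (by linarith [sq_nonneg q]) hcard
    (hK.card_offPoints hW) (by nlinarith)
    (by linarith [hK.forty_mul_farHyperovalWeight_le (W := W) hq le_rfl,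
      show 0 < q ^ 7 by positivity])
    (hK.nearOvoidWeight_le_sum_card_mul (by omega)) (hK.le_nearOvoidWeight hW hcomplete hq ht)
  have hrich := hK.sum_nearOvoidSolids_le_defectMoment_one hW hcomplete hq ht
  have hmax : ∑ π ∈ planes W, sectCard K π * (sectCard K π - 1) * max (2 - planeDefect K π) 0 ≤
      10 * m := by linarith [two_mul_sum_planes_max_le_defectMoment_two K W]
  have hpoor := (hK.sum_nearOvoidSolids_le_sum_planes_max hW hq).trans
    (mul_le_mul_of_nonneg_left (mul_le_mul_of_nonneg_left hmax (by positivity)) (by norm_num))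
  simp only [mul_sub, Finset.sum_sub_distrib, Finset.sum_const, nsmul_eq_mul, ← Finset.mul_sum,
    ← Finset.sum_mul] at hrich hpoor
  have hlt := lt_of_sum_near_solids_le hq hsolids hm7 (e := (q ^ 2 + 1) *
    ∑ X ∈ offPoints K W, ((nearOvoidSolids K X W).card : ℤ) -
      ∑ X ∈ offPoints K W, ∑ A ∈ nearOvoidSolids K X W, sectCard K A) (by linarith)
  linarith

theorem IsCapFinset.mul_le_mul_fourSpaceDefect [CharP F 2] (hK : IsCapFinset K)
    (hW : finrank F W = 5) (hcomplete : extensionPoints K W = ∅) (hq : 2048 ≤ q) :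
    (3 * q - 100) * (q ^ 2 + q + 1) ≤ q * fourSpaceDefect K W := by
  by_contra! hlt
  have hthree : fourSpaceDefect K W < 3 * (q ^ 2 + q + 1) := by nlinarith
  have hcard : 2 ≤ sectCard K W := by
    rw [fourSpaceDefect] at hthree
    nlinarith
  have ht0 := hK.fourSpaceDefect_pos hW (by omega) hcard
  have hmoment (a : ℤ) := nonneg_of_mul_nonneg_right
    ((defectMoment_nonneg K W a).trans (hK.defectMoment_le hW hcomplete a)) (by linarith)
  have hhi := mul_le_of_moment_two_nonneg hq ht0 hlt (by linarith [hmoment 2])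
  rcases mul_le_or_le_mul_of_moment_one_nonneg hq ht0 (by linarith [hmoment 1]) with hle | hlo
  · exact (hK.mul_lt_mul_fourSpaceDefect hW hcomplete hq ht0 (by nlinarith)).not_ge hle
  · exact (hK.lt_mul_fourSpaceDefect_of_le hW hcomplete hq hlo).not_ge hhi

end FourSpaceBound

/-! ### Higher dimension -/

section HigherDimension

variable {F : Type*} [Field F] [Fintype F] {V : Type*} [AddCommGroup V] [Module F V] [Finite V]
  {K : Finset (Submodule F V)} {U W : Submodule F V}

local notation "q" => (Fintype.card F : ℤ)

lemma IsCapFinset.mul_sectCard_sub_two_le [CharP F 2] (hK : IsCapFinset K) (hW : finrank F W = 5)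
    (hq : 2048 ≤ q) :
    q * (sectCard K W - 2) ≤ (q ^ 2 - 3 * q + 100) * (q ^ 2 + q + 1) := by
  obtain ⟨C, hKC, hC, -, hcomplete⟩ :=
    (hK.isCapFinset_sect W).exists_complete fun P hP => (mem_sect.1 hP).2
  have hle : sectCard K W ≤ sectCard C W := Nat.cast_le.2 <| Finset.card_le_card fun P hP =>
    mem_sect.2 ⟨hKC hP, (mem_sect.1 hP).2⟩
  have hdefect := hC.mul_le_mul_fourSpaceDefect hW hcomplete hq
  rw [fourSpaceDefect] at hdefect
  linarith [mul_le_mul_of_nonneg_left hle (show 0 ≤ q by linarith)]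

omit [Fintype F] in
lemma exists_mem_coversIn_sectCard_sub_le (hK : ∀ P ∈ K, finrank F P = 1) (h : U ≤ W)
    (hne : (coversIn U W).Nonempty) :
    ∃ M ∈ coversIn U W,
      sectCard K W - sectCard K U ≤ (coversIn U W).card * (sectCard K M - sectCard K U) := by
  obtain ⟨M, hM, hmax⟩ := (coversIn U W).exists_max_image (sectCard K) hne
  refine ⟨M, hM, ?_⟩
  rw [← sum_sectCard_sub hK h, ← nsmul_eq_mul]
  exact Finset.sum_le_card_nsmul _ _ _ fun L hL => sub_le_sub_right (hmax L hL) _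

lemma mul_pow_succ_sub_one_le {x a u m c : ℤ} {i e : ℕ} (hx : 1 ≤ x) (hc : 1 ≤ c)
    (hgeom : c * (x - 1) = x ^ e - 1) (hle : a * (x ^ i - 1) ≤ u * (x ^ (i + e) - 1))
    (hstep : a - u ≤ c * (m - u)) : a * (x ^ (i + 1) - 1) ≤ m * (x ^ (i + e) - 1) := by
  have hpow : 0 ≤ x ^ (i + e) - 1 := sub_nonneg.2 (one_le_pow₀ hx)
  refine le_of_mul_le_mul_left ?_ (show 0 < c by linarith)
  calc c * (a * (x ^ (i + 1) - 1))
      = a * (x ^ (i + e) - 1) + (c - 1) * (a * (x ^ i - 1)) := by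
        rw [pow_succ, pow_add, show x ^ e = c * (x - 1) + 1 by linarith]
        ring
    _ ≤ a * (x ^ (i + e) - 1) + (c - 1) * (u * (x ^ (i + e) - 1)) := by
        linarith [mul_le_mul_of_nonneg_left hle (show 0 ≤ c - 1 by linarith)]
    _ = (a - u + c * u) * (x ^ (i + e) - 1) := by ring
    _ ≤ c * (m * (x ^ (i + e) - 1)) := by
        linarith [mul_le_mul_of_nonneg_right hstep hpow]

lemma IsCapFinset.exists_le_mul_pow_sub_one_le (hK : IsCapFinset K) {N : ℕ}
    (hW : finrank F W = N + 2) (hcard : 2 ≤ sectCard K W) {i : ℕ} (hi : i ≤ N) :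
    ∃ U ≤ W, finrank F U = i + 2 ∧
      (sectCard K W - 2) * (q ^ i - 1) ≤ (sectCard K U - 2) * (q ^ N - 1) := by
  induction i with
  | zero =>
    obtain ⟨P, hP, R, hR, hne⟩ := Finset.one_lt_card.1
      (show 1 < (sect K W).card by rw [sectCard] at hcard; exact_mod_cast hcard)
    obtain ⟨hP, hPW⟩ := mem_sect.1 hP
    obtain ⟨hR, hRW⟩ := mem_sect.1 hR
    exact ⟨P ⊔ R, sup_le hPW hRW,
      finrank_line (hK.finrank_eq_one P hP) (hK.finrank_eq_one R hR) hne,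
      by simp [hK.sectCard_sup hP hR hne]⟩
  | succ i ih =>
    obtain ⟨U, hUW, hU, hle⟩ := ih (by omega)
    obtain ⟨e, rfl⟩ := Nat.exists_eq_add_of_lt (show i < N by omega)
    have hcovers := card_coversIn hUW (k := e + 1) (by omega)
    have hpos : 0 < (coversIn U W).card := by
      rw [hcovers]
      exact Finset.sum_pos (fun _ _ => pow_pos Fintype.card_pos _) Finset.nonempty_range_add_one
    obtain ⟨M, hM, hstep⟩ := exists_mem_coversIn_sectCard_sub_le hK.finrank_eq_one hUW
      (Finset.card_pos.1 hpos)
    obtain ⟨-, hMW, hM⟩ := mem_coversIn.1 hM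
    refine ⟨M, hMW, by omega, mul_pow_succ_sub_one_le (e := e + 1)
      (c := (coversIn U W).card) ?_ ?_ ?_ hle (by linarith)⟩
    · exact_mod_cast Fintype.card_pos
    · exact_mod_cast hpos
    · rw [hcovers, Nat.cast_sum]
      simp only [Nat.cast_pow, geom_sum_mul]

theorem IsCapFinset.mul_sectCard_sub_two_mul_le [CharP F 2] (hK : IsCapFinset K) {N : ℕ}
    (hN : 3 ≤ N) (hW : finrank F W = N + 2) (hq : 2048 ≤ q) :
    q * (sectCard K W - 2) * (q - 1) ≤ (q ^ 2 - 3 * q + 100) * (q ^ N - 1) := by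
  have hpow : 0 ≤ q ^ N - 1 := sub_nonneg.2 (one_le_pow₀ (by linarith))
  have hcoeff : 0 ≤ q ^ 2 - 3 * q + 100 := by nlinarith
  rcases lt_or_ge (sectCard K W) 2 with hcard | hcard
  · have hneg : 0 ≤ q * (2 - sectCard K W) * (q - 1) :=
      mul_nonneg (mul_nonneg (by linarith) (by linarith)) (by linarith)
    linarith [mul_nonneg hcoeff hpow]
  obtain ⟨U, -, hU, hle⟩ := hK.exists_le_mul_pow_sub_one_le hW hcard hN
  refine le_of_mul_le_mul_right ?_ (show 0 < q ^ 2 + q + 1 by positivity)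
  calc q * (sectCard K W - 2) * (q - 1) * (q ^ 2 + q + 1)
      = q * ((sectCard K W - 2) * (q ^ 3 - 1)) := by ring
    _ ≤ q * ((sectCard K U - 2) * (q ^ N - 1)) := mul_le_mul_of_nonneg_left hle (by linarith)
    _ = q * (sectCard K U - 2) * (q ^ N - 1) := by ring
    _ ≤ (q ^ 2 - 3 * q + 100) * (q ^ 2 + q + 1) * (q ^ N - 1) :=
        mul_le_mul_of_nonneg_right (hK.mul_sectCard_sub_two_le hU hq) hpow
    _ = (q ^ 2 - 3 * q + 100) * (q ^ N - 1) * (q ^ 2 + q + 1) := by ring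

end HigherDimension

section ProjectiveSpace

lemma exists_isCapFinset_of_isCap {F : Type*} [Field F] [Finite F] {n : ℕ} {K : Set (PGPoint F n)}
    (hK : IsCap K) :
    ∃ C : Finset (Submodule F (Fin (n + 1) → F)), IsCapFinset C ∧ C.card = K.ncard := by
  classical
  have hinj : Function.Injective (Projectivization.submodule : PGPoint F n → _) :=
    Projectivization.submodule_injective
  have : Finite (PGPoint F n) := Finite.of_injective _ hinj
  refine ⟨K.toFinite.toFinset.image Projectivization.submodule, ⟨fun P hP => ?_, fun m hm => ?_⟩,
    by rw [Finset.card_image_of_injective _ hinj, Set.ncard_eq_toFinset_card K]⟩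
  · obtain ⟨P, -, rfl⟩ := Finset.mem_image.1 hP
    exact P.finrank_submodule
  by_contra! hlt
  obtain ⟨_, _, _, h₁, h₂, h₃, h₁₂, h₁₃, h₂₃⟩ := Finset.two_lt_card_iff.1 hlt
  simp only [mem_sect, Finset.mem_image, Set.Finite.mem_toFinset] at h₁ h₂ h₃
  obtain ⟨⟨P₁, hP₁, rfl⟩, hm₁⟩ := h₁
  obtain ⟨⟨P₂, hP₂, rfl⟩, hm₂⟩ := h₂
  obtain ⟨⟨P₃, hP₃, rfl⟩, hm₃⟩ := h₃
  exact hK P₁ hP₁ P₂ hP₂ P₃ hP₃ (ne_of_apply_ne _ h₁₂) (ne_of_apply_ne _ h₁₃) (ne_of_apply_ne _ h₂₃)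
    ((Submodule.finrank_mono (sup_le (sup_le hm₁ hm₂) hm₃)).trans hm.le)

lemma lt_of_mul_sub_two_mul_le {x p s S k : ℝ} (hx : 2048 ≤ x) (hs0 : 0 ≤ s) (hs : s * s = x)
    (hp : 1 ≤ p) (hS : S * (x - 1) = p - 1)
    (hk : x * (k - 2) * (x - 1) ≤ (x ^ 2 - 3 * x + 100) * (p * x ^ 3 - 1)) :
    k < p * x ^ 3 - 2 * (p * x ^ 2) + 3 * (p * x) * s + 8 * (p * x) - 9 * p * s - 7 * p - 2 * S +
      1 := by
  have hs45 : 45 ≤ s := by nlinarith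
  have hlinear : 12 * s + 15 ≤ (3 * s - 90) * x := by nlinarith
  have hgap : 0 ≤ p * (x * ((3 * s - 90) * x ^ 2 - (12 * s + 15) * x + (9 * s + 5))) :=
    mul_nonneg (by linarith) (mul_nonneg (by linarith) (by nlinarith))
  refine lt_of_mul_lt_mul_right ?_ (show 0 ≤ x * (x - 1) by nlinarith)
  have hgeom : 2 * S * (x * (x - 1)) = 2 * x * (p - 1) := by rw [← hS]; ring
  linarith

end ProjectiveSpace

end CapBound

theorem stmt1_general (F : Type*) [Field F] [Fintype F] (q : ℕ) (hcard : Fintype.card F = q)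
    (hqeven : Even q) (hq : 2048 ≤ q) (n : ℕ) (hn : 4 ≤ n)
    (K : Set (PGPoint F n)) (hK : IsCap K) :
    (K.ncard : ℝ) < (q : ℝ) ^ (n - 1) - 2 * (q : ℝ) ^ (n - 2)
      + 3 * (q : ℝ) ^ (n - 3) * Real.sqrt q + 8 * (q : ℝ) ^ (n - 3)
      - 9 * (q : ℝ) ^ (n - 4) * Real.sqrt q - 7 * (q : ℝ) ^ (n - 4)
      - 2 * (∑ i ∈ Finset.range (n - 4), (q : ℝ) ^ i) + 1 := by
  subst hcard
  have : CharP F 2 := ringChar.of_eq (FiniteField.even_card_iff_char_two.2 (Nat.even_iff.1 hqeven))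
  obtain ⟨C, hC, hCK⟩ := CapBound.exists_isCapFinset_of_isCap hK
  have hsect : CapBound.sectCard C ⊤ = K.ncard := by
    rw [← hCK, CapBound.sectCard, CapBound.sect, Finset.filter_true_of_mem fun _ _ => le_top]
  obtain ⟨j, rfl⟩ := Nat.exists_eq_add_of_le' hn
  have hbound := hC.mul_sectCard_sub_two_mul_le (W := ⊤) (N := j + 3) (by omega) (by simp)
    (by exact_mod_cast hq)
  rw [hsect, pow_add] at hbound
  have hlt := CapBound.lt_of_mul_sub_two_mul_le (by exact_mod_cast hq) (Real.sqrt_nonneg _)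
    (Real.mul_self_sqrt (Nat.cast_nonneg _)) (one_le_pow₀ (by exact_mod_cast Fintype.card_pos))
    (geom_sum_mul _ j) (k := K.ncard) (by exact_mod_cast hbound)
  simp only [← pow_add, ← pow_succ] at hlt
  exact hlt

theorem stmt1 (F : Type*) [Field F] [Fintype F] (q : ℕ) (hcard : Fintype.card F = q)
    (hqeven : Even q) (hq : 2048 ≤ q) (n : ℕ) (hn : 5 ≤ n)
    (K : Set (PGPoint F n)) (hK : IsCap K) :
    (K.ncard : ℝ) < (q : ℝ) ^ (n - 1) - 2 * (q : ℝ) ^ (n - 2)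
      + 3 * (q : ℝ) ^ (n - 3) * Real.sqrt q + 8 * (q : ℝ) ^ (n - 3)
      - 9 * (q : ℝ) ^ (n - 4) * Real.sqrt q - 7 * (q : ℝ) ^ (n - 4)
      - 2 * (∑ i ∈ Finset.range (n - 4), (q : ℝ) ^ i) + 1 :=
  stmt1_general F q hcard hqeven hq n (by omega) K hK
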